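/- arXiv:1711.10808 — 3 statements merged into one kernel-verified Lean document; each statement's English description precedes it below -/
import Mathlib

section
/- Let M₁, M₂ be positive integers and ℓ₁, ℓ₂ integers with 1 ≤ ℓ₁ ≤ M₁, 1 ≤ ℓ₂ ≤ M₂. For T ≥ 10 set y = T^{3/4} and H = T⁸, and let R(x) = R₀(x;y) + R*₁₂(x;y,H) + R*₂₁(x;y,H) and G(x) = G₁₂(x;H) + G₂₁(x;H). Then for every ε > 0, ∫_{T/2}^T |R(x)|³ |G(x)| dx ≪ T^{2−1/8+ε}, where the implied constant depends at most on M₁, M₂ and ε. -/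
open Real MeasureTheory Finset
open scoped Classical

noncomputable section

/-- The phase `h ℓ₂/M₂ + r ℓ₁/M₁ + 1/8` attached to a factorization pair `p = (h, r)`. -/
def phase (M₁ M₂ ℓ₁ ℓ₂ : ℕ) (p : ℕ × ℕ) : ℝ :=
  ((p.1 : ℝ) * ℓ₂) / M₂ + ((p.2 : ℝ) * ℓ₁) / M₁ + 1/8

/-- `τ(n,x) = Σ_{hr=n} cos(4π√(nx) − 2π(hℓ₂/M₂ + rℓ₁/M₁ + 1/8))`. -/
def tau (M₁ M₂ ℓ₁ ℓ₂ n : ℕ) (x : ℝ) : ℝ :=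
  ∑ p ∈ Nat.divisorsAntidiagonal n,
    Real.cos (4 * π * Real.sqrt (n * x) - 2 * π * phase M₁ M₂ ℓ₁ ℓ₂ p)

/-- `R₀(x;y) = (x^{1/4}/(√2 π)) Σ_{n ≤ y} τ(n,x) n^{−3/4}`. -/
def R0 (M₁ M₂ ℓ₁ ℓ₂ : ℕ) (y x : ℝ) : ℝ :=
  x ^ ((1:ℝ)/4) / (Real.sqrt 2 * π) *
    ∑ n ∈ Finset.Icc 1 ⌊y⌋₊, tau M₁ M₂ ℓ₁ ℓ₂ n x * (n : ℝ) ^ (-(3:ℝ)/4)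

/-- `J = ⌊(log T − 2 log log T)/log 2⌋`. -/
def Jof (T : ℝ) : ℤ := ⌊(Real.log T - 2 * Real.log (Real.log T)) / Real.log 2⌋

/-- The `Σ′` weight: a point strictly inside `(α,β)` counts with weight `1`, and each
endpoint counts with weight `1/2`. -/
def wprime (α β t : ℝ) : ℝ :=
  (if α < t ∧ t < β then 1 else 0) + (if t = α then 1/2 else 0) + (if t = β then 1/2 else 0)

/-- `τ₁₂(n,x;H)`: the `Σ′`-sum over factorizations `n = hr` with `1 ≤ h ≤ H` and
`hM₁/M₂ ≤ r ≤ 2^{J+1} h M₁/M₂` of `cos(4π√(nx) − 2π(hℓ₂/M₂ + rℓ₁/M₁ + 1/8))`. -/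
def tau12H (M₁ M₂ ℓ₁ ℓ₂ : ℕ) (T H : ℝ) (n : ℕ) (x : ℝ) : ℝ :=
  ∑ p ∈ Nat.divisorsAntidiagonal n,
    if (p.1 : ℝ) ≤ H then
      wprime ((p.1 : ℝ) * M₁ / M₂) ((2:ℝ) ^ (Jof T + 1) * p.1 * M₁ / M₂) (p.2 : ℝ) *
        Real.cos (4 * π * Real.sqrt (n * x) - 2 * π * phase M₁ M₂ ℓ₁ ℓ₂ p)
    else 0

/-- `R*₁₂(x;y,H) = (x^{1/4}/(√2π)) Σ_{y < n ≤ 2^{J+1}H²M₁/M₂} τ₁₂(n,x;H) n^{−3/4}`. -/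
def Rstar12 (M₁ M₂ ℓ₁ ℓ₂ : ℕ) (T y H x : ℝ) : ℝ :=
  x ^ ((1:ℝ)/4) / (Real.sqrt 2 * π) *
    ∑ n ∈ (Finset.Icc 1 ⌊(2:ℝ) ^ (Jof T + 1) * H ^ 2 * M₁ / M₂⌋₊).filter
        (fun n : ℕ => y < (n : ℝ)),
      tau12H M₁ M₂ ℓ₁ ℓ₂ T H n x * (n : ℝ) ^ (-(3:ℝ)/4)

/-- `R(x) = R₀(x;y) + R*₁₂(x;y,H) + R*₂₁(x;y,H)` with `y = T^{3/4}` and `H = T⁸`. -/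
def Rfull (M₁ M₂ ℓ₁ ℓ₂ : ℕ) (T x : ℝ) : ℝ :=
  R0 M₁ M₂ ℓ₁ ℓ₂ (T ^ ((3:ℝ)/4)) x
    + Rstar12 M₁ M₂ ℓ₁ ℓ₂ T (T ^ ((3:ℝ)/4)) (T ^ 8) x
    + Rstar12 M₂ M₁ ℓ₂ ℓ₁ T (T ^ ((3:ℝ)/4)) (T ^ 8) x

/-- Distance to the nearest integer. -/
def nint (t : ℝ) : ℝ := |t - round t|

/-- `min(1, 1/(H‖t‖))`, with the convention that the value is `1` when `‖t‖ = 0`. -/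
def minOne (H t : ℝ) : ℝ := if nint t = 0 then 1 else min 1 (1 / (H * nint t))

/-- `G₁₂(x;H) = Σ_{n ≤ √(M₁M₂x), n ≡ ℓ₁ (mod M₁)} min(1, 1/(H‖M₁x/n − ℓ₂/M₂‖))`. -/
def G12 (M₁ M₂ ℓ₁ ℓ₂ : ℕ) (H x : ℝ) : ℝ :=
  ∑ n ∈ (Finset.Icc 1 ⌊Real.sqrt ((M₁ * M₂ : ℕ) * x)⌋₊).filter
      (fun n => n % M₁ = ℓ₁ % M₁),
    minOne H ((M₁ : ℝ) * x / n - (ℓ₂ : ℝ) / M₂)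

def ee (t : ℝ) : ℂ := Complex.exp (Complex.I * ((2 * π * t : ℝ) : ℂ))

lemma ee_norm (t : ℝ) : ‖ee t‖ = 1 := by
  unfold ee; rw [mul_comm]; exact Complex.norm_exp_ofReal_mul_I _

lemma ee_add (a b : ℝ) : ee (a + b) = ee a * ee b := by
  unfold ee; rw [← Complex.exp_add]; congr 1; push_cast; ring

lemma ee_re (t : ℝ) : (ee t).re = Real.cos (2 * π * t) := by
  unfold ee; rw [mul_comm, Complex.exp_ofReal_mul_I_re]

lemma ee_lip (a b : ℝ) : ‖ee a - ee b‖ ≤ 2 * π * |a - b| := by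
  have h : ee a - ee b = ee b * (ee (a - b) - 1) := by
    rw [mul_sub, ← ee_add]; simp
  rw [h, norm_mul, ee_norm, one_mul]
  unfold ee
  refine (Real.norm_exp_I_mul_ofReal_sub_one_le).trans ?_
  rw [Real.norm_eq_abs, abs_mul, abs_of_pos (by positivity : 0 < 2 * π)]

lemma ee_round (d : ℝ) : 4 * |d - round d| ≤ ‖ee d - 1‖ := by
  unfold ee
  rw [Complex.norm_exp_I_mul_ofReal_sub_one, Real.norm_eq_abs, abs_mul, abs_two]
  have h1 : |Real.sin (2 * π * d / 2)| = |Real.sin (π * (d - round d))| := by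
    have : 2 * π * d / 2 = π * (d - round d) + (round d : ℤ) * π := by ring
    rw [this, Real.sin_add_int_mul_pi, abs_mul]
    simp
  rw [h1]
  have h2 := abs_sub_round d
  have hp := Real.pi_pos
  have h3 : |π * (d - round d)| ≤ π / 2 := by
    rw [abs_mul, abs_of_pos hp]; nlinarith
  have h4 := Real.mul_abs_le_abs_sin h3
  rw [abs_mul, abs_of_pos hp] at h4
  have : 2 / π * (π * |d - round d|) = 2 * |d - round d| := by field_simp
  linarith

def WW (η : ℝ) (u : ℂ) : ℂ := ((1 / max (‖u‖ ^ 2) (η ^ 2) : ℝ) : ℂ) * (starRingEnd ℂ) u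

lemma WW_norm (η : ℝ) (hη : 0 < η) (u : ℂ) : ‖WW η u‖ ≤ 1 / η := by
  unfold WW
  have hm : 0 < max (‖u‖ ^ 2) (η ^ 2) := lt_max_of_lt_right (by positivity)
  rw [norm_mul, Complex.norm_real, Real.norm_eq_abs, abs_of_pos (by positivity), RCLike.norm_conj,
    div_mul_eq_mul_div, one_mul, div_le_div_iff₀ hm hη, one_mul]
  rcases le_total ‖u‖ η with h | h
  · have := le_max_right (‖u‖ ^ 2) (η ^ 2)
    nlinarith [norm_nonneg u]
  · have := le_max_left (‖u‖ ^ 2) (η ^ 2)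
    nlinarith [norm_nonneg u]

lemma WW_mul (η : ℝ) (u : ℂ) :
    u * WW η u = ((‖u‖ ^ 2 / max (‖u‖ ^ 2) (η ^ 2) : ℝ) : ℂ) := by
  unfold WW
  have : u * (starRingEnd ℂ) u = ((‖u‖ ^ 2 : ℝ) : ℂ) := by
    rw [Complex.mul_conj, Complex.normSq_eq_norm_sq]
  calc _ = ((1 / max (‖u‖ ^ 2) (η ^ 2) : ℝ) : ℂ) * (u * (starRingEnd ℂ) u) := by ring
    _ = _ := by rw [this, ← Complex.ofReal_mul]; congr 1; ring

lemma WW_res (η : ℝ) (hη : 0 < η) (u : ℂ) :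
    ‖1 - u * WW η u‖ ≤ if ‖u‖ < η then 1 else 0 := by
  rw [WW_mul]
  have hm : 0 < max (‖u‖ ^ 2) (η ^ 2) := lt_max_of_lt_right (by positivity)
  rw [← Complex.ofReal_one, ← Complex.ofReal_sub, Complex.norm_real, Real.norm_eq_abs]
  split_ifs with h
  · have h1 : ‖u‖ ^ 2 / max (‖u‖ ^ 2) (η ^ 2) ≤ 1 := by
      rw [div_le_one hm]; exact le_max_left _ _
    have h2 : 0 ≤ ‖u‖ ^ 2 / max (‖u‖ ^ 2) (η ^ 2) := by positivity
    rw [abs_le]; constructor <;> linarith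
  · push Not at h
    have : max (‖u‖ ^ 2) (η ^ 2) = ‖u‖ ^ 2 := max_eq_left (by gcongr)
    rw [this, div_self]
    · simp
    · have : 0 < ‖u‖ := by linarith
      positivity

lemma WW_lip_aux (η : ℝ) (hη : 0 < η) (u v : ℂ) (huv : ‖u‖ ≤ ‖v‖) :
    ‖WW η u - WW η v‖ ≤ 3 / η ^ 2 * ‖u - v‖ := by
  unfold WW
  set a := max (‖u‖ ^ 2) (η ^ 2) with ha
  set b := max (‖v‖ ^ 2) (η ^ 2) with hb
  have ha0 : 0 < a := lt_max_of_lt_right (by positivity)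
  have hb0 : 0 < b := lt_max_of_lt_right (by positivity)
  have hae : η ^ 2 ≤ a := le_max_right _ _
  have hbe : η ^ 2 ≤ b := le_max_right _ _
  have hau : ‖u‖ ^ 2 ≤ a := le_max_left _ _
  have hab : a ≤ b := max_le_max (by gcongr) le_rfl
  have hsub : ‖v‖ - ‖u‖ ≤ ‖u - v‖ := by
    rw [norm_sub_rev]; exact norm_sub_norm_le _ _
  have key : ((1 / a : ℝ) : ℂ) * (starRingEnd ℂ) u - ((1 / b : ℝ) : ℂ) * (starRingEnd ℂ) v
      = ((1 / b : ℝ) : ℂ) * (starRingEnd ℂ) (u - v)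
        + ((1 / a - 1 / b : ℝ) : ℂ) * (starRingEnd ℂ) u := by
    rw [map_sub]; push_cast; ring
  rw [key]
  refine (norm_add_le _ _).trans ?_
  rw [norm_mul, norm_mul, Complex.norm_real, Complex.norm_real, RCLike.norm_conj, RCLike.norm_conj,
    Real.norm_eq_abs, Real.norm_eq_abs, abs_of_pos (by positivity : 0 < 1 / b)]
  have h1 : 1 / b ≤ 1 / η ^ 2 := by gcongr
  have h0 : 0 ≤ 1 / a - 1 / b := by
    rw [sub_nonneg]; gcongr
  rw [abs_of_nonneg h0]
  have h2 : (1 / a - 1 / b) * ‖u‖ ≤ 2 / η ^ 2 * ‖u - v‖ := by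
    rcases le_total ‖v‖ η with hv | hv
    · have e1 : b = η ^ 2 := max_eq_right (by gcongr)
      have e2 : a = η ^ 2 := le_antisymm (by rw [← e1]; exact hab) hae
      rw [e1, e2]; simp; positivity
    · have e1 : b = ‖v‖ ^ 2 := max_eq_left (by gcongr)
      have hv0 : 0 < ‖v‖ := by linarith
      have e2 : (1 / a - 1 / b) * ‖u‖ = (b - a) * ‖u‖ / (a * b) := by field_simp
      rw [e2, div_le_iff₀ (by positivity)]
      have h3 : b - a ≤ 2 * ‖v‖ * ‖u - v‖ := by
        rw [e1]; nlinarith [norm_nonneg u]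
      have h4 : (b - a) * ‖u‖ ≤ 2 * ‖v‖ * ‖u - v‖ * ‖u‖ := by gcongr
      refine h4.trans ?_
      have h5 : ‖v‖ * ‖u‖ * η ^ 2 ≤ a * b := by
        have : ‖u‖ * η ≤ a := by
          rcases le_total ‖u‖ η with h | h <;> nlinarith [norm_nonneg u]
        have h6 : ‖v‖ * η ≤ b := by rw [e1]; nlinarith
        calc _ = (‖u‖ * η) * (‖v‖ * η) := by ring
          _ ≤ _ := by gcongr
      calc 2 * ‖v‖ * ‖u - v‖ * ‖u‖ = 2 / η ^ 2 * ‖u - v‖ * (‖v‖ * ‖u‖ * η ^ 2) := by field_simp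
        _ ≤ _ := by gcongr
  calc _ ≤ 1 / η ^ 2 * ‖u - v‖ + 2 / η ^ 2 * ‖u - v‖ := by gcongr
    _ = _ := by ring

lemma WW_lip (η : ℝ) (hη : 0 < η) (u v : ℂ) :
    ‖WW η u - WW η v‖ ≤ 3 / η ^ 2 * ‖u - v‖ := by
  rcases le_total ‖u‖ ‖v‖ with h | h
  · exact WW_lip_aux η hη u v h
  · rw [norm_sub_rev, norm_sub_rev u]; exact WW_lip_aux η hη v u h

/-- summation by parts -/
lemma parts_bound (A B : ℕ) (hAB : A ≤ B) (u b : ℕ → ℂ) (hb : ∀ r, ‖b r‖ ≤ 1) :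
    ‖∑ r ∈ Finset.Ico A B, u r * (b (r + 1) - b r)‖
      ≤ ‖u A‖ + ‖u B‖ + ∑ r ∈ Finset.Ico A B, ‖u r - u (r + 1)‖ := by
  have key : ∑ r ∈ Finset.Ico A B, u r * (b (r + 1) - b r)
      = u B * b B - u A * b A + ∑ r ∈ Finset.Ico A B, (u r - u (r + 1)) * b (r + 1) := by
    induction B, hAB using Nat.le_induction with
    | base => simp
    | succ n hn ih =>
      rw [Finset.sum_Ico_succ_top hn, Finset.sum_Ico_succ_top hn, ih]; ring
  have hm : ∀ (z : ℂ) r, ‖z * b r‖ ≤ ‖z‖ := fun z r => by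
    rw [norm_mul]; exact mul_le_of_le_one_right (norm_nonneg _) (hb r)
  rw [key]
  have h1 := norm_add_le (u B * b B - u A * b A)
    (∑ r ∈ Finset.Ico A B, (u r - u (r + 1)) * b (r + 1))
  have h2 := norm_sub_le (u B * b B) (u A * b A)
  have h3 : ‖∑ r ∈ Finset.Ico A B, (u r - u (r + 1)) * b (r + 1)‖
      ≤ ∑ r ∈ Finset.Ico A B, ‖u r - u (r + 1)‖ :=
    (norm_sum_le _ _).trans (Finset.sum_le_sum fun r _ => hm _ _)
  linarith [hm (u B) B, hm (u A) A]

lemma count_bound (A B : ℕ) (d : ℕ → ℝ) (η lam V : ℝ) (hη : 0 < η) (hl : 0 < lam)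
    (hAB : A < B)
    (hs : ∀ r ∈ Finset.Ico A B, lam ≤ d r - d (r + 1)) (hV : d A - d B ≤ V) :
    (((Finset.Ico A B).filter (fun r => ‖ee (d r) - 1‖ < η)).card : ℝ)
      ≤ (V + 2) * (η / (2 * lam) + 1) := by
  have hsp : ∀ r s, A ≤ r → r ≤ s → s ≤ B → lam * ((s : ℝ) - r) ≤ d r - d s := by
    intro r s hr hrs
    induction s, hrs using Nat.le_induction with
    | base => intro _; simp
    | succ n hn ih =>
      intro hB
      have h1 := ih (by omega)
      have h2 := hs n (Finset.mem_Ico.2 ⟨by omega, by omega⟩)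
      push_cast
      nlinarith
  set S := (Finset.Ico A B).filter (fun r => ‖ee (d r) - 1‖ < η) with hS
  have hV0 : 0 ≤ V := by
    have := hsp A B le_rfl hAB.le le_rfl
    have h2 : (A : ℝ) < B := by exact_mod_cast hAB
    nlinarith
  set K := Finset.Icc (round (d B)) (round (d A)) with hK
  have hmaps : ∀ r ∈ S, round (d r) ∈ K := by
    intro r hr
    have hr' := Finset.mem_Ico.1 (Finset.mem_filter.1 hr).1
    rw [hK, Finset.mem_Icc]
    have h1 := hsp A r le_rfl hr'.1 hr'.2.le
    have h2 := hsp r B hr'.1 hr'.2.le le_rfl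
    have e1 : (A : ℝ) ≤ r := by exact_mod_cast hr'.1
    have e2 : (r : ℝ) ≤ B := by exact_mod_cast hr'.2.le
    rw [round_eq, round_eq, round_eq]
    constructor <;> apply Int.floor_le_floor <;> nlinarith
  have hfib : ∀ k ∈ K, ((S.filter (fun r => round (d r) = k)).card : ℝ) ≤ η / (2 * lam) + 1 := by
    intro k _
    rcases Finset.eq_empty_or_nonempty (S.filter (fun r => round (d r) = k)) with he | hne
    · rw [he]; simp; positivity
    · set Q := S.filter (fun r => round (d r) = k) with hQ
      set m := Q.min' hne
      set M := Q.max' hne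
      have hm : m ∈ Q := Q.min'_mem hne
      have hM : M ∈ Q := Q.max'_mem hne
      have hmM : m ≤ M := Q.min'_le _ hM
      have hsub : Q ⊆ Finset.Icc m M := fun r hr =>
        Finset.mem_Icc.2 ⟨Q.min'_le _ hr, Q.le_max' _ hr⟩
      have hc := Finset.card_le_card hsub
      rw [Nat.card_Icc] at hc
      have hc' : (Q.card : ℝ) ≤ (M : ℝ) - m + 1 := by
        have : Q.card + m ≤ M + 1 := by omega
        have : (Q.card : ℝ) + m ≤ M + 1 := by exact_mod_cast this
        linarith
      have close : ∀ r ∈ Q, |d r - k| < η / 4 := by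
        intro r hr
        have h1 := Finset.mem_filter.1 hr
        have h2 := (Finset.mem_filter.1 h1.1).2
        have h3 := ee_round (d r)
        rw [h1.2] at h3
        linarith
      have c1 := abs_lt.1 (close m hm)
      have c2 := abs_lt.1 (close M hM)
      have mm := Finset.mem_Ico.1 (Finset.mem_filter.1 (Finset.mem_filter.1 hm).1).1
      have MM := Finset.mem_Ico.1 (Finset.mem_filter.1 (Finset.mem_filter.1 hM).1).1
      have h5 := hsp m M mm.1 hmM MM.2.le
      have h6 : (M : ℝ) - m ≤ η / (2 * lam) := by
        rw [le_div_iff₀ (by positivity)]; linarith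
      linarith
  rw [Finset.card_eq_sum_card_fiberwise (f := fun r => round (d r)) (t := K) hmaps]
  push_cast
  refine (Finset.sum_le_sum hfib).trans ?_
  rw [Finset.sum_const, nsmul_eq_mul]
  gcongr
  rw [hK, Int.card_Icc]
  have a1 := abs_le.1 (abs_sub_round (d A))
  have a2 := abs_le.1 (abs_sub_round (d B))
  have h7 : ((round (d A) + 1 - round (d B) : ℤ) : ℝ) ≤ V + 2 := by
    push_cast; linarith
  have h8 : (((round (d A) + 1 - round (d B)).toNat : ℕ) : ℝ)
      = ((max (round (d A) + 1 - round (d B)) 0 : ℤ) : ℝ) := by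
    rw [← Int.toNat_eq_max]; norm_cast
  rw [h8]; push_cast
  push_cast at h7
  exact max_le h7 (by linarith)

lemma expsum (A B : ℕ) (F g : ℕ → ℝ) (η lam V : ℝ) (hη : 0 < η) (hη1 : η ≤ 1) (hl : 0 < lam)
    (hAB : A < B)
    (hs : ∀ r ∈ Finset.Ico A B, lam ≤ (F (r + 1) - F r) - (F (r + 2) - F (r + 1)))
    (hV : (F (A + 1) - F A) - (F (B + 1) - F B) ≤ V)
    (hg : ∀ r ∈ Finset.Ico A B, g (r + 1) ≤ g r) (hg0 : ∀ r, 0 ≤ g r) :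
    |∑ r ∈ Finset.Ico A B, g r * Real.cos (2 * π * F r)|
      ≤ g A * ((3 + 6 * π * V) / η ^ 2 + (V + 2) * (η / (2 * lam) + 1)) := by
  set d : ℕ → ℝ := fun r => F (r + 1) - F r with hd
  have hs' : ∀ r ∈ Finset.Ico A B, lam ≤ d r - d (r + 1) := hs
  have hV' : d A - d B ≤ V := hV
  have hcount := count_bound A B d η lam V hη hl hAB hs' hV'
  have hgA : ∀ r, A ≤ r → r ≤ B → g r ≤ g A := by
    intro r hr
    induction r, hr using Nat.le_induction with
    | base => intro _; exact le_rfl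
    | succ n hn ih =>
      intro h
      exact (hg n (Finset.mem_Ico.2 ⟨hn, by omega⟩)).trans (ih (by omega))
  have htelg : ∑ r ∈ Finset.Ico A B, (g r - g (r + 1)) = g A - g B := by
    rw [Finset.sum_Ico_eq_sub _ hAB.le, Finset.sum_range_sub', Finset.sum_range_sub']; ring
  have hteld : ∑ r ∈ Finset.Ico A B, (d r - d (r + 1)) = d A - d B := by
    rw [Finset.sum_Ico_eq_sub _ hAB.le, Finset.sum_range_sub', Finset.sum_range_sub']; ring
  set b : ℕ → ℂ := fun r => ee (F r) with hb
  set w : ℕ → ℂ := fun r => WW η (ee (d r) - 1) with hw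
  set u : ℕ → ℂ := fun r => (g r : ℂ) * w r with hu
  have hbn : ∀ r, b (r + 1) - b r = b r * (ee (d r) - 1) := by
    intro r
    simp only [hb, hd]
    rw [mul_sub, ← ee_add]; simp
  have hdec : ∀ r, (g r : ℂ) * b r = u r * (b (r + 1) - b r)
      + (g r : ℂ) * b r * (1 - (ee (d r) - 1) * w r) := by
    intro r; rw [hbn]; simp only [hu]; ring
  have hre : ∑ r ∈ Finset.Ico A B, g r * Real.cos (2 * π * F r)
      = (∑ r ∈ Finset.Ico A B, (g r : ℂ) * b r).re := by
    rw [Complex.re_sum]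
    refine Finset.sum_congr rfl fun r _ => ?_
    rw [Complex.re_ofReal_mul, ee_re]
  rw [hre]
  refine (Complex.abs_re_le_norm _).trans ?_
  rw [Finset.sum_congr rfl fun r _ => hdec r, Finset.sum_add_distrib]
  refine (norm_add_le _ _).trans ?_
  rw [mul_add]
  have hwn : ∀ r, ‖w r‖ ≤ 1 / η := fun r => WW_norm η hη _
  have hun : ∀ r, A ≤ r → r ≤ B → ‖u r‖ ≤ g A * (1 / η) := by
    intro r h1 h2
    simp only [hu]
    rw [norm_mul, Complex.norm_real, Real.norm_eq_abs, abs_of_nonneg (hg0 r)]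
    exact mul_le_mul (hgA r h1 h2) (hwn r) (norm_nonneg _) (hg0 A)
  have hη2 : 1 / η ≤ 1 / η ^ 2 := by
    apply one_div_le_one_div_of_le (by positivity); nlinarith
  apply add_le_add
  · refine (parts_bound A B hAB.le u b (fun r => (ee_norm _).le)).trans ?_
    have hvar : ∑ r ∈ Finset.Ico A B, ‖u r - u (r + 1)‖
        ≤ ∑ r ∈ Finset.Ico A B, (g A * (3 / η ^ 2 * (2 * π)) * (d r - d (r + 1))
          + (1 / η) * (g r - g (r + 1))) := by
      refine Finset.sum_le_sum fun r hr => ?_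
      have hr' := Finset.mem_Ico.1 hr
      have e : u r - u (r + 1) = (g r : ℂ) * (w r - w (r + 1))
          + ((g r - g (r + 1) : ℝ) : ℂ) * w (r + 1) := by
        simp only [hu]; push_cast; ring
      rw [e]
      refine (norm_add_le _ _).trans ?_
      rw [norm_mul, norm_mul, Complex.norm_real, Complex.norm_real, Real.norm_eq_abs,
        Real.norm_eq_abs, abs_of_nonneg (hg0 r), abs_of_nonneg (sub_nonneg.2 (hg r hr))]
      have h0 : 0 ≤ d r - d (r + 1) := hl.le.trans (hs' r hr)
      have h1 : ‖w r - w (r + 1)‖ ≤ 3 / η ^ 2 * (2 * π * (d r - d (r + 1))) := by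
        refine (WW_lip η hη _ _).trans ?_
        gcongr
        have := ee_lip (d r) (d (r + 1))
        rw [abs_of_nonneg h0] at this
        simpa using this
      have h2 : g r * ‖w r - w (r + 1)‖ ≤ g A * (3 / η ^ 2 * (2 * π * (d r - d (r + 1)))) :=
        mul_le_mul (hgA r hr'.1 hr'.2.le) h1 (norm_nonneg _) (hg0 A)
      have h3 : (g r - g (r + 1)) * ‖w (r + 1)‖ ≤ (g r - g (r + 1)) * (1 / η) :=
        mul_le_mul_of_nonneg_left (hwn _) (sub_nonneg.2 (hg r hr))
      calc _ ≤ g A * (3 / η ^ 2 * (2 * π * (d r - d (r + 1)))) + (g r - g (r + 1)) * (1 / η) :=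
            add_le_add h2 h3
        _ = _ := by ring
    rw [Finset.sum_add_distrib, ← Finset.mul_sum, ← Finset.mul_sum, htelg, hteld] at hvar
    have h1 := hun A le_rfl hAB.le
    have h2 := hun B hAB.le le_rfl
    have h3 : g A * (3 / η ^ 2 * (2 * π)) * (d A - d B) ≤ g A * (3 / η ^ 2 * (2 * π)) * V := by
      have := hg0 A
      gcongr
    have h4 : 1 / η * (g A - g B) ≤ 1 / η * g A := by
      have := hg0 B
      gcongr; linarith
    have h5 : g A * (1 / η) ≤ g A * (1 / η ^ 2) := mul_le_mul_of_nonneg_left hη2 (hg0 A)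
    calc _ ≤ g A * (1 / η ^ 2) + g A * (1 / η ^ 2) + (g A * (3 / η ^ 2 * (2 * π)) * V
            + g A * (1 / η ^ 2)) := by linarith
      _ = _ := by ring
  · refine (norm_sum_le _ _).trans ?_
    have : ∑ r ∈ Finset.Ico A B, ‖(g r : ℂ) * b r * (1 - (ee (d r) - 1) * w r)‖
        ≤ ∑ r ∈ Finset.Ico A B, g A * (if ‖ee (d r) - 1‖ < η then 1 else 0) := by
      refine Finset.sum_le_sum fun r hr => ?_
      have hr' := Finset.mem_Ico.1 hr
      rw [norm_mul, norm_mul, Complex.norm_real, Real.norm_eq_abs, abs_of_nonneg (hg0 r)]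
      have : ‖b r‖ = 1 := ee_norm _
      rw [this, mul_one]
      exact mul_le_mul (hgA r hr'.1 hr'.2.le) (WW_res η hη _) (norm_nonneg _) (hg0 A)
    refine this.trans ?_
    rw [← Finset.mul_sum, Finset.sum_boole]
    exact mul_le_mul_of_nonneg_left hcount (hg0 A)

lemma sqrt_second_diff (r : ℝ) (hr : 0 ≤ r) :
    1 / (4 * Real.sqrt (r + 2) ^ 3)
      ≤ (Real.sqrt (r + 1) - Real.sqrt r) - (Real.sqrt (r + 2) - Real.sqrt (r + 1)) := by
  set a := Real.sqrt r
  set b := Real.sqrt (r + 1)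
  set c := Real.sqrt (r + 2)
  have ha : a ^ 2 = r := Real.sq_sqrt hr
  have hb : b ^ 2 = r + 1 := Real.sq_sqrt (by linarith)
  have hc : c ^ 2 = r + 2 := Real.sq_sqrt (by linarith)
  have ha0 : 0 ≤ a := Real.sqrt_nonneg _
  have hb0 : 0 < b := Real.sqrt_pos.2 (by linarith)
  have hc0 : 0 < c := Real.sqrt_pos.2 (by linarith)
  have hab : a ≤ b := Real.sqrt_le_sqrt (by linarith)
  have hbc : b ≤ c := Real.sqrt_le_sqrt (by linarith)
  have e1 : b - a = 1 / (b + a) := by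
    rw [eq_div_iff (by positivity)]; linear_combination hb - ha
  have e2 : c - b = 1 / (c + b) := by
    rw [eq_div_iff (by positivity)]; linear_combination hc - hb
  have e3 : c - a = 2 / (c + a) := by
    rw [eq_div_iff (by positivity)]; linear_combination hc - ha
  have e4 : (b - a) - (c - b) = 2 / ((b + a) * (c + b) * (c + a)) := by
    have : (b - a) - (c - b) = (c - a) / ((b + a) * (c + b)) := by
      rw [e1, e2]; field_simp; ring
    rw [this, e3]; field_simp
  rw [e4, div_le_div_iff₀ (by positivity) (by positivity)]
  have h1 : (b + a) * (c + b) * (c + a) ≤ (2 * c) * (2 * c) * (2 * c) := by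
    gcongr <;> linarith
  nlinarith

lemma sqrt_first_diff (r : ℝ) (hr : 0 < r) :
    2 * (Real.sqrt (r + 1) - Real.sqrt r) ≤ 1 / Real.sqrt r := by
  set a := Real.sqrt r
  set b := Real.sqrt (r + 1)
  have ha : a ^ 2 = r := Real.sq_sqrt hr.le
  have hb : b ^ 2 = r + 1 := Real.sq_sqrt (by linarith)
  have ha0 : 0 < a := Real.sqrt_pos.2 hr
  have hb0 : 0 < b := Real.sqrt_pos.2 (by linarith)
  rw [le_div_iff₀ ha0]
  nlinarith [sq_nonneg (b - a)]

set_option maxHeartbeats 1600000 in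
lemma inner_bound (M₁ M₂ ℓ₁ ℓ₂ h : ℕ) (hM₁ : 0 < M₁) (hM₂ : 0 < M₂) (hh : 0 < h)
    (T x : ℝ) (hT : 10 ≤ T) (hx1 : T / 2 ≤ x) (hx2 : x ≤ T) (A B : ℕ) (hA1 : 1 ≤ A)
    (hA : (h : ℝ) * M₁ / M₂ ≤ A) (hB : ∀ r ∈ Finset.Ico A B, (r : ℝ) ≤ 2 * T * h * M₁) :
    |∑ r ∈ Finset.Ico A B, Real.cos (4 * π * Real.sqrt ((h * r : ℕ) * x)
        - 2 * π * phase M₁ M₂ ℓ₁ ℓ₂ (h, r)) * ((h * r : ℕ) : ℝ) ^ (-(3:ℝ)/4)|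
      ≤ 246 * M₁ ^ 2 * M₂ ^ 2 * T ^ ((7:ℝ)/6) * (h : ℝ) ^ (-(5:ℝ)/6) := by
  rcases le_or_gt B A with hBA | hAB
  · rw [Finset.Ico_eq_empty (by omega)]; simp; positivity
  have hM₁' : (1:ℝ) ≤ M₁ := by exact_mod_cast hM₁
  have hM₂' : (1:ℝ) ≤ M₂ := by exact_mod_cast hM₂
  have hh' : (1:ℝ) ≤ h := by exact_mod_cast hh
  have hx0 : 0 < x := by linarith
  have hT0 : 0 < T := by linarith
  set s := Real.sqrt (h * x) with hs
  have hs2 : s ^ 2 = h * x := Real.sq_sqrt (by positivity)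
  have hs0 : 0 < s := Real.sqrt_pos.2 (by positivity)
  set F : ℕ → ℝ := fun r => 2 * Real.sqrt ((h * r : ℕ) * x) - phase M₁ M₂ ℓ₁ ℓ₂ (h, r) with hF
  set g : ℕ → ℝ := fun r => ((h * r : ℕ) : ℝ) ^ (-(3:ℝ)/4) with hg
  have hFs : ∀ r : ℕ, F r = 2 * s * Real.sqrt r
      - ((h : ℝ) * ℓ₂ / M₂ + (r : ℝ) * ℓ₁ / M₁ + 1/8) := by
    intro r
    simp only [hF, phase]
    have : ((h * r : ℕ) : ℝ) * x = (h * x) * r := by push_cast; ring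
    rw [this, Real.sqrt_mul (by positivity)]; ring
  have hd : ∀ r : ℕ, F (r + 1) - F r = 2 * s * (Real.sqrt ((r : ℝ) + 1) - Real.sqrt r) - ℓ₁ / M₁ := by
    intro r; rw [hFs, hFs]; push_cast; ring
  set u := (h : ℝ) * T with hu
  have hu1 : 1 ≤ u := by rw [hu]; nlinarith
  have hsum : ∑ r ∈ Finset.Ico A B, Real.cos (4 * π * Real.sqrt ((h * r : ℕ) * x)
        - 2 * π * phase M₁ M₂ ℓ₁ ℓ₂ (h, r)) * ((h * r : ℕ) : ℝ) ^ (-(3:ℝ)/4)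
      = ∑ r ∈ Finset.Ico A B, g r * Real.cos (2 * π * F r) := by
    refine Finset.sum_congr rfl fun r _ => ?_
    simp only [hg, hF]
    rw [mul_comm]; congr 2; ring
  rw [hsum]
  set sT := Real.sqrt T with hsT
  have hsT2 : sT ^ 2 = T := Real.sq_sqrt hT0.le
  have hsT1 : 1 ≤ sT := by rw [hsT]; exact Real.one_le_sqrt.2 (by linarith)
  have hA1' : (1:ℝ) ≤ A := by exact_mod_cast hA1
  have hAh : (h : ℝ) ≤ M₂ * A := by
    rw [div_le_iff₀ (by positivity)] at hA
    nlinarith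
  have key := expsum A B F g (u ^ (-(1:ℝ)/3)) (1 / (144 * M₁ ^ 2 * u)) (M₂ * sT)
    (by positivity) (Real.rpow_le_one_of_one_le_of_nonpos hu1 (by norm_num)) (by positivity) hAB
    ?_ ?_ ?_ ?_
  · refine key.trans ?_
    have e1 : (u ^ (-(1:ℝ)/3)) ^ 2 = (u ^ ((2:ℝ)/3))⁻¹ := by
      rw [← Real.rpow_natCast, ← Real.rpow_mul (by positivity), ← Real.rpow_neg (by positivity)]
      norm_num
    have e2 : u ^ (-(1:ℝ)/3) * u = u ^ ((2:ℝ)/3) := by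
      rw [← Real.rpow_add_one (by positivity)]; norm_num
    have e3 : u ^ (-(1:ℝ)/3) / (2 * (1 / (144 * M₁ ^ 2 * u))) = 72 * M₁ ^ 2 * u ^ ((2:ℝ)/3) := by
      rw [← e2]; field_simp; norm_num
    rw [e1, e3, div_inv_eq_mul]
    set q := u ^ ((2:ℝ)/3) with hq
    have hq1 : 1 ≤ q := Real.one_le_rpow hu1 (by norm_num)
    have hm1 : 1 ≤ (M₂:ℝ) * sT := by nlinarith
    have hM12 : (1:ℝ) ≤ M₁ ^ 2 := by nlinarith
    have b1 : (3 + 6 * π * (M₂ * sT)) * q + (M₂ * sT + 2) * (72 * M₁ ^ 2 * q + 1)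
        ≤ 246 * M₁ ^ 2 * (M₂ * sT) * q := by
      have p1 : 3 + 6 * π * (M₂ * sT) ≤ 27 * (M₂ * sT) := by
        have := mul_le_mul_of_nonneg_right Real.pi_le_four (by linarith : 0 ≤ (M₂:ℝ) * sT)
        linarith
      have p2 : (72 * M₁ ^ 2 * q + 1) ≤ 73 * M₁ ^ 2 * q := by
        have := mul_le_mul hM12 hq1 (by norm_num) (by positivity)
        linarith
      have p3 : (M₂ : ℝ) * sT + 2 ≤ 3 * (M₂ * sT) := by linarith
      have p4 : 27 * (M₂ * sT) ≤ 27 * (M₁ ^ 2 * (M₂ * sT)) := by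
        have := mul_le_mul_of_nonneg_right hM12 (by linarith : 0 ≤ (M₂:ℝ) * sT)
        linarith
      calc _ ≤ 27 * (M₁ ^ 2 * (M₂ * sT)) * q + 3 * (M₂ * sT) * (73 * M₁ ^ 2 * q) := by
            gcongr; exact p1.trans p4
        _ = _ := by ring
    have b2 : g A ≤ M₂ * (h : ℝ) ^ (-(3:ℝ)/2) := by
      simp only [hg]
      have i1 : (h : ℝ) ^ 2 / M₂ ≤ ((h * A : ℕ) : ℝ) := by
        rw [div_le_iff₀ (by positivity)]; push_cast; nlinarith
      have i2 : ((h * A : ℕ) : ℝ) ^ (-(3:ℝ)/4) ≤ ((h : ℝ) ^ 2 / M₂) ^ (-(3:ℝ)/4) :=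
        Real.rpow_le_rpow_of_nonpos (by positivity) i1 (by norm_num)
      refine i2.trans ?_
      rw [Real.div_rpow (by positivity) (by positivity), ← Real.rpow_natCast,
        ← Real.rpow_mul (by positivity), div_eq_mul_inv, ← Real.rpow_neg (by positivity), mul_comm]
      have i3 : (M₂ : ℝ) ^ (-(-(3:ℝ)/4)) ≤ M₂ := by
        calc (M₂ : ℝ) ^ (-(-(3:ℝ)/4)) ≤ (M₂ : ℝ) ^ (1:ℝ) :=
              Real.rpow_le_rpow_of_exponent_le hM₂' (by norm_num)
          _ = _ := Real.rpow_one _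
      have i4 : (((2:ℕ):ℝ) * (-(3:ℝ)/4)) = -(3:ℝ)/2 := by norm_num
      rw [i4]
      gcongr
    calc g A * _ ≤ (M₂ * (h : ℝ) ^ (-(3:ℝ)/2)) * (246 * M₁ ^ 2 * (M₂ * sT) * q) := by
          apply mul_le_mul b2 b1 (by positivity) (by positivity)
      _ = 246 * M₁ ^ 2 * M₂ ^ 2 * (sT * T ^ ((2:ℝ)/3))
            * ((h : ℝ) ^ (-(3:ℝ)/2) * (h : ℝ) ^ ((2:ℝ)/3)) := by
          rw [hq, hu, Real.mul_rpow (by positivity) (by positivity)]; ring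
      _ = _ := by
          rw [hsT, Real.sqrt_eq_rpow, ← Real.rpow_add hT0, ← Real.rpow_add (by positivity)]
          norm_num
  · intro r hr
    have hr1 : (1:ℝ) ≤ r := by
      have := (Finset.mem_Ico.1 hr).1
      exact_mod_cast hA1.trans this
    have h1 := hd r
    have h2 := hd (r + 1)
    have h3 : r + 1 + 1 = r + 2 := rfl
    rw [h3] at h2
    rw [h1, h2]
    push_cast
    have h4 : (r : ℝ) + 1 + 1 = r + 2 := by ring
    rw [h4]
    have h5 := sqrt_second_diff r (by linarith)
    set c := Real.sqrt ((r:ℝ) + 2) with hc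
    have hc2 : c ^ 2 = r + 2 := Real.sq_sqrt (by linarith)
    have hc0 : 0 < c := Real.sqrt_pos.2 (by linarith)
    have hc3 : c ^ 2 ≤ 6 * u * M₁ := by
      rw [hc2]; have := hB r hr; rw [hu]; linarith
    have hsu : u / 2 ≤ s ^ 2 := by
      rw [hs2, hu]; nlinarith
    have hcs : c ≤ 12 * M₁ * s := by
      apply le_of_sq_le_sq _ (by positivity)
      nlinarith [mul_le_mul_of_nonneg_left hsu (by positivity : (0:ℝ) ≤ 144 * M₁ ^ 2), mul_le_mul hM₁' hM₁' (by norm_num) (by positivity), mul_pos (show (0:ℝ) < u by linarith) (show (0:ℝ) < M₁ by linarith)]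
    have hc4 : c ^ 3 ≤ 72 * M₁ ^ 2 * u * s := by
      calc c ^ 3 = c ^ 2 * c := by ring
        _ ≤ (6 * u * M₁) * (12 * M₁ * s) := by gcongr
        _ = _ := by ring
    have h6 : 1 / (144 * M₁ ^ 2 * u) ≤ 2 * s * (1 / (4 * c ^ 3)) := by
      rw [mul_one_div, div_le_div_iff₀ (by positivity) (by positivity)]
      linarith
    have h7 := mul_le_mul_of_nonneg_left h5 (by positivity : 0 ≤ 2 * s)
    linarith
  · rw [hd, hd]
    have h1 := sqrt_first_diff A (by linarith)
    have h2 : Real.sqrt (B:ℝ) ≤ Real.sqrt ((B:ℝ) + 1) := Real.sqrt_le_sqrt (by linarith)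
    have h3 : 0 ≤ 2 * s * (Real.sqrt ((B:ℝ) + 1) - Real.sqrt B) :=
      mul_nonneg (by positivity) (by linarith)
    have h4 := mul_le_mul_of_nonneg_left h1 hs0.le
    have hA0 : 0 < Real.sqrt (A:ℝ) := Real.sqrt_pos.2 (by linarith)
    have h5 : s * (1 / Real.sqrt (A:ℝ)) ≤ M₂ * sT := by
      rw [mul_one_div, div_le_iff₀ hA0]
      apply le_of_sq_le_sq _ (by positivity)
      rw [hs2, mul_pow, mul_pow, hsT2, Real.sq_sqrt (by positivity)]
      calc (h : ℝ) * x ≤ (M₂ * A) * T := by gcongr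
        _ ≤ (M₂ * (M₂ * A)) * T := by
          gcongr
          nlinarith
        _ = _ := by ring
    linarith
  · intro r hr
    simp only [hg]
    have hr1 : 1 ≤ r := hA1.trans (Finset.mem_Ico.1 hr).1
    apply Real.rpow_le_rpow_of_nonpos
    · exact_mod_cast Nat.mul_pos hh hr1
    · exact_mod_cast Nat.mul_le_mul_left h (Nat.le_succ r)
    · norm_num
  · intro r; simp only [hg]; positivity

lemma sum_rpow_le (p : ℝ) (hp : 0 < p) (hp1 : p ≤ 1) (K : ℕ) :
    ∑ h ∈ Finset.Icc 1 K, (h : ℝ) ^ (p - 1) ≤ (K : ℝ) ^ p / p := by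
  induction K with
  | zero => simp; positivity
  | succ k ih =>
    rw [Finset.sum_Icc_succ_top (by omega)]
    have hk : (0:ℝ) < (k:ℝ) + 1 := by positivity
    have h1 : (1 + (-(1 / ((k:ℝ) + 1)))) ^ p ≤ 1 + p * (-(1 / ((k:ℝ) + 1))) :=
      rpow_one_add_le_one_add_mul_self
        (by rw [neg_le_neg_iff, div_le_one hk]; linarith [(Nat.cast_nonneg k : (0:ℝ) ≤ k)]) hp.le hp1
    have h2 : (k : ℝ) = ((k:ℝ) + 1) * (1 + (-(1 / ((k:ℝ) + 1)))) := by field_simp; ring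
    have h3 : (k : ℝ) ^ p ≤ ((k:ℝ) + 1) ^ p - p * ((k:ℝ) + 1) ^ (p - 1) := by
      have h0 : 0 ≤ 1 + (-(1 / ((k:ℝ) + 1))) := by
        have : 1 / ((k:ℝ) + 1) ≤ 1 := by
          rw [div_le_one hk]; linarith [(Nat.cast_nonneg k : (0:ℝ) ≤ k)]
        linarith
      calc (k : ℝ) ^ p = ((k:ℝ) + 1) ^ p * (1 + (-(1 / ((k:ℝ) + 1)))) ^ p := by
            rw [← Real.mul_rpow hk.le h0, ← h2]
        _ ≤ ((k:ℝ) + 1) ^ p * (1 + p * (-(1 / ((k:ℝ) + 1)))) := by gcongr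
        _ = _ := by
            rw [Real.rpow_sub_one hk.ne']; field_simp; ring
    have h4 : (k:ℝ) ^ p / p ≤ ((k:ℝ) + 1) ^ p / p - ((k:ℝ) + 1) ^ (p - 1) := by
      rw [div_le_iff₀ hp, sub_mul, div_mul_cancel₀ _ hp.ne']; linarith
    push_cast
    linarith

lemma convex_finset (S : Finset ℕ) (hS : ∀ a ∈ S, ∀ b ∈ S, ∀ c, a ≤ c → c ≤ b → c ∈ S)
    (hne : S.Nonempty) : ∃ A B, A ∈ S ∧ S = Finset.Ico A B := by
  refine ⟨S.min' hne, S.max' hne + 1, S.min'_mem hne, ?_⟩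
  ext r
  rw [Finset.mem_Ico]
  constructor
  · intro hr
    exact ⟨S.min'_le _ hr, Nat.lt_succ_of_le (S.le_max' _ hr)⟩
  · rintro ⟨h1, h2⟩
    exact hS _ (S.min'_mem hne) _ (S.max'_mem hne) r h1 (Nat.le_of_lt_succ h2)

lemma two_pow_J (T : ℝ) (hT : 10 ≤ T) : (2:ℝ) ^ (Jof T + 1) ≤ 2 * T := by
  have hl : 1 ≤ Real.log T := by
    rw [Real.le_log_iff_exp_le (by linarith)]
    linarith [Real.exp_one_lt_d9]
  have h1 : (Jof T : ℝ) ≤ Real.log T / Real.log 2 := by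
    refine (Int.floor_le _).trans ?_
    have := Real.log_nonneg hl
    have h2 : 0 < Real.log 2 := Real.log_pos (by norm_num)
    gcongr
    linarith
  rw [zpow_add₀ (by norm_num), zpow_one, mul_comm]
  gcongr
  rw [← Real.rpow_intCast]
  calc (2:ℝ) ^ (Jof T : ℝ) ≤ (2:ℝ) ^ (Real.log T / Real.log 2) :=
        Real.rpow_le_rpow_of_exponent_le (by norm_num) h1
    _ = T := by
        have h2 : 0 < Real.log 2 := Real.log_pos (by norm_num)
        rw [Real.rpow_def_of_pos (by norm_num), mul_div_cancel₀ _ h2.ne', Real.exp_log (by linarith)]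

lemma point_sum (S : Finset ℕ) (α K : ℝ) (c : ℕ → ℝ) (hK : 0 ≤ K) (hc : ∀ r ∈ S, |c r| ≤ K) :
    |∑ r ∈ S, (if (r : ℝ) = α then (1/2 : ℝ) else 0) * c r| ≤ K / 2 := by
  have h1 : ∑ r ∈ S, (if (r : ℝ) = α then (1/2 : ℝ) else 0) * c r
      = ∑ r ∈ S.filter (fun r : ℕ => (r : ℝ) = α), (1/2 : ℝ) * c r := by
    rw [Finset.sum_filter]
    refine Finset.sum_congr rfl fun r _ => ?_
    split_ifs <;> simp
  rw [h1]
  refine (Finset.abs_sum_le_sum_abs _ _).trans ?_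
  have hcard : (S.filter (fun r : ℕ => (r : ℝ) = α)).card ≤ 1 := by
    rw [Finset.card_le_one]
    intro a ha b hb
    have e1 := (Finset.mem_filter.1 ha).2
    have e2 := (Finset.mem_filter.1 hb).2
    exact_mod_cast e1.trans e2.symm
  have hcard' : ((S.filter (fun r : ℕ => (r : ℝ) = α)).card : ℝ) ≤ 1 := by exact_mod_cast hcard
  calc _ ≤ ∑ r ∈ S.filter (fun r : ℕ => (r : ℝ) = α), K / 2 := by
        refine Finset.sum_le_sum fun r hr => ?_
        rw [abs_mul, abs_of_pos (by norm_num : (0:ℝ) < 1/2)]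
        linarith [hc r (Finset.mem_filter.1 hr).1]
    _ ≤ _ := by
        rw [Finset.sum_const, nsmul_eq_mul]
        nlinarith

lemma regroup (N : ℕ) (Fs : Finset ℕ) (hFs : Fs ⊆ Finset.Icc 1 N) (f : ℕ × ℕ → ℝ) :
    ∑ n ∈ Fs, ∑ p ∈ Nat.divisorsAntidiagonal n, f p
      = ∑ h ∈ Finset.Icc 1 N, ∑ r ∈ (Finset.Icc 1 N).filter (fun r => h * r ∈ Fs), f (h, r) := by
  have h1 : ∑ h ∈ Finset.Icc 1 N, ∑ r ∈ (Finset.Icc 1 N).filter (fun r => h * r ∈ Fs), f (h, r)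
      = ∑ p ∈ (Finset.Icc 1 N ×ˢ Finset.Icc 1 N).filter (fun p => p.1 * p.2 ∈ Fs), f p := by
    rw [Finset.sum_filter, Finset.sum_product]
    refine Finset.sum_congr rfl fun h _ => ?_
    rw [Finset.sum_filter]
  rw [h1, ← Finset.sum_fiberwise_of_maps_to (t := Fs) (g := fun p : ℕ × ℕ => p.1 * p.2)
    (fun p hp => (Finset.mem_filter.1 hp).2)]
  refine Finset.sum_congr rfl fun n hn => ?_
  refine Finset.sum_congr ?_ fun _ _ => rfl
  have hn' := Finset.mem_Icc.1 (hFs hn)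
  ext p
  simp only [Nat.mem_divisorsAntidiagonal, Finset.mem_filter, Finset.mem_product, Finset.mem_Icc]
  constructor
  · rintro ⟨h2, h3⟩
    have p1 : 1 ≤ p.1 := Nat.one_le_iff_ne_zero.2 (by rintro h; rw [h] at h2; omega)
    have p2 : 1 ≤ p.2 := Nat.one_le_iff_ne_zero.2 (by rintro h; rw [h] at h2; omega)
    have q1 : p.1 ≤ n := by rw [← h2]; exact Nat.le_mul_of_pos_right _ p2
    have q2 : p.2 ≤ n := by rw [← h2]; exact Nat.le_mul_of_pos_left _ p1
    exact ⟨⟨⟨⟨p1, by omega⟩, ⟨p2, by omega⟩⟩, by rw [h2]; exact hn⟩, h2⟩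
  · rintro ⟨_, h2⟩
    exact ⟨h2, by omega⟩

lemma inner_full (M₁ M₂ ℓ₁ ℓ₂ h N : ℕ) (hM₁ : 0 < M₁) (hM₂ : 0 < M₂) (hh : 0 < h)
    (T x y : ℝ) (hT : 10 ≤ T) (hx1 : T / 2 ≤ x) (hx2 : x ≤ T) :
    |∑ r ∈ (Finset.Icc 1 N).filter
        (fun r => h * r ∈ (Finset.Icc 1 N).filter (fun n : ℕ => y < (n : ℝ))),
      (wprime ((h : ℝ) * M₁ / M₂) ((2:ℝ) ^ (Jof T + 1) * h * M₁ / M₂) (r : ℝ) *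
        Real.cos (4 * π * Real.sqrt ((h * r : ℕ) * x) - 2 * π * phase M₁ M₂ ℓ₁ ℓ₂ (h, r)))
        * ((h * r : ℕ) : ℝ) ^ (-(3:ℝ)/4)|
      ≤ 246 * M₁ ^ 2 * M₂ ^ 2 * T ^ ((7:ℝ)/6) * (h : ℝ) ^ (-(5:ℝ)/6) + (h : ℝ) ^ (-(3:ℝ)/4) := by
  set S := (Finset.Icc 1 N).filter
        (fun r => h * r ∈ (Finset.Icc 1 N).filter (fun n : ℕ => y < (n : ℝ))) with hS
  set α := (h : ℝ) * M₁ / M₂ with hα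
  set β := (2:ℝ) ^ (Jof T + 1) * h * M₁ / M₂ with hβ
  set c : ℕ → ℝ := fun r =>
    Real.cos (4 * π * Real.sqrt ((h * r : ℕ) * x) - 2 * π * phase M₁ M₂ ℓ₁ ℓ₂ (h, r))
        * ((h * r : ℕ) : ℝ) ^ (-(3:ℝ)/4) with hc
  have hM₂' : (1:ℝ) ≤ M₂ := by exact_mod_cast hM₂
  have hh' : (1:ℝ) ≤ h := by exact_mod_cast hh
  have hcb : ∀ r ∈ S, |c r| ≤ (h : ℝ) ^ (-(3:ℝ)/4) := by
    intro r hr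
    have hr1 := (Finset.mem_Icc.1 (Finset.mem_filter.1 hr).1).1
    simp only [hc]
    rw [abs_mul, abs_of_nonneg (by positivity : 0 ≤ ((h * r : ℕ) : ℝ) ^ (-(3:ℝ)/4))]
    have h1 : ((h * r : ℕ) : ℝ) ^ (-(3:ℝ)/4) ≤ (h : ℝ) ^ (-(3:ℝ)/4) := by
      apply Real.rpow_le_rpow_of_nonpos (by positivity) _ (by norm_num)
      exact_mod_cast Nat.le_mul_of_pos_right h hr1
    have h2 := Real.abs_cos_le_one
      (4 * π * Real.sqrt ((h * r : ℕ) * x) - 2 * π * phase M₁ M₂ ℓ₁ ℓ₂ (h, r))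
    calc _ ≤ 1 * ((h * r : ℕ) : ℝ) ^ (-(3:ℝ)/4) := by gcongr
      _ ≤ _ := by rw [one_mul]; exact h1
  have hsplit : ∑ r ∈ S, (wprime α β (r : ℝ) *
        Real.cos (4 * π * Real.sqrt ((h * r : ℕ) * x) - 2 * π * phase M₁ M₂ ℓ₁ ℓ₂ (h, r)))
        * ((h * r : ℕ) : ℝ) ^ (-(3:ℝ)/4)
      = ∑ r ∈ S.filter (fun r : ℕ => α < (r:ℝ) ∧ (r:ℝ) < β), c r
        + ∑ r ∈ S, (if (r : ℝ) = α then (1/2 : ℝ) else 0) * c r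
        + ∑ r ∈ S, (if (r : ℝ) = β then (1/2 : ℝ) else 0) * c r := by
    rw [Finset.sum_filter (fun r : ℕ => α < (r:ℝ) ∧ (r:ℝ) < β), ← Finset.sum_add_distrib, ← Finset.sum_add_distrib]
    refine Finset.sum_congr rfl fun r _ => ?_
    simp only [hc, wprime]
    by_cases h0 : α < (r:ℝ) ∧ (r:ℝ) < β
    · rw [if_pos h0, if_pos h0]; ring
    · rw [if_neg h0, if_neg h0]; ring
  rw [hsplit]
  have hb2 := point_sum S α _ c (by positivity) hcb
  have hb3 := point_sum S β _ c (by positivity) hcb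
  have hb1 : |∑ r ∈ S.filter (fun r : ℕ => α < (r:ℝ) ∧ (r:ℝ) < β), c r|
      ≤ 246 * M₁ ^ 2 * M₂ ^ 2 * T ^ ((7:ℝ)/6) * (h : ℝ) ^ (-(5:ℝ)/6) := by
    rcases Finset.eq_empty_or_nonempty (S.filter (fun r : ℕ => α < (r:ℝ) ∧ (r:ℝ) < β)) with he | hne
    · rw [he]; simp; positivity
    have hmem : ∀ r, r ∈ S.filter (fun r : ℕ => α < (r:ℝ) ∧ (r:ℝ) < β) ↔
        ((1 ≤ r ∧ r ≤ N) ∧ (1 ≤ h * r ∧ h * r ≤ N) ∧ y < ((h * r : ℕ) : ℝ)) ∧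
          α < (r:ℝ) ∧ (r:ℝ) < β := by
      intro r
      simp only [hS, Finset.mem_filter, Finset.mem_Icc]
    obtain ⟨A, B, hA, hAB⟩ := convex_finset _ (by
      intro a ha b hb k hak hkb
      rw [hmem] at ha hb ⊢
      have i1 : h * a ≤ h * k := Nat.mul_le_mul_left _ hak
      have i2 : h * k ≤ h * b := Nat.mul_le_mul_left _ hkb
      have i1' : ((h * a : ℕ) : ℝ) ≤ ((h * k : ℕ) : ℝ) := by exact_mod_cast i1
      have j1 : (a : ℝ) ≤ k := by exact_mod_cast hak
      have j2 : (k : ℝ) ≤ b := by exact_mod_cast hkb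
      refine ⟨⟨⟨by omega, by omega⟩, ⟨by omega, by omega⟩, by linarith⟩, by linarith, by linarith⟩) hne
    have hA' := (hmem A).1 hA
    rw [hAB]
    apply inner_bound M₁ M₂ ℓ₁ ℓ₂ h hM₁ hM₂ hh T x hT hx1 hx2 A B hA'.1.1.1 hA'.2.1.le
    intro r hr
    rw [← hAB, hmem] at hr
    refine hr.2.2.le.trans ?_
    rw [hβ]
    have := two_pow_J T hT
    refine (div_le_self (by positivity) hM₂').trans ?_
    gcongr
  have t1 := abs_add_le (∑ r ∈ S.filter (fun r : ℕ => α < (r:ℝ) ∧ (r:ℝ) < β), c r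
        + ∑ r ∈ S, (if (r : ℝ) = α then (1/2 : ℝ) else 0) * c r)
        (∑ r ∈ S, (if (r : ℝ) = β then (1/2 : ℝ) else 0) * c r)
  have t2 := abs_add_le (∑ r ∈ S.filter (fun r : ℕ => α < (r:ℝ) ∧ (r:ℝ) < β), c r)
        (∑ r ∈ S, (if (r : ℝ) = α then (1/2 : ℝ) else 0) * c r)
  linarith

lemma pref_bound (T x : ℝ) (hx0 : 0 ≤ x) (hx : x ≤ T) :
    |x ^ ((1:ℝ)/4) / (Real.sqrt 2 * π)| ≤ T ^ ((1:ℝ)/4) := by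
  have h1 : 1 ≤ Real.sqrt 2 * π := by
    have : 1 ≤ Real.sqrt 2 := Real.one_le_sqrt.2 (by norm_num)
    nlinarith [Real.pi_gt_three]
  rw [abs_of_nonneg (by positivity)]
  refine (div_le_self (by positivity) h1).trans ?_
  gcongr

lemma Rstar_bound (M₁ M₂ ℓ₁ ℓ₂ : ℕ) (hM₁ : 0 < M₁) (hM₂ : 0 < M₂)
    (T x y : ℝ) (hT : 10 ≤ T) (hx1 : T / 2 ≤ x) (hx2 : x ≤ T) :
    |Rstar12 M₁ M₂ ℓ₁ ℓ₂ T y (T ^ 8) x|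
      ≤ (1476 * M₁ ^ 2 * M₂ ^ 2 + 4) * T ^ ((11:ℝ)/4) := by
  have hT0 : 0 < T := by linarith
  unfold Rstar12
  set N := ⌊(2:ℝ) ^ (Jof T + 1) * (T ^ 8) ^ 2 * M₁ / M₂⌋₊
  rw [abs_mul]
  have hsum : ∑ n ∈ (Finset.Icc 1 N).filter (fun n : ℕ => y < (n : ℝ)),
      tau12H M₁ M₂ ℓ₁ ℓ₂ T (T ^ 8) n x * (n : ℝ) ^ (-(3:ℝ)/4)
      = ∑ n ∈ (Finset.Icc 1 N).filter (fun n : ℕ => y < (n : ℝ)),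
        ∑ p ∈ Nat.divisorsAntidiagonal n,
          (fun p : ℕ × ℕ => if (p.1 : ℝ) ≤ T ^ 8 then
            (wprime ((p.1 : ℝ) * M₁ / M₂) ((2:ℝ) ^ (Jof T + 1) * p.1 * M₁ / M₂) (p.2 : ℝ) *
            Real.cos (4 * π * Real.sqrt ((p.1 * p.2 : ℕ) * x) - 2 * π * phase M₁ M₂ ℓ₁ ℓ₂ p))
            * ((p.1 * p.2 : ℕ) : ℝ) ^ (-(3:ℝ)/4) else 0) p := by
    refine Finset.sum_congr rfl fun n _ => ?_
    unfold tau12H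
    rw [Finset.sum_mul]
    refine Finset.sum_congr rfl fun p hp => ?_
    have hpn := (Nat.mem_divisorsAntidiagonal.1 hp).1
    simp only [hpn, ite_mul, zero_mul]
  rw [hsum, regroup N _ (Finset.filter_subset _ _)]
  have hb : |∑ h ∈ Finset.Icc 1 N, ∑ r ∈ (Finset.Icc 1 N).filter
        (fun r => h * r ∈ (Finset.Icc 1 N).filter (fun n : ℕ => y < (n : ℝ))),
          (fun p : ℕ × ℕ => if (p.1 : ℝ) ≤ T ^ 8 then
            (wprime ((p.1 : ℝ) * M₁ / M₂) ((2:ℝ) ^ (Jof T + 1) * p.1 * M₁ / M₂) (p.2 : ℝ) *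
            Real.cos (4 * π * Real.sqrt ((p.1 * p.2 : ℕ) * x) - 2 * π * phase M₁ M₂ ℓ₁ ℓ₂ p))
            * ((p.1 * p.2 : ℕ) : ℝ) ^ (-(3:ℝ)/4) else 0) (h, r)|
      ≤ ∑ h ∈ Finset.Icc 1 ⌊T ^ 8⌋₊, (246 * M₁ ^ 2 * M₂ ^ 2 * T ^ ((7:ℝ)/6) * (h : ℝ) ^ ((1:ℝ)/6 - 1)
          + (h : ℝ) ^ ((1:ℝ)/4 - 1)) := by
    refine (Finset.abs_sum_le_sum_abs _ _).trans ?_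
    calc _ ≤ ∑ h ∈ Finset.Icc 1 N, if (h : ℝ) ≤ T ^ 8 then
          (246 * M₁ ^ 2 * M₂ ^ 2 * T ^ ((7:ℝ)/6) * (h : ℝ) ^ ((1:ℝ)/6 - 1)
          + (h : ℝ) ^ ((1:ℝ)/4 - 1)) else 0 := by
          refine Finset.sum_le_sum fun h hh => ?_
          by_cases hc : (h : ℝ) ≤ T ^ 8
          · simp only [if_pos hc]
            have e1 : (1:ℝ)/6 - 1 = -(5:ℝ)/6 := by norm_num
            have e2 : (1:ℝ)/4 - 1 = -(3:ℝ)/4 := by norm_num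
            rw [e1, e2]
            exact inner_full M₁ M₂ ℓ₁ ℓ₂ h N hM₁ hM₂ (Finset.mem_Icc.1 hh).1 T x y hT hx1 hx2
          · simp only [if_neg hc]; simp
      _ ≤ _ := by
          rw [← Finset.sum_filter]
          refine Finset.sum_le_sum_of_subset_of_nonneg ?_ (fun _ _ _ => by positivity)
          intro h hh
          rw [Finset.mem_filter, Finset.mem_Icc] at hh
          exact Finset.mem_Icc.2 ⟨hh.1.1, Nat.le_floor hh.2⟩
  have hfl : ((⌊T ^ 8⌋₊ : ℕ) : ℝ) ≤ T ^ 8 := Nat.floor_le (by positivity)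
  have hfin : ∑ h ∈ Finset.Icc 1 ⌊T ^ 8⌋₊,
        (246 * M₁ ^ 2 * M₂ ^ 2 * T ^ ((7:ℝ)/6) * (h : ℝ) ^ ((1:ℝ)/6 - 1)
          + (h : ℝ) ^ ((1:ℝ)/4 - 1))
      ≤ (1476 * M₁ ^ 2 * M₂ ^ 2 + 4) * T ^ ((5:ℝ)/2) := by
    rw [Finset.sum_add_distrib, ← Finset.mul_sum]
    have s1 := sum_rpow_le ((1:ℝ)/6) (by norm_num) (by norm_num) ⌊T ^ 8⌋₊
    have s2 := sum_rpow_le ((1:ℝ)/4) (by norm_num) (by norm_num) ⌊T ^ 8⌋₊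
    have r1 : ((⌊T ^ 8⌋₊ : ℕ) : ℝ) ^ ((1:ℝ)/6) ≤ T ^ ((4:ℝ)/3) := by
      calc _ ≤ (T ^ 8) ^ ((1:ℝ)/6) := by gcongr
        _ = _ := by rw [← Real.rpow_natCast, ← Real.rpow_mul hT0.le]; norm_num
    have r2 : ((⌊T ^ 8⌋₊ : ℕ) : ℝ) ^ ((1:ℝ)/4) ≤ T ^ ((5:ℝ)/2) := by
      calc _ ≤ (T ^ 8) ^ ((1:ℝ)/4) := by gcongr
        _ = T ^ (2:ℝ) := by rw [← Real.rpow_natCast, ← Real.rpow_mul hT0.le]; norm_num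
        _ ≤ _ := Real.rpow_le_rpow_of_exponent_le (by linarith) (by norm_num)
    have r3 : T ^ ((7:ℝ)/6) * T ^ ((4:ℝ)/3) = T ^ ((5:ℝ)/2) := by
      rw [← Real.rpow_add hT0]; norm_num
    have s1' : ∑ h ∈ Finset.Icc 1 ⌊T ^ 8⌋₊, (h : ℝ) ^ ((1:ℝ)/6 - 1) ≤ 6 * T ^ ((4:ℝ)/3) := by
      refine s1.trans ?_
      linarith
    have s2' : ∑ h ∈ Finset.Icc 1 ⌊T ^ 8⌋₊, (h : ℝ) ^ ((1:ℝ)/4 - 1) ≤ 4 * T ^ ((5:ℝ)/2) := by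
      refine s2.trans ?_
      linarith
    calc _ ≤ 246 * M₁ ^ 2 * M₂ ^ 2 * T ^ ((7:ℝ)/6) * (6 * T ^ ((4:ℝ)/3)) + 4 * T ^ ((5:ℝ)/2) := by
          gcongr
      _ = 1476 * M₁ ^ 2 * M₂ ^ 2 * (T ^ ((7:ℝ)/6) * T ^ ((4:ℝ)/3)) + 4 * T ^ ((5:ℝ)/2) := by ring
      _ = _ := by rw [r3]; ring
  calc _ ≤ T ^ ((1:ℝ)/4) * ((1476 * M₁ ^ 2 * M₂ ^ 2 + 4) * T ^ ((5:ℝ)/2)) :=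
        mul_le_mul (pref_bound T x (by linarith) hx2) (hb.trans hfin) (abs_nonneg _) (by positivity)
    _ = (1476 * M₁ ^ 2 * M₂ ^ 2 + 4) * (T ^ ((1:ℝ)/4) * T ^ ((5:ℝ)/2)) := by ring
    _ = _ := by rw [← Real.rpow_add hT0]; norm_num

lemma R0_bound (M₁ M₂ ℓ₁ ℓ₂ : ℕ) (T x : ℝ) (hT : 10 ≤ T) (hx1 : T / 2 ≤ x) (hx2 : x ≤ T) :
    |R0 M₁ M₂ ℓ₁ ℓ₂ (T ^ ((3:ℝ)/4)) x| ≤ T ^ ((11:ℝ)/4) := by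
  have hT0 : 0 < T := by linarith
  unfold R0
  rw [abs_mul]
  set y := T ^ ((3:ℝ)/4) with hy
  have hy0 : 0 ≤ y := by positivity
  have hfl : ((⌊y⌋₊ : ℕ) : ℝ) ≤ y := Nat.floor_le hy0
  have hb : |∑ n ∈ Finset.Icc 1 ⌊y⌋₊, tau M₁ M₂ ℓ₁ ℓ₂ n x * (n : ℝ) ^ (-(3:ℝ)/4)| ≤ y * y := by
    refine (Finset.abs_sum_le_sum_abs _ _).trans ?_
    calc _ ≤ ∑ n ∈ Finset.Icc 1 ⌊y⌋₊, y := by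
          refine Finset.sum_le_sum fun n hn => ?_
          have hn' := Finset.mem_Icc.1 hn
          have hn1 : (1:ℝ) ≤ n := by exact_mod_cast hn'.1
          have hn2 : (n:ℝ) ≤ y := le_trans (by exact_mod_cast hn'.2) hfl
          have t1 : |tau M₁ M₂ ℓ₁ ℓ₂ n x| ≤ n := by
            unfold tau
            refine (Finset.abs_sum_le_sum_abs _ _).trans ?_
            calc _ ≤ ∑ p ∈ Nat.divisorsAntidiagonal n, (1:ℝ) :=
                  Finset.sum_le_sum fun p _ => Real.abs_cos_le_one _
              _ = ((Nat.divisors n).card : ℝ) := by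
                  rw [Finset.sum_const, nsmul_eq_mul, mul_one, ← Nat.map_div_right_divisors,
                    Finset.card_map]
              _ ≤ _ := by exact_mod_cast Nat.card_divisors_le_self n
          have t2 : (n : ℝ) ^ (-(3:ℝ)/4) ≤ 1 :=
            Real.rpow_le_one_of_one_le_of_nonpos hn1 (by norm_num)
          rw [abs_mul, abs_of_nonneg (by positivity : 0 ≤ (n : ℝ) ^ (-(3:ℝ)/4))]
          calc _ ≤ (n : ℝ) * 1 := by gcongr
            _ ≤ y := by linarith
      _ ≤ _ := by
          rw [Finset.sum_const, nsmul_eq_mul, Nat.card_Icc]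
          gcongr
          simpa using hfl
  calc _ ≤ T ^ ((1:ℝ)/4) * (y * y) :=
        mul_le_mul (pref_bound T x (by linarith) hx2) hb (abs_nonneg _) (by positivity)
    _ = T ^ ((7:ℝ)/4) := by
        rw [hy, ← Real.rpow_add hT0, ← Real.rpow_add hT0]; norm_num
    _ ≤ _ := Real.rpow_le_rpow_of_exponent_le (by linarith) (by norm_num)

lemma Rfull_bound (M₁ M₂ ℓ₁ ℓ₂ : ℕ) (hM₁ : 0 < M₁) (hM₂ : 0 < M₂)
    (T x : ℝ) (hT : 10 ≤ T) (hx1 : T / 2 ≤ x) (hx2 : x ≤ T) :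
    |Rfull M₁ M₂ ℓ₁ ℓ₂ T x| ≤ (2952 * M₁ ^ 2 * M₂ ^ 2 + 9) * T ^ ((11:ℝ)/4) := by
  unfold Rfull
  have h0 := R0_bound M₁ M₂ ℓ₁ ℓ₂ T x hT hx1 hx2
  have h1 := Rstar_bound M₁ M₂ ℓ₁ ℓ₂ hM₁ hM₂ T x (T ^ ((3:ℝ)/4)) hT hx1 hx2
  have h2 := Rstar_bound M₂ M₁ ℓ₂ ℓ₁ hM₂ hM₁ T x (T ^ ((3:ℝ)/4)) hT hx1 hx2
  refine (abs_add_le _ _).trans ?_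
  refine (add_le_add (abs_add_le _ _) le_rfl).trans ?_
  calc _ ≤ T ^ ((11:ℝ)/4) + (1476 * M₁ ^ 2 * M₂ ^ 2 + 4) * T ^ ((11:ℝ)/4)
        + (1476 * M₂ ^ 2 * M₁ ^ 2 + 4) * T ^ ((11:ℝ)/4) := add_le_add (add_le_add h0 h1) h2
    _ = _ := by ring

lemma nint_periodic : Function.Periodic nint 1 := by
  intro t; unfold nint
  rw [round_add_one]; push_cast; congr 1; ring

lemma minOne_periodic (H : ℝ) : Function.Periodic (minOne H) 1 := by
  intro t; unfold minOne; rw [nint_periodic t]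

lemma nint_nonneg (t : ℝ) : 0 ≤ nint t := abs_nonneg _

lemma minOne_nonneg (H : ℝ) (hH : 0 ≤ H) (t : ℝ) : 0 ≤ minOne H t := by
  unfold minOne
  have := nint_nonneg t
  split_ifs
  · norm_num
  · positivity

lemma minOne_le_one (H t : ℝ) : minOne H t ≤ 1 := by
  unfold minOne
  split_ifs
  · exact le_rfl
  · exact min_le_left _ _

lemma nint_measurable : Measurable nint := by
  have h : nint = fun t : ℝ => |t - ((⌊t + 1/2⌋ : ℤ) : ℝ)| := by
    funext t; unfold nint; rw [round_eq]
  rw [h]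
  have h1 : Measurable fun t : ℝ => ((⌊t + 1/2⌋ : ℤ) : ℝ) :=
    (measurable_from_top (f := fun n : ℤ => (n : ℝ))).comp
      (Int.measurable_floor.comp (measurable_id.add_const _))
  exact (measurable_id.sub h1).abs

lemma minOne_measurable (H : ℝ) : Measurable (minOne H) := by
  unfold minOne
  have := nint_measurable
  refine Measurable.ite (this (measurableSet_singleton 0)) measurable_const ?_
  fun_prop

lemma minOne_ii (H : ℝ) (hH : 0 ≤ H) (a b : ℝ) : IntervalIntegrable (minOne H) volume a b := by
  refine (intervalIntegrable_const (c := (1:ℝ))).mono_fun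
    (minOne_measurable H).aestronglyMeasurable ?_
  refine Filter.Eventually.of_forall fun t => ?_
  show ‖minOne H _‖ ≤ |(1:ℝ)|
  rw [Real.norm_eq_abs, abs_of_nonneg (minOne_nonneg H hH t)]
  simpa using minOne_le_one H t

lemma minOne_pt (H : ℝ) (hH : 0 < H) (u : ℝ) (hu : u ∈ Set.Ioo (0:ℝ) 1) :
    minOne H u ≤ H ^ (-(63:ℝ)/64) * u ^ (-(63:ℝ)/64)
      + H ^ (-(63:ℝ)/64) * (1 - u) ^ (-(63:ℝ)/64) := by
  have gen : ∀ v : ℝ, 0 < v → min 1 (1 / (H * v)) ≤ H ^ (-(63:ℝ)/64) * v ^ (-(63:ℝ)/64) := by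
    intro v hv
    rw [← Real.mul_rpow hH.le hv.le]
    have hp : 0 < H * v := by positivity
    rcases le_total (H * v) 1 with h | h
    · exact (min_le_left _ _).trans
        (Real.one_le_rpow_of_pos_of_le_one_of_nonpos hp h (by norm_num))
    · refine (min_le_right _ _).trans ?_
      rw [one_div, ← Real.rpow_neg_one]
      exact Real.rpow_le_rpow_of_exponent_le h (by norm_num)
  have p1 : 0 < 1 - u := by linarith [hu.2]
  have n1 : 0 ≤ H ^ (-(63:ℝ)/64) * u ^ (-(63:ℝ)/64) := by
    have := hu.1; positivity
  have n2 : 0 ≤ H ^ (-(63:ℝ)/64) * (1 - u) ^ (-(63:ℝ)/64) := by positivity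
  rcases lt_or_ge u (1/2) with h | h
  · have hr : round u = 0 := by
      rw [round_eq, Int.floor_eq_iff]; push_cast; constructor <;> linarith [hu.1]
    have hn : nint u = u := by
      unfold nint; rw [hr]; simpa using hu.1.le
    unfold minOne
    rw [hn, if_neg hu.1.ne']
    linarith [gen u hu.1]
  · have hr : round u = 1 := by
      rw [round_eq, Int.floor_eq_iff]; push_cast; constructor <;> linarith [hu.2]
    have hn : nint u = 1 - u := by
      unfold nint; rw [hr, abs_sub_comm]; push_cast; exact abs_of_pos p1
    unfold minOne
    rw [hn, if_neg p1.ne']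
    linarith [gen (1 - u) p1]

lemma minOne_int (H : ℝ) (hH : 0 < H) :
    ∫ u in (0:ℝ)..1, minOne H u ≤ 128 * H ^ (-(63:ℝ)/64) := by
  have i1 : IntervalIntegrable (fun u : ℝ => u ^ (-(63:ℝ)/64)) volume 0 1 :=
    intervalIntegral.intervalIntegrable_rpow' (by norm_num)
  have i2 : IntervalIntegrable (fun u : ℝ => (1 - u) ^ (-(63:ℝ)/64)) volume 0 1 := by
    have := (i1.comp_sub_left 1).symm
    simpa using this
  have v1 : ∫ u in (0:ℝ)..1, u ^ (-(63:ℝ)/64) = 64 := by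
    rw [integral_rpow (Or.inl (by norm_num)), Real.one_rpow, Real.zero_rpow (by norm_num)]
    norm_num
  have v2 : ∫ u in (0:ℝ)..1, (1 - u) ^ (-(63:ℝ)/64) = 64 := by
    rw [intervalIntegral.integral_comp_sub_left (fun u : ℝ => u ^ (-(63:ℝ)/64)) 1]
    simpa using v1
  have := intervalIntegral.integral_mono_on_of_le_Ioo (by norm_num : (0:ℝ) ≤ 1)
    (minOne_ii H hH.le 0 1) ((i1.const_mul (H ^ (-(63:ℝ)/64))).add
      (i2.const_mul (H ^ (-(63:ℝ)/64)))) (fun u hu => minOne_pt H hH u hu)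
  refine this.trans ?_
  rw [intervalIntegral.integral_add (i1.const_mul _) (i2.const_mul _),
    intervalIntegral.integral_const_mul, intervalIntegral.integral_const_mul, v1, v2]
  linarith

lemma minOne_long (H : ℝ) (hH : 0 < H) (a b : ℝ) (hab : a ≤ b) :
    ∫ u in a..b, minOne H u ≤ (b - a + 1) * (128 * H ^ (-(63:ℝ)/64)) := by
  set n : ℤ := ⌈b - a⌉ with hn
  have h1 : b ≤ a + n • (1:ℝ) := by
    have := Int.le_ceil (b - a)
    simp only [zsmul_eq_mul, mul_one]; linarith
  have h2 := intervalIntegral.integral_mono_interval (μ := volume) (f := minOne H)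
    (le_refl a) hab h1
    (Filter.Eventually.of_forall fun t => minOne_nonneg H hH.le t) (minOne_ii H hH.le _ _)
  refine h2.trans ?_
  rw [(minOne_periodic H).intervalIntegral_add_zsmul_eq n a (fun _ _ => minOne_ii H hH.le _ _),
    (minOne_periodic H).intervalIntegral_add_eq a 0, zero_add, zsmul_eq_mul]
  have h3 : (n : ℝ) ≤ b - a + 1 := (Int.ceil_lt_add_one _).le
  have h4 : 0 ≤ ∫ u in (0:ℝ)..1, minOne H u :=
    intervalIntegral.integral_nonneg (by norm_num) (fun t _ => minOne_nonneg H hH.le t)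
  exact mul_le_mul h3 (minOne_int H hH) h4 (by linarith)

/-- A dominating function for `G12`. -/
def Gdom (M₁ M₂ ℓ₂ : ℕ) (H T x : ℝ) : ℝ :=
  ∑ n ∈ Finset.Icc 1 ⌊Real.sqrt ((M₁ * M₂ : ℕ) * T)⌋₊,
    minOne H (((M₁ : ℝ) / n) * x - (ℓ₂ : ℝ) / M₂)

lemma G12_nonneg (M₁ M₂ ℓ₁ ℓ₂ : ℕ) (H x : ℝ) (hH : 0 ≤ H) : 0 ≤ G12 M₁ M₂ ℓ₁ ℓ₂ H x :=
  Finset.sum_nonneg fun _ _ => minOne_nonneg H hH _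

lemma G12_le (M₁ M₂ ℓ₁ ℓ₂ : ℕ) (H T x : ℝ) (hH : 0 ≤ H) (hx : x ≤ T) :
    G12 M₁ M₂ ℓ₁ ℓ₂ H x ≤ Gdom M₁ M₂ ℓ₂ H T x := by
  unfold G12 Gdom
  have e : ∀ n : ℕ, (M₁ : ℝ) * x / n = (M₁ : ℝ) / n * x := fun n => by ring
  simp only [e]
  refine Finset.sum_le_sum_of_subset_of_nonneg ?_ (fun _ _ _ => minOne_nonneg H hH _)
  refine (Finset.filter_subset _ _).trans ?_
  apply Finset.Icc_subset_Icc_right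
  apply Nat.floor_le_floor
  apply Real.sqrt_le_sqrt
  gcongr

lemma minOne_aff_ii (H : ℝ) (hH : 0 ≤ H) (k d a b : ℝ) :
    IntervalIntegrable (fun x => minOne H (k * x - d)) volume a b := by
  refine (intervalIntegrable_const (c := (1:ℝ))).mono_fun
    ((minOne_measurable H).comp (by fun_prop)).aestronglyMeasurable ?_
  refine Filter.Eventually.of_forall fun t => ?_
  show ‖minOne H _‖ ≤ |(1:ℝ)|
  rw [Real.norm_eq_abs, abs_of_nonneg (minOne_nonneg H hH _)]
  simpa using minOne_le_one H _

lemma Gdom_ii (M₁ M₂ ℓ₂ : ℕ) (H T a b : ℝ) (hH : 0 ≤ H) :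
    IntervalIntegrable (Gdom M₁ M₂ ℓ₂ H T) volume a b := by
  have := IntervalIntegrable.sum (μ := volume) (a := a) (b := b)
    (Finset.Icc 1 ⌊Real.sqrt ((M₁ * M₂ : ℕ) * T)⌋₊)
    (f := fun (n : ℕ) (x : ℝ) => minOne H (((M₁ : ℝ) / n) * x - (ℓ₂ : ℝ) / M₂))
    (fun n _ => minOne_aff_ii H hH _ _ a b)
  have e : Gdom M₁ M₂ ℓ₂ H T = ∑ n ∈ Finset.Icc 1 ⌊Real.sqrt ((M₁ * M₂ : ℕ) * T)⌋₊,
      fun x : ℝ => minOne H (((M₁ : ℝ) / n) * x - (ℓ₂ : ℝ) / M₂) := by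
    funext x
    simp [Gdom]
  rw [e]
  exact this

lemma Gdom_int (M₁ M₂ ℓ₂ : ℕ) (hM₁ : 0 < M₁) (hM₂ : 0 < M₂) (T : ℝ) (hT : 10 ≤ T) :
    ∫ x in (T/2)..T, Gdom M₁ M₂ ℓ₂ (T ^ 8) T x
      ≤ 256 * (M₁ * M₂) ^ 2 * T ^ (-(51:ℝ)/8) := by
  have hT0 : 0 < T := by linarith
  have hH : 0 < T ^ 8 := by positivity
  have hM₁' : (1:ℝ) ≤ M₁ := by exact_mod_cast hM₁
  have hM₂' : (1:ℝ) ≤ M₂ := by exact_mod_cast hM₂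
  unfold Gdom
  rw [intervalIntegral.integral_finsetSum (fun n _ => minOne_aff_ii _ hH.le _ _ _ _)]
  set N := ⌊Real.sqrt ((M₁ * M₂ : ℕ) * T)⌋₊ with hN
  set m : ℝ := M₁ * M₂ with hm
  have hm1 : 1 ≤ m := by rw [hm]; nlinarith
  have hsT2 : Real.sqrt T ^ 2 = T := Real.sq_sqrt hT0.le
  have hsT1 : 1 ≤ Real.sqrt T := Real.one_le_sqrt.2 (by linarith)
  have hN1 : (N : ℝ) ≤ m * Real.sqrt T := by
    refine (Nat.floor_le (Real.sqrt_nonneg _)).trans ?_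
    apply Real.sqrt_le_iff.2 ⟨by positivity, ?_⟩
    rw [mul_pow, hsT2]; push_cast; rw [← hm]
    gcongr; nlinarith
  have hI : (T ^ 8) ^ (-(63:ℝ)/64) = T ^ (-(63:ℝ)/8) := by
    rw [← Real.rpow_natCast, ← Real.rpow_mul hT0.le]; norm_num
  have each : ∀ n ∈ Finset.Icc 1 N,
      ∫ x in (T/2)..T, minOne (T ^ 8) (((M₁ : ℝ) / n) * x - (ℓ₂ : ℝ) / M₂)
        ≤ (2 * m * T) * (128 * T ^ (-(63:ℝ)/8)) := by
    intro n hn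
    have hn' := Finset.mem_Icc.1 hn
    have hn1 : (1:ℝ) ≤ n := by exact_mod_cast hn'.1
    have hnN : (n:ℝ) ≤ N := by exact_mod_cast hn'.2
    have hk : 0 < (M₁ : ℝ) / n := by positivity
    rw [intervalIntegral.integral_comp_mul_sub (minOne (T ^ 8)) hk.ne', smul_eq_mul]
    have h1 := minOne_long (T ^ 8) hH ((M₁ : ℝ) / n * (T / 2) - (ℓ₂ : ℝ) / M₂)
      ((M₁ : ℝ) / n * T - (ℓ₂ : ℝ) / M₂) (by gcongr; linarith)
    rw [hI] at h1
    have h2 : ((M₁ : ℝ) / n)⁻¹ * ((M₁ : ℝ) / n * T - (ℓ₂ : ℝ) / M₂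
        - ((M₁ : ℝ) / n * (T / 2) - (ℓ₂ : ℝ) / M₂) + 1) ≤ 2 * m * T := by
      have e : ((M₁ : ℝ) / n)⁻¹ * ((M₁ : ℝ) / n * T - (ℓ₂ : ℝ) / M₂
        - ((M₁ : ℝ) / n * (T / 2) - (ℓ₂ : ℝ) / M₂) + 1) = T / 2 + n / M₁ := by
        field_simp; ring
      rw [e]
      have h3 : (n : ℝ) / M₁ ≤ n := div_le_self (by positivity) hM₁'
      have h4 : m * Real.sqrt T ≤ m * T := by
        gcongr
        nlinarith
      have h5 : T ≤ m * T := by nlinarith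
      linarith
    calc _ ≤ ((M₁ : ℝ) / n)⁻¹ * (((M₁ : ℝ) / n * T - (ℓ₂ : ℝ) / M₂
        - ((M₁ : ℝ) / n * (T / 2) - (ℓ₂ : ℝ) / M₂) + 1) * (128 * T ^ (-(63:ℝ)/8))) := by gcongr
      _ = (((M₁ : ℝ) / n)⁻¹ * ((M₁ : ℝ) / n * T - (ℓ₂ : ℝ) / M₂
        - ((M₁ : ℝ) / n * (T / 2) - (ℓ₂ : ℝ) / M₂) + 1)) * (128 * T ^ (-(63:ℝ)/8)) := by ring
      _ ≤ _ := by gcongr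
  refine (Finset.sum_le_sum each).trans ?_
  rw [Finset.sum_const, nsmul_eq_mul, Nat.card_Icc, Nat.add_sub_cancel]
  calc (N : ℝ) * _ ≤ (m * Real.sqrt T) * ((2 * m * T) * (128 * T ^ (-(63:ℝ)/8))) := by gcongr
    _ = 256 * m ^ 2 * (T ^ ((1:ℝ)/2) * T ^ (1:ℝ) * T ^ (-(63:ℝ)/8)) := by
        rw [Real.sqrt_eq_rpow, Real.rpow_one]; ring
    _ = _ := by rw [← Real.rpow_add hT0, ← Real.rpow_add hT0]; norm_num

theorem R_cubed_G_moment (M₁ M₂ ℓ₁ ℓ₂ : ℕ) (hM₁ : 0 < M₁) (hM₂ : 0 < M₂)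
    (hℓ₁ : 1 ≤ ℓ₁) (hℓ₁' : ℓ₁ ≤ M₁) (hℓ₂ : 1 ≤ ℓ₂) (hℓ₂' : ℓ₂ ≤ M₂)
    (ε : ℝ) (hε : 0 < ε) :
    ∃ C > 0, ∀ T : ℝ, 10 ≤ T →
      (∫ x in (T/2)..T, |Rfull M₁ M₂ ℓ₁ ℓ₂ T x| ^ 3 *
          |G12 M₁ M₂ ℓ₁ ℓ₂ (T ^ 8) x + G12 M₂ M₁ ℓ₂ ℓ₁ (T ^ 8) x|)
        ≤ C * T ^ (2 - 1/8 + ε) := by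
  have hm : (0:ℝ) < 2952 * M₁ ^ 2 * M₂ ^ 2 + 9 := by positivity
  set K : ℝ := 2952 * M₁ ^ 2 * M₂ ^ 2 + 9 with hK
  refine ⟨K ^ 3 * (512 * (M₁ * M₂) ^ 2), by positivity, ?_⟩
  intro T hT
  have hT0 : 0 < T := by linarith
  have hH : (0:ℝ) ≤ T ^ 8 := by positivity
  set D : ℝ → ℝ := fun x => (K * T ^ ((11:ℝ)/4)) ^ 3 *
    (Gdom M₁ M₂ ℓ₂ (T ^ 8) T x + Gdom M₂ M₁ ℓ₁ (T ^ 8) T x) with hD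
  have hDi : IntervalIntegrable D volume (T/2) T :=
    ((Gdom_ii M₁ M₂ ℓ₂ _ T _ _ hH).add (Gdom_ii M₂ M₁ ℓ₁ _ T _ _ hH)).const_mul _
  have hle : T / 2 ≤ T := by linarith
  have h1 : (∫ x in (T/2)..T, |Rfull M₁ M₂ ℓ₁ ℓ₂ T x| ^ 3 *
          |G12 M₁ M₂ ℓ₁ ℓ₂ (T ^ 8) x + G12 M₂ M₁ ℓ₂ ℓ₁ (T ^ 8) x|)
      ≤ ∫ x in (T/2)..T, D x := by
    rw [intervalIntegral.integral_of_le hle, intervalIntegral.integral_of_le hle]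
    refine integral_mono_of_nonneg ?_ hDi.1 ?_
    · exact Filter.Eventually.of_forall fun x => by
        show (0:ℝ) ≤ _
        positivity
    · refine (ae_restrict_iff' measurableSet_Ioc).2 (Filter.Eventually.of_forall fun x hx => ?_)
      have hR := Rfull_bound M₁ M₂ ℓ₁ ℓ₂ hM₁ hM₂ T x hT hx.1.le hx.2
      have g1 := G12_nonneg M₁ M₂ ℓ₁ ℓ₂ (T ^ 8) x hH
      have g2 := G12_nonneg M₂ M₁ ℓ₂ ℓ₁ (T ^ 8) x hH
      have g3 := G12_le M₁ M₂ ℓ₁ ℓ₂ (T ^ 8) T x hH hx.2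
      have g4 := G12_le M₂ M₁ ℓ₂ ℓ₁ (T ^ 8) T x hH hx.2
      simp only [hD]
      rw [abs_of_nonneg (add_nonneg g1 g2)]
      gcongr
  refine h1.trans ?_
  simp only [hD]
  rw [intervalIntegral.integral_const_mul, intervalIntegral.integral_add
    (Gdom_ii M₁ M₂ ℓ₂ _ T _ _ hH) (Gdom_ii M₂ M₁ ℓ₁ _ T _ _ hH)]
  have b1 := Gdom_int M₁ M₂ ℓ₂ hM₁ hM₂ T hT
  have b2 := Gdom_int M₂ M₁ ℓ₁ hM₂ hM₁ T hT
  have e1 : (T ^ ((11:ℝ)/4)) ^ 3 * T ^ (-(51:ℝ)/8) = T ^ ((15:ℝ)/8) := by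
    rw [← Real.rpow_natCast, ← Real.rpow_mul hT0.le, ← Real.rpow_add hT0]; norm_num
  have e2 : T ^ ((15:ℝ)/8) ≤ T ^ (2 - 1/8 + ε) :=
    Real.rpow_le_rpow_of_exponent_le (by linarith) (by linarith)
  calc _ ≤ (K * T ^ ((11:ℝ)/4)) ^ 3 * (256 * (M₁ * M₂) ^ 2 * T ^ (-(51:ℝ)/8)
        + 256 * (M₂ * M₁) ^ 2 * T ^ (-(51:ℝ)/8)) := by gcongr
    _ = K ^ 3 * (512 * (M₁ * M₂) ^ 2) * ((T ^ ((11:ℝ)/4)) ^ 3 * T ^ (-(51:ℝ)/8)) := by ring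
    _ ≤ _ := by rw [e1]; gcongr
end
end

section
/- Let k ≥ 2 and 1 ≤ v < k be integers, and let f : ℕ → ℝ be an arithmetic function such that for every ε > 0 one has f(n) ≪_ε n^ε. Then the series s_{k;v}(f) converges absolutely, and for every ε > 0 and every y > 1, |s_{k;v}(f) − s_{k;v}(f;y)| ≪ y^{−1/2+ε}, where the implied constant depends only on k, ε and f. -/
open Real MeasureTheory Finset
open scoped Classical

noncomputable section

/-- The general term of the series `s_{k;v}(f)`: it is supported on tuples of positive
integers satisfying `√n₁ + ⋯ + √n_v = √n_{v+1} + ⋯ + √n_k`. -/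
def skvTerm (k v : ℕ) (f : ℕ → ℝ) (n : Fin k → ℕ) : ℝ :=
  if (∀ i, 1 ≤ n i) ∧
      (∑ i ∈ Finset.univ.filter (fun i : Fin k => (i : ℕ) < v), Real.sqrt (n i))
        = ∑ i ∈ Finset.univ.filter (fun i : Fin k => v ≤ (i : ℕ)), Real.sqrt (n i) then
    (∏ i, f (n i)) * (∏ i, (n i : ℝ)) ^ (-(3:ℝ)/4)
  else 0


lemma sqf_eq_of_isSquare {d e : ℕ} (hd : Squarefree d) (he : Squarefree e)
    (h : IsSquare (d * e)) : d = e := by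
  obtain ⟨c, hc⟩ := h
  have h1 : d ∣ c := by
    rw [← hd.dvd_pow_iff_dvd (n := 2) (by norm_num), sq, ← hc]
    exact dvd_mul_right _ _
  obtain ⟨t, rfl⟩ := h1
  have hd0 : 0 < d := Nat.pos_of_ne_zero hd.ne_zero
  have h2 : e = d * (t * t) := by
    apply Nat.eq_of_mul_eq_mul_left hd0
    rw [hc]; ring
  have h3 : IsUnit t := he t (h2 ▸ dvd_mul_left _ _)
  rw [Nat.isUnit_iff] at h3
  subst h3
  simpa using h2.symm

abbrev LL := algebraicClosure ℚ ℂ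

instance LLc : IsAlgClosure ℚ LL := algebraicClosure.isAlgClosure ℚ ℂ

def xr (d : ℕ) : LL := ⟨((√(d:ℝ) : ℝ) : ℂ), by
  rw [mem_algebraicClosure_iff]
  refine IsAlgebraic.of_pow (n := 2) (by norm_num) ?_
  rw [← Complex.ofReal_pow, Real.sq_sqrt (by positivity)]
  simpa using isAlgebraic_algebraMap (R := ℚ) (A := ℂ) (d:ℚ)⟩

lemma xr_sq (d : ℕ) : xr d ^ 2 = (d : LL) := by
  apply Subtype.ext
  simp only [xr]
  push_cast
  rw [← Complex.ofReal_pow, Real.sq_sqrt (by positivity)]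
  simp

lemma xr_ne {d : ℕ} (hd : d ≠ 0) : xr d ≠ 0 := by
  intro h
  have := xr_sq d
  rw [h] at this
  simp at this
  exact hd (by exact_mod_cast this.symm)

lemma chi_sq (d : ℕ) (hd : d ≠ 0) (σ : LL ≃ₐ[ℚ] LL) :
    σ (xr d) / xr d = 1 ∨ σ (xr d) / xr d = -1 := by
  rw [← sq_eq_one_iff, div_pow, ← map_pow, xr_sq]
  simp [hd]

def chi (d : ℕ) (hd : d ≠ 0) : (LL ≃ₐ[ℚ] LL) →* LL where
  toFun σ := σ (xr d) / xr d
  map_one' := by simp [xr_ne hd]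
  map_mul' σ τ := by
    have h0 := xr_ne hd
    rcases chi_sq d hd τ with h | h
    · rw [h]
      rw [div_eq_iff h0] at h
      simp [h]
    · rw [h]
      rw [div_eq_iff h0] at h
      simp [h, neg_div]

lemma chi_inj {d e : ℕ} (hd : Squarefree d) (he : Squarefree e)
    (h : chi d hd.ne_zero = chi e he.ne_zero) : d = e := by
  apply sqf_eq_of_isSquare hd he
  have hfix : ∀ σ : LL ≃ₐ[ℚ] LL, σ (xr d * xr e) = xr d * xr e := by
    intro σ
    have h1 : σ (xr d) / xr d = σ (xr e) / xr e := congrArg (fun f => f σ) h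
    have hd0 := xr_ne hd.ne_zero
    have he0 := xr_ne he.ne_zero
    rw [map_mul]
    rcases chi_sq e he.ne_zero σ with h2 | h2
    · rw [h2] at h1
      rw [div_eq_iff hd0] at h1
      rw [div_eq_iff he0] at h2
      rw [h1, h2]; ring
    · rw [h2] at h1
      rw [div_eq_iff hd0] at h1
      rw [div_eq_iff he0] at h2
      rw [h1, h2]; ring
  have : IsGalois ℚ LL := IsAlgClosure.isGalois ℚ LL
  have hb := (InfiniteGalois.mem_bot_iff_fixed (k := ℚ) (xr d * xr e)).2 hfix
  rw [IntermediateField.mem_bot] at hb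
  obtain ⟨r, hr⟩ := hb
  by_contra hns
  have hirr := irrational_sqrt_natCast_iff.2 hns
  apply hirr
  refine ⟨r, ?_⟩
  have h3 := congrArg (fun z : LL => (z : ℂ)) hr
  simp only [xr] at h3
  have h4 : ((r:ℝ):ℂ) = ((√(d:ℝ) * √(e:ℝ) : ℝ) : ℂ) := by
    push_cast
    convert h3 using 1
    · simp
    · rfl
  rw [Complex.ofReal_inj] at h4
  rw [h4]
  push_cast
  rw [Real.sqrt_mul (by positivity)]

lemma linind_chi : LinearIndependent LL
    (fun d : {d : ℕ // Squarefree d} => (⇑(chi d.1 d.2.ne_zero) : (LL ≃ₐ[ℚ] LL) → LL)) := by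
  have := linearIndependent_monoidHom (LL ≃ₐ[ℚ] LL) LL
  exact this.comp (fun d : {d : ℕ // Squarefree d} => chi d.1 d.2.ne_zero)
    (fun d e h => Subtype.ext (chi_inj d.2 e.2 h))

lemma linind_sqrt : LinearIndependent ℚ
    (fun d : {d : ℕ // Squarefree d} => √(d.1 : ℝ)) := by
  rw [linearIndependent_iff']
  intro s g hg i hi
  have h1 : ∑ j ∈ s, (g j : LL) * xr j.1 = 0 := by
    apply Subtype.ext
    have : ((∑ j ∈ s, (g j : ℝ) * √(j.1 : ℝ) : ℝ) : ℂ) = 0 := by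
      rw [← Complex.ofReal_zero, Complex.ofReal_inj, ← hg]
      exact Finset.sum_congr rfl fun j _ => by rw [Rat.smul_def]
    push_cast at this
    simpa [xr] using this
  have h2 := linearIndependent_iff'.1 linind_chi s (fun j => (g j : LL) * xr j.1) (by
    funext σ
    have := congrArg σ h1
    rw [map_sum, map_zero] at this
    simp only [Finset.sum_apply, Pi.smul_apply, smul_eq_mul, Pi.zero_apply]
    rw [← this]
    refine Finset.sum_congr rfl fun j _ => ?_
    have h0 := xr_ne j.2.ne_zero
    change _ * (σ (xr j.1) / xr j.1) = _
    rw [map_mul, map_ratCast]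
    field_simp) i hi
  rcases mul_eq_zero.1 h2 with h | h
  · exact_mod_cast h
  · exact absurd h (xr_ne i.2.ne_zero)

lemma summable_pi {ι : Type*} [Fintype ι] (h : ℕ → ℝ) (h0 : ∀ n, 0 ≤ h n) (hs : Summable h) :
    Summable (fun g : ι → ℕ => ∏ i, h (g i)) := by
  refine summable_of_sum_le (c := ∏ _i : ι, ∑' n, h n)
    (fun g => Finset.prod_nonneg fun i _ => h0 _) ?_
  intro u
  set t : Finset ℕ := u.biUnion (fun g => Finset.univ.image g) with ht
  have hsub : u ⊆ Fintype.piFinset (fun _ : ι => t) := by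
    intro g hg
    rw [Fintype.mem_piFinset]
    intro i
    rw [ht, Finset.mem_biUnion]
    exact ⟨g, hg, Finset.mem_image_of_mem _ (Finset.mem_univ i)⟩
  calc ∑ g ∈ u, ∏ i, h (g i) ≤ ∑ g ∈ Fintype.piFinset (fun _ : ι => t), ∏ i, h (g i) :=
        Finset.sum_le_sum_of_subset_of_nonneg hsub
          (fun g _ _ => Finset.prod_nonneg fun i _ => h0 _)
    _ = ∏ _i : ι, ∑ j ∈ t, h j := Finset.sum_prod_piFinset t (fun _ => h)
    _ ≤ _ := Finset.prod_le_prod (fun _ _ => Finset.sum_nonneg fun _ _ => h0 _)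
        (fun _ _ => hs.sum_le_tsum _ (fun _ _ => h0 _))

lemma exists_qm (n : ℕ) : ∃ p : ℕ × ℕ, p.2 ^ 2 * p.1 = n ∧ Squarefree p.1 := by
  obtain ⟨a, b, h⟩ := Nat.sq_mul_squarefree n
  exact ⟨(a, b), h⟩

def qq (n : ℕ) : ℕ := (exists_qm n).choose.1
def mm (n : ℕ) : ℕ := (exists_qm n).choose.2
lemma mm_qq (n : ℕ) : mm n ^ 2 * qq n = n := (exists_qm n).choose_spec.1
lemma qq_sqf (n : ℕ) : Squarefree (qq n) := (exists_qm n).choose_spec.2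

lemma qq_pos (n : ℕ) : 1 ≤ qq n := Nat.pos_of_ne_zero (qq_sqf n).ne_zero
lemma mm_pos {n : ℕ} (hn : 1 ≤ n) : 1 ≤ mm n := by
  by_contra h
  have : mm n = 0 := by omega
  have h2 := mm_qq n
  rw [this] at h2
  simp at h2
  omega

def Good {k : ℕ} (n : Fin k → ℕ) : Prop :=
  (∀ i, 1 ≤ n i) ∧ ∀ i, ∃ j, j ≠ i ∧ qq (n j) = qq (n i)

def rr {k : ℕ} [NeZero k] (n : Fin k → ℕ) (l : Fin k) : Fin k :=
  Function.invFun (fun i => qq (n i)) (qq (n l))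

lemma qq_rr {k : ℕ} [NeZero k] (n : Fin k → ℕ) (l : Fin k) : qq (n (rr n l)) = qq (n l) :=
  Function.invFun_eq (f := fun i => qq (n i)) ⟨l, rfl⟩

lemma rr_congr {k : ℕ} [NeZero k] (n : Fin k → ℕ) {l j : Fin k} (h : qq (n l) = qq (n j)) :
    rr n l = rr n j := by
  unfold rr; rw [h]

def gg {k : ℕ} [NeZero k] (n : Fin k → ℕ) : Fin k ⊕ Fin k → ℕ :=
  Sum.elim (fun l => if rr n l = l then qq (n l) else 1) (fun l => mm (n l))

lemma enc_inj {k : ℕ} [NeZero k] :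
    Function.Injective (fun n : Fin k → ℕ => (rr n, gg n)) := by
  intro n n' h
  simp only [Prod.mk.injEq] at h
  obtain ⟨h1, h2⟩ := h
  have key : ∀ (n : Fin k → ℕ) l, gg n (Sum.inl (rr n l)) = qq (n l) := by
    intro n l
    have : rr n (rr n l) = rr n l := rr_congr n (qq_rr n l)
    simp [gg, this, qq_rr]
  funext l
  have hq : qq (n l) = qq (n' l) := by rw [← key n, ← key n', h1, h2]
  have hm : mm (n l) = mm (n' l) := congrFun h2 (Sum.inr l)
  rw [← mm_qq (n l), ← mm_qq (n' l), hq, hm]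

lemma prod_ineq {k : ℕ} [NeZero k] (n : Fin k → ℕ) (hn : Good n) :
    (∏ i, gg n i) ^ 2 ≤ ∏ l, n l := by
  set R : Finset (Fin k) := Finset.univ.filter (fun l => rr n l = l) with hR
  have e1 : ∏ i, gg n i = (∏ l ∈ R, qq (n l)) * ∏ l, mm (n l) := by
    rw [Fintype.prod_sum_type]
    simp [gg, hR, Finset.prod_ite]
  have e2 : ∏ l, n l = (∏ l, mm (n l)) ^ 2 * ((∏ l ∈ R, qq (n l)) * ∏ l ∈ Rᶜ, qq (n l)) := by
    rw [Finset.prod_mul_prod_compl, ← Finset.prod_pow, ← Finset.prod_mul_distrib]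
    exact Finset.prod_congr rfl fun l _ => (mm_qq _).symm
  choose s hs1 hs2 using hn.2
  have hrs : ∀ c ∈ R, rr n (s c) = c := by
    intro c hc
    rw [rr_congr n (hs2 c)]
    simpa [hR] using hc
  have e3 : ∏ l ∈ R, qq (n l) ≤ ∏ l ∈ Rᶜ, qq (n l) := by
    have hinj : Set.InjOn s (R : Set (Fin k)) := by
      intro c hc d hd h
      rw [← hrs c hc, ← hrs d hd, h]
    calc ∏ l ∈ R, qq (n l) = ∏ l ∈ R.image s, qq (n l) := by
          rw [Finset.prod_image hinj]
          exact Finset.prod_congr rfl fun c _ => (hs2 c).symm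
      _ ≤ _ := by
        apply Finset.prod_le_prod_of_subset_of_one_le'
        · intro l hl
          obtain ⟨c, hc, rfl⟩ := Finset.mem_image.1 hl
          rw [Finset.mem_compl]
          intro h
          have h5 : rr n (s c) = s c := by simpa [hR] using h
          exact hs1 c (by rw [← h5, hrs c hc])
        · intro i _ _
          exact qq_pos _
  rw [e1, e2, mul_pow, mul_comm, sq (∏ l ∈ R, qq (n l))]
  gcongr

lemma main_summable {k : ℕ} [NeZero k] (a : ℝ) (ha : 1/2 < a) :
    Summable (fun n : Fin k → ℕ => if Good n then (∏ l, (n l : ℝ)) ^ (-a) else 0) := by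
  have h1 : Summable (fun n : ℕ => (n : ℝ) ^ (-(2*a))) :=
    Real.summable_nat_rpow.2 (by linarith)
  have h2 := summable_pi (ι := Fin k ⊕ Fin k) _ (fun n => by positivity) h1
  have h3 : Summable (fun _ : Fin k → Fin k => (1:ℝ)) := Summable.of_finite
  have h4 := h3.mul_of_nonneg h2 (fun _ => zero_le_one)
    (fun g => Finset.prod_nonneg fun i _ => by positivity)
  have h5 := h4.comp_injective (enc_inj (k := k))
  refine h5.of_nonneg_of_le (fun n => ?_) (fun n => ?_)
  · split_ifs <;> positivity
  · simp only [Function.comp_apply, one_mul]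
    split_ifs with hn
    · rw [Real.finsetProd_rpow _ _ (fun i _ => by positivity)]
      have hg : ∀ i, 1 ≤ gg n i := by
        rintro (l | l)
        · simp only [gg, Sum.elim_inl]
          split_ifs
          · exact qq_pos _
          · exact le_rfl
        · exact mm_pos (hn.1 l)
      have hpos : (0:ℝ) < ∏ i, (gg n i : ℝ) :=
        Finset.prod_pos fun i _ => by exact_mod_cast hg i
      have := prod_ineq n hn
      have h6 : (∏ i, (gg n i : ℝ)) ^ 2 ≤ ∏ l, (n l : ℝ) := by exact_mod_cast this
      calc (∏ l, (n l : ℝ)) ^ (-a) ≤ ((∏ i, (gg n i : ℝ)) ^ 2) ^ (-a) :=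
            Real.rpow_le_rpow_of_nonpos (by positivity) h6 (by linarith)
        _ = _ := by
          rw [← Real.rpow_natCast, ← Real.rpow_mul hpos.le]
          congr 1; push_cast; ring
    · exact Finset.prod_nonneg fun i _ => by positivity

/-- key consequence of the linear independence -/
lemma partner {k v : ℕ} (n : Fin k → ℕ) (hn : ∀ i, 1 ≤ n i)
    (h : (∑ i ∈ Finset.univ.filter (fun i : Fin k => (i : ℕ) < v), Real.sqrt (n i))
        = ∑ i ∈ Finset.univ.filter (fun i : Fin k => v ≤ (i : ℕ)), Real.sqrt (n i)) (i : Fin k) :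
    ∃ j, j ≠ i ∧ qq (n j) = qq (n i) ∧ n i ≤ k ^ 2 * n j := by
  set s : Fin k → ℚ := fun i => if (i : ℕ) < v then 1 else -1 with hs
  have hs1 : ∀ i j, -1 ≤ s i * s j := by
    intro i j
    simp only [hs]
    split_ifs <;> norm_num
  have hss : ∀ i, s i * s i = 1 := by
    intro i
    simp only [hs]
    split_ifs <;> norm_num
  have h1 : ∑ i, (s i : ℝ) * √(n i : ℝ) = 0 := by
    have e := Finset.sum_filter_add_sum_filter_not Finset.univ (fun i : Fin k => (i : ℕ) < v)
      (fun i => (s i : ℝ) * √(n i : ℝ))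
    rw [← e]
    have e1 : ∑ i ∈ Finset.univ.filter (fun i : Fin k => (i : ℕ) < v), (s i : ℝ) * √(n i : ℝ)
        = ∑ i ∈ Finset.univ.filter (fun i : Fin k => (i : ℕ) < v), √(n i : ℝ) := by
      refine Finset.sum_congr rfl fun j hj => ?_
      have : (j : ℕ) < v := by simpa using hj
      simp [hs, this]
    have e2 : ∑ i ∈ Finset.univ.filter (fun i : Fin k => ¬ (i : ℕ) < v), (s i : ℝ) * √(n i : ℝ)
        = - ∑ i ∈ Finset.univ.filter (fun i : Fin k => v ≤ (i : ℕ)), √(n i : ℝ) := by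
      rw [← Finset.sum_neg_distrib]
      refine Finset.sum_congr (by ext; simp) fun j hj => ?_
      have : ¬ (j : ℕ) < v := by simpa using hj
      simp [hs, this]
    rw [e1, e2, h]; ring
  have h2 : ∀ i, √(n i : ℝ) = (mm (n i) : ℝ) * √(qq (n i) : ℝ) := by
    intro i
    conv_lhs => rw [← mm_qq (n i)]
    push_cast
    rw [Real.sqrt_mul (by positivity), Real.sqrt_sq (by positivity)]
  set Q : Fin k → {d : ℕ // Squarefree d} := fun i => ⟨qq (n i), qq_sqf _⟩ with hQ
  have h3 : ∑ d ∈ Finset.univ.image Q,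
      (∑ j ∈ Finset.univ.filter (fun j => Q j = d), s j * (mm (n j) : ℚ)) • √(d.1 : ℝ) = 0 := by
    rw [← h1, ← Finset.sum_fiberwise_of_maps_to (s := Finset.univ) (t := Finset.univ.image Q)
      (g := Q) (fun x hx => Finset.mem_image_of_mem _ hx)]
    refine Finset.sum_congr rfl fun d _ => ?_
    rw [Finset.sum_smul]
    refine Finset.sum_congr rfl fun j hj => ?_
    have : Q j = d := by simpa using hj
    rw [h2, Rat.smul_def, ← this]
    push_cast
    ring
  have h4 := linearIndependent_iff'.1 linind_sqrt _ _ h3 (Q i)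
    (Finset.mem_image_of_mem _ (Finset.mem_univ i))
  by_contra hcon
  push Not at hcon
  set T := (Finset.univ.filter (fun j => Q j = Q i)).erase i with hT
  have h5 : ∀ j ∈ T, (k : ℚ) * mm (n j) ≤ mm (n i) := by
    intro j hj
    rw [hT, Finset.mem_erase, Finset.mem_filter] at hj
    have hq : qq (n j) = qq (n i) := congrArg Subtype.val hj.2.2
    have h6 := hcon j hj.1 hq
    rw [← mm_qq (n i), ← mm_qq (n j), hq] at h6
    have h7 : (k * mm (n j)) ^ 2 < mm (n i) ^ 2 := by
      apply lt_of_mul_lt_mul_right (a := qq (n i)) _ (Nat.zero_le _)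
      calc _ = k ^ 2 * (mm (n j) ^ 2 * qq (n i)) := by ring
        _ < _ := h6
    have h8 := lt_of_pow_lt_pow_left₀ 2 (Nat.zero_le _) h7
    exact_mod_cast h8.le
  have h6 : (mm (n i) : ℚ) + ∑ j ∈ T, s i * s j * mm (n j) = 0 := by
    have e := Finset.add_sum_erase (Finset.univ.filter (fun j => Q j = Q i))
      (fun j => s i * (s j * (mm (n j) : ℚ))) (a := i) (by simp)
    have e' : ∑ j ∈ Finset.univ.filter (fun j => Q j = Q i), s i * (s j * (mm (n j) : ℚ)) = 0 := by
      rw [← Finset.mul_sum, h4, mul_zero]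
    rw [e'] at e
    rw [← e, ← mul_assoc, hss, one_mul]
    congr 1
    exact Finset.sum_congr rfl fun j _ => by ring
  have h7 : (mm (n i) : ℚ) ≤ ∑ j ∈ T, (mm (n j) : ℚ) := by
    have : -∑ j ∈ T, (mm (n j) : ℚ) ≤ ∑ j ∈ T, s i * s j * mm (n j) := by
      rw [← Finset.sum_neg_distrib]
      refine Finset.sum_le_sum fun j _ => ?_
      have := mul_le_mul_of_nonneg_right (hs1 i j) (Nat.cast_nonneg (α := ℚ) (mm (n j)))
      linarith
    linarith
  have h8 : (k : ℚ) * ∑ j ∈ T, (mm (n j) : ℚ) ≤ (T.card : ℚ) * mm (n i) := by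
    rw [Finset.mul_sum, ← nsmul_eq_mul]
    exact Finset.sum_le_card_nsmul _ _ _ h5
  have h9 : T.card < k := by
    calc T.card < (Finset.univ : Finset (Fin k)).card := by
          apply Finset.card_lt_card
          rw [Finset.ssubset_univ_iff]
          intro hu
          have : i ∈ T := hu ▸ Finset.mem_univ i
          simp [hT] at this
      _ = k := by simp
  have h10 : (T.card : ℚ) < k := by exact_mod_cast h9
  have h11 : (0 : ℚ) < mm (n i) := by exact_mod_cast mm_pos (hn i)
  have h12 : (0:ℚ) ≤ k := by positivity
  nlinarith [mul_le_mul_of_nonneg_left h7 h12, mul_lt_mul_of_pos_right h10 h11]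

/-- pointwise bound -/
lemma term_bound {k v : ℕ} (f : ℕ → ℝ) (e Cf : ℝ) (hC : 0 ≤ Cf)
    (hf : ∀ n : ℕ, 1 ≤ n → |f n| ≤ Cf * (n : ℝ) ^ (e / 4)) (n : Fin k → ℕ) :
    |skvTerm k v f n| ≤ Cf ^ k * ((if Good n then (∏ l, (n l : ℝ)) ^ (-(1/2 + e/4)) else 0)
      * (∏ l, (n l : ℝ)) ^ (-(1/4 - e/2))) := by
  unfold skvTerm
  split_ifs with h hg hg
  · have hN : (0:ℝ) < ∏ l, (n l : ℝ) := Finset.prod_pos fun i _ => by exact_mod_cast h.1 i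
    rw [← Real.rpow_add hN, abs_mul, Finset.abs_prod, abs_of_pos (Real.rpow_pos_of_pos hN _)]
    calc (∏ i, |f (n i)|) * (∏ l, (n l : ℝ)) ^ (-(3:ℝ)/4)
        ≤ (∏ i, Cf * (n i : ℝ) ^ (e/4)) * (∏ l, (n l : ℝ)) ^ (-(3:ℝ)/4) := by
          refine mul_le_mul_of_nonneg_right ?_ (Real.rpow_pos_of_pos hN _).le
          exact Finset.prod_le_prod (fun _ _ => abs_nonneg _) fun i _ => hf _ (h.1 i)
      _ = _ := by
          rw [Finset.prod_mul_distrib, Real.finsetProd_rpow _ _ (fun i _ => by positivity),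
            mul_assoc, ← Real.rpow_add hN]
          simp only [Finset.prod_const, Finset.card_univ, Fintype.card_fin]
          congr 2; ring
  · exfalso
    apply hg
    refine ⟨h.1, fun i => ?_⟩
    obtain ⟨j, h1, h2, _⟩ := partner n h.1 h.2 i
    exact ⟨j, h1, h2⟩
  · rw [abs_zero]; positivity
  · simp

lemma prod_lower {k v : ℕ} (f : ℕ → ℝ) (n : Fin k → ℕ) (hn : skvTerm k v f n ≠ 0) (y : ℝ)
    (hy : 1 < y) (hb : n ∉ Fintype.piFinset (fun _ : Fin k => Finset.Icc 1 ⌊y⌋₊)) :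
    y ^ 2 ≤ (k : ℝ) ^ 2 * ∏ l, (n l : ℝ) := by
  unfold skvTerm at hn
  have h : (∀ i, 1 ≤ n i) ∧
      (∑ i ∈ Finset.univ.filter (fun i : Fin k => (i : ℕ) < v), Real.sqrt (n i))
        = ∑ i ∈ Finset.univ.filter (fun i : Fin k => v ≤ (i : ℕ)), Real.sqrt (n i) := by
    by_contra h
    rw [if_neg h] at hn
    exact hn rfl
  rw [Fintype.mem_piFinset] at hb
  push Not at hb
  obtain ⟨i, hi⟩ := hb
  rw [Finset.mem_Icc] at hi
  have hi2 : ⌊y⌋₊ < n i := by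
    by_contra hc
    exact hi ⟨h.1 i, by omega⟩
  have hyi : y < n i := (Nat.floor_lt (by linarith)).1 hi2
  obtain ⟨j, hji, _, hij⟩ := partner n h.1 h.2 i
  have h1 : n i * n j ≤ ∏ l, n l := by
    rw [← Finset.prod_pair hji.symm]
    exact Finset.prod_le_prod_of_subset_of_one_le' (Finset.subset_univ _) fun l _ _ => h.1 l
  have h2 : (n i) ^ 2 ≤ k ^ 2 * ∏ l, n l := by
    calc (n i) ^ 2 = n i * n i := sq _
      _ ≤ n i * (k ^ 2 * n j) := Nat.mul_le_mul_left _ hij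
      _ = k ^ 2 * (n i * n j) := by ring
      _ ≤ _ := Nat.mul_le_mul_left _ h1
  have h3 : (n i : ℝ) ^ 2 ≤ (k:ℝ) ^ 2 * ∏ l, (n l : ℝ) := by exact_mod_cast h2
  nlinarith

lemma exists_bound (f : ℕ → ℝ)
    (hf : ∀ ε : ℝ, 0 < ε → ∃ Cf : ℝ, ∀ n : ℕ, 1 ≤ n → |f n| ≤ Cf * (n : ℝ) ^ ε)
    (ε : ℝ) (he : 0 < ε) :
    ∃ Cf : ℝ, 0 ≤ Cf ∧ ∀ n : ℕ, 1 ≤ n → |f n| ≤ Cf * (n : ℝ) ^ ε := by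
  obtain ⟨C, hC⟩ := hf ε he
  exact ⟨|C|, abs_nonneg _, fun n hn => (hC n hn).trans
    (mul_le_mul_of_nonneg_right (le_abs_self C) (by positivity))⟩

theorem skv_absolutely_convergent_and_truncation
    (k v : ℕ) (hk : 2 ≤ k) (hv : 1 ≤ v) (hvk : v < k) (f : ℕ → ℝ)
    (hf : ∀ ε : ℝ, 0 < ε → ∃ Cf : ℝ, ∀ n : ℕ, 1 ≤ n → |f n| ≤ Cf * (n : ℝ) ^ ε) :
    Summable (fun n : Fin k → ℕ => |skvTerm k v f n|) ∧
    ∀ ε : ℝ, 0 < ε → ∃ C : ℝ, ∀ y : ℝ, 1 < y →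
      |(∑' n : Fin k → ℕ, skvTerm k v f n)
          - ∑ n ∈ Fintype.piFinset (fun _ : Fin k => Finset.Icc 1 ⌊y⌋₊), skvTerm k v f n|
        ≤ C * y ^ (-(1:ℝ)/2 + ε) := by
  have : NeZero k := ⟨by omega⟩
  have hsum : Summable (fun n : Fin k → ℕ => |skvTerm k v f n|) := by
    obtain ⟨Cf, hC, hb⟩ := exists_bound f hf ((1/4)/4) (by norm_num)
    have hs := (main_summable (k := k) (1/2 + (1/4)/4) (by norm_num)).mul_left (Cf ^ k)
    refine hs.of_nonneg_of_le (fun n => abs_nonneg _) fun n => ?_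
    refine (term_bound f (1/4) Cf hC hb n).trans ?_
    refine mul_le_mul_of_nonneg_left ?_ (by positivity)
    split_ifs with hg
    · refine mul_le_of_le_one_right (by positivity) ?_
      refine Real.rpow_le_one_of_one_le_of_nonpos ?_ (by norm_num)
      have : 1 ≤ ∏ l, n l := Finset.one_le_prod' fun l _ => hg.1 l
      exact_mod_cast this
    · simp
  refine ⟨hsum, ?_⟩
  intro ε0 hε0
  set e : ℝ := min ε0 (1/4) with he
  have he0 : 0 < e := lt_min hε0 (by norm_num)
  have he1 : e ≤ 1/4 := min_le_right _ _
  have he2 : e ≤ ε0 := min_le_left _ _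
  obtain ⟨Cf, hC, hb⟩ := exists_bound f hf (e/4) (by linarith)
  set U : (Fin k → ℕ) → ℝ := fun n =>
    if Good n then (∏ l, (n l : ℝ)) ^ (-(1/2 + e/4)) else 0 with hU
  have hUs : Summable U := main_summable (k := k) (1/2 + e/4) (by linarith)
  have hU0 : ∀ n, 0 ≤ U n := fun n => by
    simp only [hU]
    split_ifs <;> positivity
  have hk0 : (0:ℝ) < k := by exact_mod_cast (by omega : 0 < k)
  set D : ℝ := Cf ^ k * ((k:ℝ) ^ 2) ^ (1/4 - e/2) with hD
  have hD0 : 0 ≤ D := by positivity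
  refine ⟨D * ∑' n, U n, fun y hy => ?_⟩
  have hy0 : 0 < y := by linarith
  set B := Fintype.piFinset (fun _ : Fin k => Finset.Icc 1 ⌊y⌋₊) with hB
  have hfs : Summable (skvTerm k v f) := hsum.of_abs
  have hBs : HasSum (fun n => if n ∈ B then skvTerm k v f n else 0)
      (∑ n ∈ B, skvTerm k v f n) := by
    have := hasSum_sum_of_ne_finset_zero (s := B) (L := .unconditional _)
      (f := fun n => if n ∈ B then skvTerm k v f n else 0) (fun n hn => by simp [hn])
    convert this using 1
    exact Finset.sum_congr rfl fun n hn => by simp [hn]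
  have hdiff := (hfs.hasSum.sub hBs)
  rw [← hdiff.tsum_eq, ← Real.norm_eq_abs]
  have hbd : ∀ n, ‖skvTerm k v f n - (if n ∈ B then skvTerm k v f n else 0)‖
      ≤ (D * y ^ (-(1:ℝ)/2 + ε0)) * U n := by
    intro n
    have hR : 0 ≤ (D * y ^ (-(1:ℝ)/2 + ε0)) * U n := mul_nonneg (by positivity) (hU0 n)
    split_ifs with hn
    · simpa using hR
    · rw [sub_zero]
      by_cases hz : skvTerm k v f n = 0
      · rw [hz]; simpa using hR
      · have h1 := term_bound (v := v) f e Cf hC hb n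
        have h2 := prod_lower f n hz y hy hn
        have h3 : (∏ l, (n l : ℝ)) ^ (-(1/4 - e/2))
            ≤ ((k:ℝ) ^ 2) ^ (1/4 - e/2) * y ^ (-(1:ℝ)/2 + ε0) := by
          calc (∏ l, (n l : ℝ)) ^ (-(1/4 - e/2)) ≤ (y ^ 2 / (k:ℝ) ^ 2) ^ (-(1/4 - e/2)) := by
                refine Real.rpow_le_rpow_of_nonpos (by positivity) ?_ (by linarith)
                rw [div_le_iff₀ (by positivity)]
                linarith
            _ = ((k:ℝ) ^ 2) ^ (1/4 - e/2) * y ^ (-(1:ℝ)/2 + e) := by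
                rw [Real.rpow_neg (by positivity), ← Real.inv_rpow (by positivity), inv_div,
                  Real.div_rpow (by positivity) (by positivity), div_eq_mul_inv,
                  ← Real.rpow_neg (by positivity)]
                congr 1
                rw [← Real.rpow_natCast, ← Real.rpow_mul hy0.le]
                congr 1; push_cast; ring
            _ ≤ _ := by
                refine mul_le_mul_of_nonneg_left ?_ (by positivity)
                exact Real.rpow_le_rpow_of_exponent_le hy.le (by linarith)
        rw [Real.norm_eq_abs]
        refine h1.trans ?_
        calc Cf ^ k * (U n * (∏ l, (n l : ℝ)) ^ (-(1/4 - e/2)))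
            ≤ Cf ^ k * (U n * (((k:ℝ) ^ 2) ^ (1/4 - e/2) * y ^ (-(1:ℝ)/2 + ε0))) := by
              refine mul_le_mul_of_nonneg_left ?_ (by positivity)
              exact mul_le_mul_of_nonneg_left h3 (hU0 n)
          _ = _ := by rw [hD]; ring
  refine (tsum_of_norm_bounded (hUs.hasSum.mul_left (D * y ^ (-(1:ℝ)/2 + ε0))) hbd).trans
    (le_of_eq ?_)
  ring
end
end

section
/- Fix constants c₂ ≥ c₁ > 0 and ε > 0. There is a constant C (depending only on c₁, c₂, ε) such that: if N, M, K, L are real numbers with 1 ≤ N ≤ M, 1 ≤ K ≤ L, N ≤ K, c₁L ≤ M ≤ c₂L, and 0 < Δ ≤ c₂ L^{1/2}, then the number 𝒜₁(N,M,K,L;Δ) of quadruples (n,m,k,ℓ) of positive integers with N < n ≤ 2N, M < m ≤ 2M, K < k ≤ 2K, L < ℓ ≤ 2L and 0 < |√n + √m − √k − √ℓ| < Δ satisfies 𝒜₁(N,M,K,L;Δ) ≤ C(Δ L^{1/2} NMK + NK L^{1/2+ε}). In particular, if in addition Δ L^{1/2} ≥ 1, then 𝒜₁(N,M,K,L;Δ)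 ≤ C · Δ L^{1/2} NMK. -/
open Real MeasureTheory Finset
open scoped Classical

noncomputable section

/-- The set of quadruples counted by `𝒜₁(N,M,K,L;Δ)`. -/
def A1set (N M K L Δ : ℝ) : Set (ℕ × ℕ × ℕ × ℕ) :=
  {q | N < (q.1 : ℝ) ∧ (q.1 : ℝ) ≤ 2 * N ∧ M < (q.2.1 : ℝ) ∧ (q.2.1 : ℝ) ≤ 2 * M ∧
       K < (q.2.2.1 : ℝ) ∧ (q.2.2.1 : ℝ) ≤ 2 * K ∧ L < (q.2.2.2 : ℝ) ∧ (q.2.2.2 : ℝ) ≤ 2 * L ∧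
       0 < |Real.sqrt q.1 + Real.sqrt q.2.1 - Real.sqrt q.2.2.1 - Real.sqrt q.2.2.2| ∧
       |Real.sqrt q.1 + Real.sqrt q.2.1 - Real.sqrt q.2.2.1 - Real.sqrt q.2.2.2| < Δ}


lemma aux_divisor_bound (ε : ℝ) (hε : 0 < ε) :
    ∃ C : ℝ, 1 ≤ C ∧ ∀ n : ℕ, n ≠ 0 → ((Nat.divisors n).card : ℝ) ≤ C * (n : ℝ) ^ ε := by
  have hlog2 : 0 < Real.log 2 := Real.log_pos (by norm_num)
  obtain ⟨P, hP⟩ := exists_nat_ge ((2 : ℝ) ^ (1 / ε))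
  set B : ℝ := 1 + 1 / (ε * Real.log 2) with hB
  have hB1 : 1 ≤ B := by
    have : 0 < 1 / (ε * Real.log 2) := by positivity
    linarith
  refine ⟨B ^ P, one_le_pow₀ hB1, ?_⟩
  intro n hn
  have key : ∀ p ∈ n.primeFactors, ((n.factorization p : ℝ) + 1) ≤
      (if p < P then B else 1) * ((p : ℝ) ^ (n.factorization p)) ^ ε := by
    intro p hp
    have hp2 : (2 : ℝ) ≤ p := by exact_mod_cast (Nat.prime_of_mem_primeFactors hp).two_le
    generalize n.factorization p = a
    have e1 : ((p : ℝ) ^ a) ^ ε = ((p : ℝ) ^ ε) ^ a := by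
      rw [← Real.rpow_natCast, ← Real.rpow_mul (by positivity), mul_comm, Real.rpow_mul (by positivity),
        Real.rpow_natCast]
    rw [e1]
    split_ifs with h
    · have h1 : 1 + ε * Real.log 2 ≤ (p : ℝ) ^ ε := by
        calc 1 + ε * Real.log 2 ≤ Real.exp (Real.log 2 * ε) := by
              have := Real.add_one_le_exp (Real.log 2 * ε)
              linarith
          _ = (2 : ℝ) ^ ε := by rw [Real.rpow_def_of_pos (by norm_num)]
          _ ≤ (p : ℝ) ^ ε := Real.rpow_le_rpow (by norm_num) hp2 hε.le
      have h2 : 1 + (a : ℝ) * (ε * Real.log 2) ≤ ((p : ℝ) ^ ε) ^ a := by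
        refine (one_add_mul_le_pow (by have : 0 < ε * Real.log 2 := by positivity
                                       linarith) a).trans ?_
        gcongr
      calc (a : ℝ) + 1 ≤ B * (1 + (a : ℝ) * (ε * Real.log 2)) := by
            have : B * (1 + (a : ℝ) * (ε * Real.log 2)) =
              1 + a + 1 / (ε * Real.log 2) + a * (ε * Real.log 2) := by
              rw [hB]; field_simp; ring
            rw [this]
            have h3 : 0 < 1 / (ε * Real.log 2) := by positivity
            have h4 : 0 ≤ a * (ε * Real.log 2) := by positivity
            linarith
        _ ≤ _ := by gcongr
    · have h1 : (2 : ℝ) ≤ (p : ℝ) ^ ε := by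
        have hPp : (P : ℝ) ≤ p := by exact_mod_cast not_lt.mp h
        calc (2 : ℝ) = ((2 : ℝ) ^ (1 / ε)) ^ ε := by
              rw [← Real.rpow_mul (by norm_num)]
              rw [one_div_mul_cancel hε.ne', Real.rpow_one]
          _ ≤ (p : ℝ) ^ ε := Real.rpow_le_rpow (by positivity) (hP.trans hPp) hε.le
      have := one_add_mul_le_pow (a := (1 : ℝ)) (by norm_num) a
      calc (a : ℝ) + 1 ≤ (1 + 1) ^ a := by linarith
        _ ≤ ((p : ℝ) ^ ε) ^ a := by gcongr; linarith
        _ = _ := by ring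
  rw [Nat.card_divisors hn]
  push_cast
  calc ∏ x ∈ n.primeFactors, ((n.factorization x : ℝ) + 1)
      ≤ ∏ p ∈ n.primeFactors, ((if p < P then B else 1) * ((p : ℝ) ^ (n.factorization p)) ^ ε) := by
        apply Finset.prod_le_prod
        · intros; positivity
        · exact key
    _ = (∏ p ∈ n.primeFactors, (if p < P then B else 1)) *
          (∏ p ∈ n.primeFactors, (p : ℝ) ^ (n.factorization p)) ^ ε := by
        rw [Finset.prod_mul_distrib, Real.finsetProd_rpow]
        intros; positivity
    _ ≤ B ^ P * (n : ℝ) ^ ε := by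
        have e : ∏ p ∈ n.primeFactors, (p : ℝ) ^ (n.factorization p) = n := by
          have := Nat.prod_factorization_pow_eq_self hn
          conv_rhs => rw [← this]
          rw [Finsupp.prod]
          push_cast
          rfl
        rw [e]
        gcongr
        rw [← Finset.prod_filter, Finset.prod_const]
        apply pow_le_pow_right₀ hB1
        calc _ ≤ (Finset.range P).card := by
              apply Finset.card_le_card
              intro x hx
              simp at hx ⊢
              exact hx.2
          _ = P := by simp


lemma aux_vdc (a : ℕ → ℂ) (W : ℕ) :
    ‖∑ i ∈ range W, a i‖ ^ 2 ≤
      2 * (∑ r ∈ range W, ∑ i ∈ range (W - r), a (r + i) * (starRingEnd ℂ) (a i)).re := by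
  rw [← Finset.sum_range_diag_flip W (fun r i => a (r + i) * (starRingEnd ℂ) (a i))]
  induction W with
  | zero => simp
  | succ n ih =>
    rw [Finset.sum_range_succ, Finset.sum_range_succ _ n, Complex.add_re, mul_add]
    have e : ∑ k ∈ range (n + 1), a (k + (n - k)) * (starRingEnd ℂ) (a (n - k)) =
        a n * (starRingEnd ℂ) (∑ i ∈ range n, a i) + a n * (starRingEnd ℂ) (a n) := by
      have : ∑ k ∈ range (n + 1), a (k + (n - k)) * (starRingEnd ℂ) (a (n - k)) =
          ∑ k ∈ range (n + 1), a n * (starRingEnd ℂ) (a (n - k)) := by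
        apply Finset.sum_congr rfl
        intro k hk
        rw [Finset.mem_range] at hk
        congr 2
        omega
      rw [this, ← Finset.mul_sum, ← mul_add]
      congr 1
      rw [← map_sum, ← map_add, ← Finset.sum_range_succ]
      congr 1
      exact Finset.sum_range_reflect a (n + 1)
    rw [e]
    set S := ∑ i ∈ range n, a i
    have h1 : ‖S + a n‖ ^ 2 = ‖S‖ ^ 2 + 2 * (a n * (starRingEnd ℂ) S).re + ‖a n‖ ^ 2 := by
      rw [Complex.sq_norm, Complex.sq_norm, Complex.sq_norm, Complex.normSq_add]
      have : (S * (starRingEnd ℂ) (a n)).re = (a n * (starRingEnd ℂ) S).re := by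
        simp; ring
      rw [this]; ring
    have h2 : (a n * (starRingEnd ℂ) (a n)).re = ‖a n‖ ^ 2 := by
      rw [Complex.mul_conj, Complex.ofReal_re, Complex.sq_norm]
    rw [h1, Complex.add_re, h2]
    have := sq_nonneg ‖a n‖
    linarith

/-- `e(x) = exp(2π i x)` -/
def eE (x : ℝ) : ℂ := Complex.exp ((2 * π * x : ℝ) * Complex.I)

lemma eE_norm (x : ℝ) : ‖eE x‖ = 1 := Complex.norm_exp_ofReal_mul_I _

lemma eE_add (x y : ℝ) : eE (x + y) = eE x * eE y := by
  unfold eE; rw [← Complex.exp_add]; congr 1; push_cast; ring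

lemma eE_conj (x : ℝ) : (starRingEnd ℂ) (eE x) = eE (-x) := by
  unfold eE; rw [← Complex.exp_conj]; congr 1; rw [map_mul, Complex.conj_ofReal, Complex.conj_I]; push_cast; ring

lemma eE_int (m : ℤ) : eE m = 1 := by
  unfold eE
  rw [Complex.exp_eq_one_iff]
  exact ⟨m, by push_cast; ring⟩

lemma eE_nsmul (n : ℕ) (x : ℝ) : eE (n * x) = eE x ^ n := by
  unfold eE; rw [← Complex.exp_nat_mul]; congr 1; push_cast; ring

lemma eE_re (x : ℝ) : (eE x).re = Real.cos (2 * π * x) := by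
  unfold eE; rw [Complex.exp_ofReal_mul_I_re]

/-- geometric sum bound -/
lemma aux_geom (θ c : ℝ) (b : ℤ) (n : ℕ) (hb : |θ - b| ≤ 1 / 2) :
    ‖∑ i ∈ range n, eE (i * θ + c)‖ * |θ - b| ≤ 1 / 2 := by
  have e : ∑ i ∈ range n, eE (i * θ + c) = (∑ i ∈ range n, eE θ ^ i) * eE c := by
    rw [Finset.sum_mul]
    apply Finset.sum_congr rfl
    intro i _
    rw [eE_add, eE_nsmul]
  rw [e, norm_mul, eE_norm, mul_one]
  have h1 : ‖eE θ - 1‖ * ‖∑ i ∈ range n, eE θ ^ i‖ ≤ 2 := by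
    rw [← norm_mul, mul_geom_sum]
    calc _ ≤ ‖eE θ ^ n‖ + ‖(1 : ℂ)‖ := norm_sub_le _ _
      _ = 2 := by rw [norm_pow, eE_norm]; norm_num
  have h2 : 4 * |θ - b| ≤ ‖eE θ - 1‖ := by
    have e2 : eE θ = eE (θ - b) := by
      rw [show θ = (θ - b) + b by ring, eE_add, eE_int, mul_one]; congr 1; ring
    rw [e2]
    unfold eE
    rw [mul_comm (((2 * π * (θ - b) : ℝ)) : ℂ), Complex.norm_exp_I_mul_ofReal_sub_one, norm_mul, Real.norm_eq_abs, Real.norm_eq_abs]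
    have : |2 * π * (θ - b) / 2| = π * |θ - b| := by
      rw [show 2 * π * (θ - b) / 2 = π * (θ - b) by ring, abs_mul, abs_of_pos Real.pi_pos]
    have h3 := Real.mul_abs_le_abs_sin (x := 2 * π * (θ - b) / 2) (by
      rw [this]; nlinarith [Real.pi_pos])
    rw [this] at h3
    have h4 : 2 / π * (π * |θ - b|) = 2 * |θ - b| := by
      field_simp
    rw [h4] at h3
    rw [abs_two]; linarith
  have h3 := mul_le_mul_of_nonneg_right h2 (norm_nonneg (∑ i ∈ range n, eE θ ^ i))
  linarith

/-- Detecting near-integers with a Fejér kernel. -/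
lemma aux_fejer (φ : ℕ → ℝ) (W H : ℕ) (hH : 1 ≤ H) (η : ℝ) (hη : 8 * η * H ≤ 1) :
    (((range W).filter (fun i => ∃ m : ℤ, |φ i - m| ≤ η)).card : ℝ) * H ≤
      4 * ∑ h ∈ range H, ‖∑ i ∈ range W, eE (h * φ i)‖ := by
  have hHpos : (0 : ℝ) < H := by exact_mod_cast hH
  have h1 : ∀ i ∈ (range W).filter (fun i => ∃ m : ℤ, |φ i - m| ≤ η),
      (H : ℝ) ^ 2 / 2 ≤ ‖∑ j ∈ range H, eE (j * φ i)‖ ^ 2 := by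
    intro i hi
    obtain ⟨_, m, hm⟩ := Finset.mem_filter.mp hi
    have h2 : ∀ j ∈ range H, √2 / 2 ≤ (eE (j * φ i)).re := by
      intro j hj
      have hjH : (j : ℝ) ≤ H := by exact_mod_cast (Finset.mem_range.mp hj).le
      have e : eE (j * φ i) = eE (j * (φ i - m)) := by
        rw [show (j : ℝ) * φ i = j * (φ i - m) + ((j * m : ℤ) : ℝ) by push_cast; ring, eE_add, eE_int,
          mul_one]
      rw [e, eE_re, ← Real.cos_abs, ← Real.cos_pi_div_four]
      apply Real.cos_le_cos_of_nonneg_of_le_pi (abs_nonneg _)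
      · linarith [Real.pi_pos]
      · rw [abs_mul, abs_of_pos (by positivity : (0:ℝ) < 2 * π), abs_mul, abs_of_nonneg (by positivity : (0:ℝ) ≤ j)]
        have : (j : ℝ) * |φ i - m| ≤ 1 / 8 := by
          calc (j : ℝ) * |φ i - m| ≤ H * η := by
                apply mul_le_mul hjH hm (abs_nonneg _) (by positivity)
            _ ≤ 1 / 8 := by linarith
        nlinarith [Real.pi_pos]
    have h3 : (H : ℝ) * (√2 / 2) ≤ ‖∑ j ∈ range H, eE (j * φ i)‖ := by
      refine le_trans ?_ (Complex.re_le_norm _)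
      rw [Complex.re_sum]
      calc (H : ℝ) * (√2 / 2) = ∑ j ∈ range H, (√2 / 2) := by simp
        _ ≤ _ := Finset.sum_le_sum h2
    calc (H : ℝ) ^ 2 / 2 = ((H : ℝ) * (√2 / 2)) ^ 2 := by
          rw [mul_pow, div_pow, Real.sq_sqrt (by norm_num)]; ring
      _ ≤ _ := by gcongr
  have h4 : ∀ i ∈ range W, ‖∑ j ∈ range H, eE (j * φ i)‖ ^ 2 ≤
      2 * (∑ r ∈ range H, ((H - r : ℕ) : ℂ) * eE (r * φ i)).re := by
    intro i _
    refine (aux_vdc (fun j => eE (j * φ i)) H).trans (le_of_eq ?_)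
    congr 2
    apply Finset.sum_congr rfl
    intro r _
    have : ∀ x ∈ range (H - r), eE (((r + x : ℕ) : ℝ) * φ i) * (starRingEnd ℂ) (eE (x * φ i)) = eE (r * φ i) := by
      intro x _
      rw [eE_conj, ← eE_add]; congr 1; push_cast; ring
    rw [Finset.sum_congr rfl this]
    simp
  have h5 : (((range W).filter (fun i => ∃ m : ℤ, |φ i - m| ≤ η)).card : ℝ) * ((H : ℝ) ^ 2 / 2) ≤
      2 * (H * ∑ h ∈ range H, ‖∑ i ∈ range W, eE (h * φ i)‖) := by
    calc _ = ∑ i ∈ (range W).filter (fun i => ∃ m : ℤ, |φ i - m| ≤ η), ((H : ℝ) ^ 2 / 2) := by simp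
      _ ≤ ∑ i ∈ (range W).filter (fun i => ∃ m : ℤ, |φ i - m| ≤ η), ‖∑ j ∈ range H, eE (j * φ i)‖ ^ 2 :=
          Finset.sum_le_sum h1
      _ ≤ ∑ i ∈ range W, ‖∑ j ∈ range H, eE (j * φ i)‖ ^ 2 :=
          Finset.sum_le_sum_of_subset_of_nonneg (Finset.filter_subset _ _) (fun _ _ _ => by positivity)
      _ ≤ ∑ i ∈ range W, 2 * (∑ r ∈ range H, ((H - r : ℕ) : ℂ) * eE (r * φ i)).re := Finset.sum_le_sum h4
      _ = 2 * (∑ r ∈ range H, ((H - r : ℕ) : ℂ) * ∑ i ∈ range W, eE (r * φ i)).re := by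
          rw [← Finset.mul_sum, ← Complex.re_sum, Finset.sum_comm]
          simp_rw [Finset.mul_sum]
      _ ≤ 2 * ‖∑ r ∈ range H, ((H - r : ℕ) : ℂ) * ∑ i ∈ range W, eE (r * φ i)‖ := by
          gcongr; exact Complex.re_le_norm _
      _ ≤ 2 * ∑ r ∈ range H, ‖((H - r : ℕ) : ℂ) * ∑ i ∈ range W, eE (r * φ i)‖ := by
          gcongr; exact norm_sum_le _ _
      _ ≤ _ := by
          rw [Finset.mul_sum (a := (H : ℝ))]
          gcongr with r hr
          rw [norm_mul, Complex.norm_natCast]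
          gcongr
          omega
  have h6 : (H : ℝ) * ((((range W).filter (fun i => ∃ m : ℤ, |φ i - m| ≤ η)).card : ℝ) * H) ≤
      H * (4 * ∑ h ∈ range H, ‖∑ i ∈ range W, eE (h * φ i)‖) := by linarith
  exact le_of_mul_le_mul_left h6 hHpos


/-- distance index of `t` to nearest multiple of `q` -/
def pIdx (q : ℝ) (t : ℕ) : ℕ := ⌊|(t : ℝ) - round ((t : ℝ) / q) * q|⌋₊

/-- weight -/
def wIdx (q : ℝ) (W : ℕ) (p : ℕ) : ℝ := if p = 0 then (W : ℝ) else q / p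

lemma wIdx_nonneg (q : ℝ) (hq : 0 < q) (W p : ℕ) : 0 ≤ wIdx q W p := by
  unfold wIdx; split_ifs <;> positivity

lemma aux_inner (q c : ℝ) (hq : 0 < q) (t W n : ℕ) (hn : n ≤ W) :
    ‖∑ i ∈ range n, eE (i * (t / q) + c)‖ ≤ wIdx q W (pIdx q t) := by
  unfold wIdx
  split_ifs with h
  · calc _ ≤ ∑ i ∈ range n, ‖eE (i * (t / q) + c)‖ := norm_sum_le _ _
      _ = n := by simp [eE_norm]
      _ ≤ W := by exact_mod_cast hn
  · have hp : (0 : ℝ) < pIdx q t := by exact_mod_cast Nat.pos_of_ne_zero h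
    have h1 := aux_geom (t / q) c (round ((t : ℝ) / q)) n (abs_sub_round _)
    have h2 : (pIdx q t : ℝ) / q ≤ |(t : ℝ) / q - round ((t : ℝ) / q)| := by
      rw [div_le_iff₀ hq]
      have : |(t : ℝ) / q - round ((t : ℝ) / q)| * q = |(t : ℝ) - round ((t : ℝ) / q) * q| := by
        nth_rw 3 [← abs_of_pos hq]
        rw [← abs_mul]
        congr 1
        field_simp
      rw [this]
      exact Nat.floor_le (abs_nonneg _)
    rw [le_div_iff₀ hp]
    have h3 := mul_le_mul_of_nonneg_left h2 (norm_nonneg (∑ i ∈ range n, eE (i * (t / q) + c)))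
    have h4 : ‖∑ i ∈ range n, eE (i * (t / q) + c)‖ * (pIdx q t / q) ≤ 1 := by linarith
    rw [← mul_div_assoc, div_le_one hq] at h4
    exact h4

lemma aux_tsum (q : ℝ) (hq : 2 ≤ q) (W X : ℕ) :
    ∑ t ∈ Ico 1 X, wIdx q W (pIdx q t) ≤ 2 * (X / q + 2) * (W + q * (1 + Real.log q)) := by
  have hq0 : 0 < q := by linarith
  set T : Finset (ℤ × Bool × ℕ) :=
    (Icc (0 : ℤ) ⌊(X : ℝ) / q + 1⌋) ×ˢ (Finset.univ ×ˢ range (⌊q⌋₊ + 1)) with hT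
  set g : ℕ → ℤ × Bool × ℕ := fun t =>
    (round ((t : ℝ) / q), decide (0 ≤ (t : ℝ) - round ((t : ℝ) / q) * q), pIdx q t) with hg
  have hdist : ∀ t : ℕ, |(t : ℝ) - round ((t : ℝ) / q) * q| ≤ q := by
    intro t
    have h1 := abs_sub_round ((t : ℝ) / q)
    have : |(t : ℝ) / q - round ((t : ℝ) / q)| * q = |(t : ℝ) - round ((t : ℝ) / q) * q| := by
      nth_rw 3 [← abs_of_pos hq0]
      rw [← abs_mul]
      congr 1
      field_simp
    rw [← this]
    nlinarith
  have hmaps : ∀ t ∈ Ico 1 X, g t ∈ T := by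
    intro t ht
    rw [Finset.mem_Ico] at ht
    have htX : (t : ℝ) ≤ X := by exact_mod_cast ht.2.le
    have htq : (t : ℝ) / q ≤ X / q := by gcongr
    have hr := abs_le.mp (abs_sub_round ((t : ℝ) / q))
    simp only [hT, hg, Finset.mem_product, Finset.mem_Icc, Finset.mem_univ, Finset.mem_range, true_and]
    refine ⟨⟨?_, ?_⟩, ?_⟩
    · have h0 : (0 : ℝ) ≤ t / q := by positivity
      have h2 : (-1 : ℝ) < round ((t : ℝ) / q) := by linarith [hr.2]
      have h3 : (-1 : ℤ) < round ((t : ℝ) / q) := by exact_mod_cast h2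
      omega
    · rw [Int.le_floor]
      linarith [hr.1]
    · exact Nat.lt_succ_of_le (Nat.floor_le_floor (hdist t))
  have hinj : ∀ t ∈ Ico 1 X, ∀ t' ∈ Ico 1 X, g t = g t' → t = t' := by
    intro t _ t' _ h
    simp only [hg, Prod.mk.injEq] at h
    obtain ⟨h1, h2, h3⟩ := h
    unfold pIdx at h3
    rw [h1] at h2 h3
    rw [decide_eq_decide] at h2
    set x : ℝ := (round ((t' : ℝ) / q) : ℝ) * q
    have f1 := Nat.floor_le (abs_nonneg ((t : ℝ) - x))
    have f2 := Nat.lt_floor_add_one (|(t : ℝ) - x|)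
    have f3 := Nat.floor_le (abs_nonneg ((t' : ℝ) - x))
    have f4 := Nat.lt_floor_add_one (|(t' : ℝ) - x|)
    rw [h3] at f1 f2
    have h5 : |(t : ℝ) - t'| < 1 := by
      by_cases hs : 0 ≤ (t : ℝ) - x
      · have hs' := h2.mp hs
        rw [abs_of_nonneg hs] at f1 f2
        rw [abs_of_nonneg hs'] at f1 f2 f3 f4
        rw [abs_lt]; constructor <;> linarith
      · have hs' : ¬ 0 ≤ (t' : ℝ) - x := fun h => hs (h2.mpr h)
        rw [abs_of_neg (not_le.mp hs)] at f1 f2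
        rw [abs_of_neg (not_le.mp hs')] at f1 f2 f3 f4
        rw [abs_lt]; constructor <;> linarith
    have h6 : |(t : ℤ) - t'| < 1 := by exact_mod_cast h5
    rw [abs_lt] at h6
    omega
  calc ∑ t ∈ Ico 1 X, wIdx q W (pIdx q t) = ∑ t ∈ Ico 1 X, wIdx q W (g t).2.2 := rfl
    _ = ∑ y ∈ (Ico 1 X).image g, wIdx q W y.2.2 := by
        rw [Finset.sum_image]
        intro a ha b hb hab
        exact hinj a ha b hb hab
    _ ≤ ∑ y ∈ T, wIdx q W y.2.2 := by
        apply Finset.sum_le_sum_of_subset_of_nonneg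
        · intro y hy
          obtain ⟨t, ht, rfl⟩ := Finset.mem_image.mp hy
          exact hmaps t ht
        · intros; exact wIdx_nonneg q hq0 _ _
    _ = ((Icc (0 : ℤ) ⌊(X : ℝ) / q + 1⌋).card : ℝ) * (2 * ∑ p ∈ range (⌊q⌋₊ + 1), wIdx q W p) := by
        rw [hT, Finset.sum_product]
        simp only [Finset.sum_product]
        simp
    _ ≤ (X / q + 2) * (2 * (W + q * (1 + Real.log q))) := by
        have hc : ((Icc (0 : ℤ) ⌊(X : ℝ) / q + 1⌋).card : ℝ) ≤ X / q + 2 := by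
          rw [Int.card_Icc]
          have h0 : (0 : ℝ) ≤ X / q := by positivity
          have h1 : 0 ≤ ⌊(X : ℝ) / q + 1⌋ := Int.floor_nonneg.mpr (by linarith)
          have h2 := Int.floor_le ((X : ℝ) / q + 1)
          have h3 : (((⌊(X : ℝ) / q + 1⌋ + 1 - 0).toNat : ℤ) : ℝ) = ((⌊(X : ℝ) / q + 1⌋ + 1 - 0 : ℤ) : ℝ) := by
            rw [Int.toNat_of_nonneg (by omega)]
          push_cast at h3 ⊢
          rw [h3]
          linarith
        have hs : ∑ p ∈ range (⌊q⌋₊ + 1), wIdx q W p ≤ W + q * (1 + Real.log q) := by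
          rw [Finset.sum_range_succ']
          have e1 : ∑ k ∈ range ⌊q⌋₊, wIdx q W (k + 1) = q * ((harmonic ⌊q⌋₊ : ℚ) : ℝ) := by
            unfold harmonic wIdx
            push_cast
            rw [Finset.mul_sum]
            apply Finset.sum_congr rfl
            intro k _
            simp [div_eq_mul_inv]
          rw [e1]
          have e2 : wIdx q W 0 = W := by simp [wIdx]
          rw [e2]
          have h1 := harmonic_le_one_add_log ⌊q⌋₊
          have h2 : Real.log ⌊q⌋₊ ≤ Real.log q := by
            apply Real.log_le_log
            · have : 1 ≤ ⌊q⌋₊ := Nat.le_floor (by push_cast; linarith)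
              exact_mod_cast this
            · exact Nat.floor_le hq0.le
          have h3 : q * ((harmonic ⌊q⌋₊ : ℚ) : ℝ) ≤ q * (1 + Real.log q) := by
            gcongr; linarith
          linarith
        have h0 : (0 : ℝ) ≤ ∑ p ∈ range (⌊q⌋₊ + 1), wIdx q W p :=
          Finset.sum_nonneg (fun _ _ => wIdx_nonneg q hq0 _ _)
        have h0' : (0 : ℝ) ≤ X / q + 2 := by positivity
        apply mul_le_mul hc _ (by positivity) h0'
        linarith
    _ = _ := by ring

lemma aux_weyl (q γ c : ℝ) (hq : 2 ≤ q) (W H : ℕ) (D : ℝ) (hD : 0 ≤ D)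
    (hdiv : ∀ t : ℕ, t ≠ 0 → t < H * W → ((Nat.divisors t).card : ℝ) ≤ D) :
    ∑ h ∈ Ico 1 H, ‖∑ i ∈ range W, eE (h * ((i : ℝ) ^ 2 / (2 * q) + γ * i + c))‖ ^ 2 ≤
      2 * (H * W + D * (2 * ((H * W : ℕ) / q + 2) * (W + q * (1 + Real.log q)))) := by
  have hq0 : 0 < q := by linarith
  have h1 : ∀ h ∈ Ico 1 H, ‖∑ i ∈ range W, eE (h * ((i : ℝ) ^ 2 / (2 * q) + γ * i + c))‖ ^ 2 ≤
      2 * (W + ∑ r ∈ Ico 1 W, wIdx q W (pIdx q (h * r))) := by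
    intro h hh
    refine (aux_vdc _ W).trans ?_
    have h2 : (∑ r ∈ range W, ∑ i ∈ range (W - r),
        eE (h * (((r + i : ℕ) : ℝ) ^ 2 / (2 * q) + γ * ((r + i : ℕ) : ℝ) + c)) *
        (starRingEnd ℂ) (eE (h * ((i : ℝ) ^ 2 / (2 * q) + γ * i + c)))).re ≤
        ∑ r ∈ range W, ‖∑ i ∈ range (W - r), eE (i * ((h * r : ℕ) / q) + h * (r ^ 2 / (2 * q) + γ * r))‖ := by
      refine (Complex.re_le_norm _).trans ((norm_sum_le _ _).trans (le_of_eq ?_))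
      apply Finset.sum_congr rfl
      intro r _
      congr 1
      apply Finset.sum_congr rfl
      intro i _
      rw [eE_conj, ← eE_add]
      congr 1
      push_cast
      field_simp
      ring
    refine (mul_le_mul_of_nonneg_left h2 (by norm_num)).trans ?_
    gcongr
    rcases Nat.eq_zero_or_pos W with hW | hW
    · subst hW; simp
    · rw [Finset.range_eq_Ico, Finset.sum_eq_sum_Ico_succ_bot hW]
      gcongr with r hr
      · refine (norm_sum_le _ _).trans ?_
        simp [eE_norm]
      · exact aux_inner q _ hq0 (h * r) W (W - r) (Nat.sub_le _ _)
  refine (Finset.sum_le_sum h1).trans ?_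
  rw [← Finset.mul_sum, Finset.sum_add_distrib]
  have h3 : ∑ h ∈ Ico 1 H, (W : ℝ) ≤ H * W := by
    rw [Finset.sum_const, Nat.card_Ico, nsmul_eq_mul]
    gcongr
    omega
  have h4 : ∑ h ∈ Ico 1 H, ∑ r ∈ Ico 1 W, wIdx q W (pIdx q (h * r)) ≤
      D * ∑ t ∈ Ico 1 (H * W), wIdx q W (pIdx q t) := by
    rw [← Finset.sum_product', Finset.sum_comp (fun t => wIdx q W (pIdx q t)) (fun x : ℕ × ℕ => x.1 * x.2),
      Finset.mul_sum]
    have hsub : (Ico 1 H ×ˢ Ico 1 W).image (fun x : ℕ × ℕ => x.1 * x.2) ⊆ Ico 1 (H * W) := by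
      intro t ht
      obtain ⟨⟨a, b⟩, hab, rfl⟩ := Finset.mem_image.mp ht
      simp only [Finset.mem_product, Finset.mem_Ico] at hab ⊢
      exact ⟨Nat.mul_pos hab.1.1 hab.2.1, Nat.mul_lt_mul'' hab.1.2 hab.2.2⟩
    refine le_trans (Finset.sum_le_sum ?_) (Finset.sum_le_sum_of_subset_of_nonneg hsub ?_)
    · intro t ht
      have ht' := hsub ht
      rw [Finset.mem_Ico] at ht'
      rw [nsmul_eq_mul]
      apply mul_le_mul_of_nonneg_right _ (wIdx_nonneg q hq0 _ _)
      refine le_trans ?_ (hdiv t (by omega) ht'.2)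
      norm_cast
      apply Finset.card_le_card_of_injOn (fun x : ℕ × ℕ => x.1)
      · intro x hx
        simp only [Finset.coe_filter, Set.mem_ofPred_eq] at hx
        simp only [Finset.mem_coe, Nat.mem_divisors]
        exact ⟨⟨x.2, hx.2.symm⟩, by omega⟩
      · intro x hx y hy hxy
        simp only [Finset.coe_filter, Set.mem_ofPred_eq, Finset.mem_product, Finset.mem_Ico] at hx hy
        simp only at hxy
        have : x.1 * x.2 = x.1 * y.2 := by rw [hx.2, hxy, hy.2]
        exact Prod.ext hxy (Nat.eq_of_mul_eq_mul_left (by omega) this)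
    · intros; exact mul_nonneg hD (wIdx_nonneg q hq0 _ _)
  have h5 := mul_le_mul_of_nonneg_left (aux_tsum q hq W (H * W)) hD
  linarith

lemma aux_count (q γ c : ℝ) (hq : 2 ≤ q) (W H : ℕ) (hH : 1 ≤ H) (D : ℝ) (hD : 0 ≤ D)
    (hdiv : ∀ t : ℕ, t ≠ 0 → t < H * W → ((Nat.divisors t).card : ℝ) ≤ D)
    (η : ℝ) (hη : 8 * η * H ≤ 1) :
    (((range W).filter (fun i : ℕ => ∃ m : ℤ, |((i : ℝ) ^ 2 / (2 * q) + γ * i + c) - m| ≤ η)).card : ℝ) ≤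
      4 * W / H + 4 * √(2 * W + 4 * D * (W / q + 2) * (W + q * (1 + Real.log q))) := by
  have hHpos : (0 : ℝ) < H := by exact_mod_cast hH
  have hH1 : (1 : ℝ) ≤ H := by exact_mod_cast hH
  have hq0 : 0 < q := by linarith
  have h1 := aux_fejer (fun i : ℕ => ((i : ℝ) ^ 2 / (2 * q) + γ * i + c)) W H hH η hη
  set T : ℝ := (((range W).filter (fun i : ℕ => ∃ m : ℤ, |((i : ℝ) ^ 2 / (2 * q) + γ * i + c) - m| ≤ η)).card : ℝ)
  set S : ℕ → ℝ := fun h => ‖∑ i ∈ range W, eE (h * ((i : ℝ) ^ 2 / (2 * q) + γ * i + c))‖ with hS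
  have hlog : 0 ≤ Real.log q := Real.log_nonneg (by linarith)
  have h2 : ∑ h ∈ Ico 1 H, S h ≤ H * √(2 * W + 4 * D * (W / q + 2) * (W + q * (1 + Real.log q))) := by
    have h3 := aux_weyl q γ c hq W H D hD hdiv
    apply le_of_sq_le_sq _ (by positivity)
    rw [mul_pow, Real.sq_sqrt (by positivity)]
    calc (∑ h ∈ Ico 1 H, S h) ^ 2 ≤ ((Ico 1 H).card : ℝ) * ∑ h ∈ Ico 1 H, S h ^ 2 := sq_sum_le_card_mul_sum_sq
      _ ≤ H * (2 * (H * W + D * (2 * ((H * W : ℕ) / q + 2) * (W + q * (1 + Real.log q))))) := by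
          apply mul_le_mul _ h3 (Finset.sum_nonneg (fun _ _ => sq_nonneg _)) (by positivity)
          rw [Nat.card_Ico]; exact_mod_cast Nat.sub_le _ _
      _ ≤ H * (2 * (H * W + D * (2 * (H * (W / q + 2)) * (W + q * (1 + Real.log q))))) := by
          gcongr
          push_cast
          have : (H : ℝ) * (W / q + 2) = H * W / q + 2 * H := by ring
          rw [this]; linarith
      _ = _ := by ring
  have h4 : ∑ h ∈ range H, S h = S 0 + ∑ h ∈ Ico 1 H, S h := by
    rw [Finset.range_eq_Ico, Finset.sum_eq_sum_Ico_succ_bot (by omega)]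
  have h5 : S 0 ≤ W := by
    refine (norm_sum_le _ _).trans ?_
    simp [eE_norm]
  rw [h4] at h1
  have h6 : T * H ≤ (4 * W / H + 4 * √(2 * W + 4 * D * (W / q + 2) * (W + q * (1 + Real.log q)))) * H := by
    rw [add_mul, div_mul_cancel₀ _ hHpos.ne']
    linarith
  exact le_of_mul_le_mul_right h6 hHpos


lemma aux_card_interval (E : Finset ℤ) (c r : ℝ) (hr : 0 ≤ r) (h : ∀ x ∈ E, |(x : ℝ) - c| ≤ r) :
    (E.card : ℝ) ≤ 2 * r + 1 := by
  have hsub : E ⊆ Icc ⌈c - r⌉ ⌊c + r⌋ := by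
    intro x hx
    have := abs_le.mp (h x hx)
    rw [Finset.mem_Icc, Int.ceil_le, Int.le_floor]
    constructor <;> linarith
  have h1 : (E.card : ℝ) ≤ ((Icc ⌈c - r⌉ ⌊c + r⌋).card : ℝ) := by exact_mod_cast Finset.card_le_card hsub
  refine h1.trans ?_
  rw [Int.card_Icc]
  have h2 := Int.floor_le (c + r)
  have h3 := Int.le_ceil (c - r)
  rcases le_total 0 (⌊c + r⌋ + 1 - ⌈c - r⌉) with h4 | h4
  · have h5 : (((⌊c + r⌋ + 1 - ⌈c - r⌉).toNat : ℤ) : ℝ) = ((⌊c + r⌋ + 1 - ⌈c - r⌉ : ℤ) : ℝ) := by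
      rw [Int.toNat_of_nonneg h4]
    push_cast at h5
    rw [h5]; linarith
  · rw [Int.toNat_of_nonpos h4]
    push_cast; linarith

/-- bound for a finite set that fibres over a target. -/
lemma aux_card_fiber {ι κ : Type*} (s : Finset ι) (t : Finset κ) (f : ι → κ) (x y : ℝ)
    (hf : ∀ a ∈ s, f a ∈ t) (hx : 0 ≤ x) (ht : (t.card : ℝ) ≤ y)
    (hfib : ∀ b ∈ t, ((s.filter (fun a => f a = b)).card : ℝ) ≤ x) : (s.card : ℝ) ≤ x * y := by
  have h1 := Finset.card_le_mul_card_image_of_maps_to hf ⌊x⌋₊ (fun b hb => by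
    apply Nat.le_floor; exact hfib b hb)
  calc (s.card : ℝ) ≤ (⌊x⌋₊ : ℝ) * t.card := by exact_mod_cast h1
    _ ≤ x * y := by
      apply mul_le_mul (Nat.floor_le hx) ht (by positivity) hx

/-- the quadratic function -/
def phiQ (α : ℝ) (u : ℤ) : ℝ := (u : ℝ) ^ 2 / (4 * α ^ 2) - u / 2 + α ^ 2 / 4

lemma aux_trivial_pair (α U η : ℝ) (hη : 0 ≤ η) (hU : 0 ≤ U) (E : Finset (ℕ × ℕ))
    (hE : ∀ p ∈ E, ((p.2 : ℤ) - p.1) ≠ 0 ∧ |(((p.2 : ℤ) - p.1 : ℤ) : ℝ)| ≤ U ∧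
      |(p.1 : ℝ) - phiQ α ((p.2 : ℤ) - p.1)| ≤ η) :
    (E.card : ℝ) ≤ (2 * η + 1) * (2 * U) := by
  apply aux_card_fiber E (E.image (fun p => (p.2 : ℤ) - p.1)) (fun p => (p.2 : ℤ) - p.1)
  · intro a ha; exact Finset.mem_image_of_mem _ ha
  · positivity
  · have h0 : (0 : ℤ) ∉ E.image (fun p => (p.2 : ℤ) - p.1) := by
      intro h
      obtain ⟨p, hp, hp0⟩ := Finset.mem_image.mp h
      exact (hE p hp).1 hp0
    have h1 := aux_card_interval (insert 0 (E.image (fun p => (p.2 : ℤ) - p.1))) 0 U hU (by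
      intro x hx
      rcases Finset.mem_insert.mp hx with rfl | hx
      · simpa using hU
      · obtain ⟨p, hp, rfl⟩ := Finset.mem_image.mp hx
        rw [sub_zero]
        exact (hE p hp).2.1)
    rw [Finset.card_insert_of_notMem h0] at h1
    push_cast at h1
    linarith
  · intro b _
    have h1 := aux_card_interval ((E.filter (fun p => (p.2 : ℤ) - p.1 = b)).image (fun p => (p.1 : ℤ)))
      (phiQ α b) η hη (by
        intro x hx
        obtain ⟨p, hp, rfl⟩ := Finset.mem_image.mp hx
        obtain ⟨hp1, hp2⟩ := Finset.mem_filter.mp hp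
        have := (hE p hp1).2.2
        rw [hp2] at this
        exact_mod_cast this)
    rw [Finset.card_image_of_injOn] at h1
    · convert h1
    · intro p hp p' hp' h
      simp only [Finset.coe_filter, Set.mem_ofPred_eq] at hp hp'
      simp only [Nat.cast_inj] at h
      have h1 := hp.2
      have h2 := hp'.2
      apply Prod.ext h
      rw [h] at h1
      omega

set_option maxHeartbeats 2000000 in
lemma aux_pair_bound (A ε : ℝ) (hA : 4 ≤ A) (hε : 0 < ε) :
    ∃ C : ℝ, 0 < C ∧ ∀ (α L Δ : ℝ) (E : Finset (ℕ × ℕ)), 1 ≤ L → 1 / L ≤ Δ → α ≠ 0 → α ^ 2 ≤ 2 * L →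
      (∀ p ∈ E, ((p.2 : ℤ) - p.1) ≠ 0 ∧ |(((p.2 : ℤ) - p.1 : ℤ) : ℝ)| ≤ 2 * A * |α| * √L ∧
      |(p.1 : ℝ) - phiQ α ((p.2 : ℤ) - p.1)| ≤ A ^ 2 * Δ * L / |α|) →
      (E.card : ℝ) ≤ C * (Δ * L * √L + √L * L ^ ε) := by
  set ε' : ℝ := 2 * ε / 3 with hε'
  have hε'0 : 0 < ε' := by positivity
  obtain ⟨Cd, hCd, hdiv⟩ := aux_divisor_bound ε' hε'0
  set D0 : ℝ := Cd * (12 * A) ^ ε' with hD0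
  have hD01 : 1 ≤ D0 := one_le_mul_of_one_le_of_one_le hCd (Real.one_le_rpow (by linarith) hε'0.le)
  set G0 : ℝ := 1 + 4 ^ ε' / ε' with hG0
  have hG01 : 1 ≤ G0 := by
    have : 0 < (4 : ℝ) ^ ε' / ε' := by positivity
    linarith
  have hA0 : 0 < A := by linarith
  refine ⟨400 * A ^ 3 + 4 * A + 4 * √(126 * A ^ 2 * D0 * G0), by positivity, ?_⟩
  intro α L Δ E hL hΔ hα hαL hE
  have hL0 : 0 < L := by linarith
  have hΔ0 : 0 < Δ := lt_of_lt_of_le (by positivity) hΔ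
  have ha0 : 0 < |α| := abs_pos.mpr hα
  set a := |α| with ha
  have haa : α ^ 2 = a ^ 2 := (sq_abs α).symm
  set R := √L with hR
  have hR1 : 1 ≤ R := by rw [hR]; exact Real.one_le_sqrt.mpr hL
  have hRR : R ^ 2 = L := Real.sq_sqrt hL0.le
  have hLe : 1 ≤ L ^ ε := Real.one_le_rpow hL hε.le
  set η := A ^ 2 * Δ * L / a with hη
  have hη0 : 0 < η := by positivity
  have hηa : η * a = A ^ 2 * Δ * L := by rw [hη]; field_simp
  have htriv := aux_trivial_pair α (2 * A * a * R) η hη0.le (by positivity) E hE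
  have hX : 0 ≤ Δ * L * R := by positivity
  have hY : R ≤ R * L ^ ε := le_mul_of_one_le_right (by positivity) hLe
  have hS0 : 0 ≤ √(126 * A ^ 2 * D0 * G0) := Real.sqrt_nonneg _
  have e1 : (2 * η) * (2 * (2 * A * a * R)) = 8 * A ^ 3 * (Δ * L * R) := by
    calc _ = 8 * A * R * (η * a) := by ring
      _ = _ := by rw [hηa]; ring
  -- final form reduction
  suffices hsuff : (E.card : ℝ) ≤ 400 * A ^ 3 * (Δ * L * R) +
      (4 * A + 4 * √(126 * A ^ 2 * D0 * G0)) * (R * L ^ ε) by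
    have h1 : 0 ≤ 400 * A ^ 3 * (R * L ^ ε) := by positivity
    have h2 : 0 ≤ (4 * A + 4 * √(126 * A ^ 2 * D0 * G0)) * (Δ * L * R) := by positivity
    linarith
  have hSS : 0 ≤ √(126 * A ^ 2 * D0 * G0) * (R * L ^ ε) := by positivity
  have hA3 : 0 ≤ A ^ 3 * (Δ * L * R) := by positivity
  by_cases h1 : a < 1
  · have h3 : 4 * A * a * R ≤ 4 * A * (R * L ^ ε) := by
      have h5 : a * R ≤ R := by nlinarith only [h1, hR1]
      have h6 : a * R ≤ R * L ^ ε := h5.trans hY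
      have h7 := mul_le_mul_of_nonneg_left h6 (by positivity : 0 ≤ 4 * A)
      linarith
    linarith
  by_cases h2 : 1 / 8 < η
  · have h3 : (2 * η + 1) * (2 * (2 * A * a * R)) ≤ 5 * ((2 * η) * (2 * (2 * A * a * R))) := by
      rw [← mul_assoc 5]
      apply mul_le_mul_of_nonneg_right _ (by positivity)
      linarith
    rw [e1] at h3
    have : 0 ≤ A * (R * L ^ ε) := by positivity
    linarith
  push Not at h1 h2
  -- Weyl range
  set H : ℕ := ⌊1 / (8 * η)⌋₊ with hH
  have hinv : 1 ≤ 1 / (8 * η) := by rw [le_div_iff₀ (by positivity)]; linarith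
  have hH1 : 1 ≤ H := Nat.le_floor (by exact_mod_cast hinv)
  have hH1' : (1 : ℝ) ≤ H := by exact_mod_cast hH1
  have hHle : (H : ℝ) ≤ 1 / (8 * η) := Nat.floor_le (by positivity)
  have hHlt : 1 / (8 * η) < H + 1 := Nat.lt_floor_add_one _
  have h8 : 8 * η * H ≤ 1 := by
    rw [le_div_iff₀ (by positivity)] at hHle; linarith
  have h16 : 1 ≤ 16 * η * H := by
    rw [div_lt_iff₀ (by positivity)] at hHlt
    nlinarith only [hHlt, hH1', hη0]
  set F : ℕ := ⌊2 * A * a * R⌋₊ with hF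
  have hFle : (F : ℝ) ≤ 2 * A * a * R := Nat.floor_le (by positivity)
  set W : ℕ := 2 * F + 1 with hW
  have haR1 : 1 ≤ a * R := one_le_mul_of_one_le_of_one_le h1 hR1
  have hWle : (W : ℝ) ≤ 6 * A * (a * R) := by
    rw [hW]; push_cast
    nlinarith only [hFle, haR1, hA]
  set q : ℝ := 2 * a ^ 2 with hq
  have hq2 : 2 ≤ q := by nlinarith only [h1, hq]
  have hq0 : 0 < q := by linarith
  have haL : a ^ 2 ≤ 2 * L := by rw [← haa]; exact hαL
  have ha2R : a ≤ 2 * R := by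
    apply le_of_sq_le_sq _ (by positivity)
    rw [mul_pow, hRR]; linarith
  have hHa : (H : ℝ) ≤ a := by
    have h5 : 1 ≤ Δ * L := by rw [div_le_iff₀ hL0] at hΔ; exact hΔ
    have h6 : 1 ≤ η * a := by
      rw [hηa, mul_assoc]
      exact one_le_mul_of_one_le_of_one_le (one_le_pow₀ (by linarith)) h5
    have h7 : H * η ≤ a * η := by linarith
    exact le_of_mul_le_mul_right h7 hη0
  have hRL : R ≤ L := by rw [← hRR]; nlinarith only [hR1]
  have hHW : ((H * W : ℕ) : ℝ) ≤ 12 * A * L ^ 2 := by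
    push_cast
    calc (H : ℝ) * W ≤ a * (6 * A * (a * R)) := by gcongr
      _ = 6 * A * (a ^ 2 * R) := by ring
      _ ≤ 6 * A * ((2 * L) * L) := by gcongr
      _ = _ := by ring
  set P : ℝ := L ^ ε' with hP
  have hP1 : 1 ≤ P := Real.one_le_rpow hL hε'0.le
  have hP3 : P ^ 3 = (L ^ ε) ^ 2 := by
    rw [hP, ← Real.rpow_natCast, ← Real.rpow_natCast, ← Real.rpow_mul hL0.le, ← Real.rpow_mul hL0.le]
    congr 1
    rw [hε']; push_cast; ring
  have hdiv' : ∀ t : ℕ, t ≠ 0 → t < H * W → ((Nat.divisors t).card : ℝ) ≤ D0 * P ^ 2 := by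
    intro t ht htHW
    refine (hdiv t ht).trans ?_
    have h5 : (t : ℝ) ≤ 12 * A * L ^ 2 := by
      refine le_trans ?_ hHW
      exact_mod_cast htHW.le
    have h6 : (t : ℝ) ^ ε' ≤ (12 * A) ^ ε' * P ^ 2 := by
      calc (t : ℝ) ^ ε' ≤ (12 * A * L ^ 2) ^ ε' := Real.rpow_le_rpow (by positivity) h5 hε'0.le
        _ = (12 * A) ^ ε' * (L ^ 2) ^ ε' := Real.mul_rpow (by positivity) (by positivity)
        _ = _ := by
          congr 1
          rw [hP, ← Real.rpow_natCast, ← Real.rpow_natCast, ← Real.rpow_mul hL0.le, ← Real.rpow_mul hL0.le,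
            mul_comm]
    rw [hD0, mul_assoc]
    gcongr
  have hlog : 1 + Real.log q ≤ G0 * P := by
    have h5 := Real.log_le_rpow_div hq0.le hε'0
    have h6 : q ^ ε' ≤ 4 ^ ε' * P := by
      rw [hP, ← Real.mul_rpow (by norm_num) hL0.le]
      apply Real.rpow_le_rpow hq0.le _ hε'0.le
      rw [hq]; linarith
    have h7 : q ^ ε' / ε' ≤ 4 ^ ε' / ε' * P := by
      rw [div_mul_eq_mul_div]; gcongr
    rw [hG0, add_mul]; linarith
  have hlog0 : 0 ≤ Real.log q := Real.log_nonneg (by linarith)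
  have hcount := aux_count q (-(F : ℝ) / q - 1 / 2) ((F : ℝ) ^ 2 / (2 * q) + F / 2 + α ^ 2 / 4) hq2 W H hH1
    (D0 * P ^ 2) (by positivity) hdiv' η h8
  have hcard : (E.card : ℝ) ≤ (((range W).filter (fun i : ℕ => ∃ m : ℤ,
      |((i : ℝ) ^ 2 / (2 * q) + (-(F : ℝ) / q - 1 / 2) * i +
        ((F : ℝ) ^ 2 / (2 * q) + F / 2 + α ^ 2 / 4)) - m| ≤ η)).card : ℝ) := by
    rw [Nat.cast_le]
    have hub : ∀ p ∈ E, -(F : ℤ) ≤ (p.2 : ℤ) - p.1 ∧ (p.2 : ℤ) - p.1 ≤ F := by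
      intro p hp
      have h5 := (hE p hp).2.1
      have h6 : (((p.2 : ℤ) - p.1).natAbs : ℝ) ≤ 2 * A * a * R := by
        rw [Nat.cast_natAbs, Int.cast_abs]; exact h5
      have h7 : ((p.2 : ℤ) - p.1).natAbs ≤ F := Nat.le_floor h6
      omega
    apply Finset.card_le_card_of_injOn (fun p => ((p.2 : ℤ) - p.1 + F).toNat)
    · intro p hp
      obtain ⟨hb1, hb2⟩ := hub p hp
      rw [Finset.mem_coe, Finset.mem_filter, Finset.mem_range]
      refine ⟨show ((p.2 : ℤ) - p.1 + F).toNat < W by omega, (p.1 : ℤ), ?_⟩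
      have h5 := (hE p hp).2.2
      have h6 : ((((p.2 : ℤ) - p.1 + F).toNat : ℤ) : ℝ) = (((p.2 : ℤ) - p.1 : ℤ) : ℝ) + F := by
        rw [Int.toNat_of_nonneg (by omega)]
        push_cast; ring
      rw [Int.cast_natCast] at h6
      rw [h6, abs_sub_comm]
      refine le_trans (le_of_eq ?_) h5
      congr 1
      rw [Int.cast_natCast]
      congr 1
      unfold phiQ
      rw [hq, ← haa]
      field_simp
      ring
    · intro p hp p' hp' h
      have hb := hub p hp
      have hb' := hub p' hp'
      simp only at h
      have hu : (p.2 : ℤ) - p.1 = (p'.2 : ℤ) - p'.1 := by omega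
      have h5 := (hE p hp).2.2
      have h6 := (hE p' hp').2.2
      rw [hu] at h5
      have h7 : |(p.1 : ℝ) - p'.1| < 1 := by
        rw [abs_le] at h5 h6
        rw [abs_lt]
        constructor <;> linarith
      have h8 : |(p.1 : ℤ) - p'.1| < 1 := by exact_mod_cast h7
      rw [abs_lt] at h8
      apply Prod.ext <;> omega
  have hWH : 4 * (W : ℝ) / H ≤ 384 * A ^ 3 * (Δ * L * R) := by
    rw [div_le_iff₀ (by linarith)]
    have h5 : 384 * A ^ 3 * (Δ * L * R) = 384 * A * R * (η * a) := by rw [hηa]; ring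
    rw [h5]
    have h6 : (0 : ℝ) ≤ 4 * (6 * A * (a * R)) := by positivity
    have h7 := mul_le_mul_of_nonneg_left h16 h6
    linarith
  have hsq : √(2 * W + 4 * (D0 * P ^ 2) * (W / q + 2) * (W + q * (1 + Real.log q))) ≤
      √(126 * A ^ 2 * D0 * G0) * (R * L ^ ε) := by
    rw [Real.sqrt_le_left (by positivity), mul_pow, Real.sq_sqrt (by positivity), mul_pow, hRR, ← hP3]
    have hW0 : (0 : ℝ) ≤ W := by positivity
    have hGP1 : 1 ≤ G0 * P := one_le_mul_of_one_le_of_one_le hG01 hP1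
    have g1 : (W : ℝ) ≤ 12 * A * L := by
      calc (W : ℝ) ≤ 6 * A * (a * R) := hWle
        _ ≤ 6 * A * (2 * R * R) := by gcongr
        _ = 12 * A * R ^ 2 := by ring
        _ = _ := by rw [hRR]
    have g2 : (W : ℝ) / q * W ≤ 18 * A ^ 2 * L := by
      rw [div_mul_eq_mul_div, div_le_iff₀ hq0]
      calc (W : ℝ) * W ≤ (6 * A * (a * R)) * (6 * A * (a * R)) := by gcongr
        _ = 18 * A ^ 2 * R ^ 2 * (2 * a ^ 2) := by ring
        _ = _ := by rw [hRR]
    have g3 : (W / q + 2) * (W + q * (1 + Real.log q)) ≤ 30 * A ^ 2 * L * (G0 * P) := by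
      calc (W / q + 2) * (W + q * (1 + Real.log q)) ≤ (W / q + 2) * (W + q * (G0 * P)) := by gcongr
        _ = W / q * W + W * (G0 * P) + 2 * W + 2 * q * (G0 * P) := by field_simp; ring
        _ ≤ 18 * A ^ 2 * L * (G0 * P) + 12 * A * L * (G0 * P) + 2 * (12 * A * L * (G0 * P))
            + 2 * (4 * L) * (G0 * P) := by
            have k1 : 18 * A ^ 2 * L ≤ 18 * A ^ 2 * L * (G0 * P) := le_mul_of_one_le_right (by positivity) hGP1
            have k2 : 12 * A * L ≤ 12 * A * L * (G0 * P) := le_mul_of_one_le_right (by positivity) hGP1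
            have k3 : W * (G0 * P) ≤ 12 * A * L * (G0 * P) := by gcongr
            have k4 : 2 * q * (G0 * P) ≤ 2 * (4 * L) * (G0 * P) := by
              gcongr
              rw [hq]; linarith
            linarith
        _ = (18 * A ^ 2 + 36 * A + 8) * (L * (G0 * P)) := by ring
        _ ≤ (30 * A ^ 2) * (L * (G0 * P)) := by
            gcongr; nlinarith only [hA]
        _ = _ := by ring
    have g4 : 2 * (W : ℝ) ≤ 6 * A ^ 2 * L := by
      have : 24 * A * L ≤ 6 * A ^ 2 * L := by
        apply mul_le_mul_of_nonneg_right _ hL0.le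
        nlinarith only [hA]
      linarith
    have g5 : 6 * A ^ 2 * L ≤ 6 * A ^ 2 * L * (D0 * G0 * P ^ 3) := by
      apply le_mul_of_one_le_right (by positivity)
      exact one_le_mul_of_one_le_of_one_le (one_le_mul_of_one_le_of_one_le hD01 hG01) (one_le_pow₀ hP1)
    calc 2 * W + 4 * (D0 * P ^ 2) * (W / q + 2) * (W + q * (1 + Real.log q))
        = 2 * W + 4 * (D0 * P ^ 2) * ((W / q + 2) * (W + q * (1 + Real.log q))) := by ring
      _ ≤ 6 * A ^ 2 * L * (D0 * G0 * P ^ 3) + 4 * (D0 * P ^ 2) * (30 * A ^ 2 * L * (G0 * P)) := by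
          have : 4 * (D0 * P ^ 2) * ((W / q + 2) * (W + q * (1 + Real.log q))) ≤
            4 * (D0 * P ^ 2) * (30 * A ^ 2 * L * (G0 * P)) := by gcongr
          linarith
      _ = _ := by ring
  have : 0 ≤ A * (R * L ^ ε) := by positivity
  linarith

lemma aux_geo (A α L Δ m l : ℝ) (hA : 4 ≤ A) (hL : 1 ≤ L) (hm : 0 ≤ m) (hl : 0 ≤ l)
    (hs : √m + √l ≤ A * √L) (hαL : α ^ 2 ≤ 2 * L) (hΔ : Δ * (2 * A * √L) ≤ 1)
    (h : |√l - √m - α| < Δ) (hu : 1 ≤ |l - m|) :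
    α ≠ 0 ∧ |l - m| ≤ 2 * A * |α| * √L ∧
      |m - ((l - m) ^ 2 / (4 * α ^ 2) - (l - m) / 2 + α ^ 2 / 4)| ≤ A ^ 2 * Δ * L / |α| := by
  set R := √L with hR
  have hR1 : 1 ≤ R := by rw [hR]; exact Real.one_le_sqrt.mpr hL
  have hRR : R ^ 2 = L := Real.sq_sqrt (by linarith)
  set x := √m with hx
  set y := √l with hy
  have hx0 : 0 ≤ x := Real.sqrt_nonneg _
  have hy0 : 0 ≤ y := Real.sqrt_nonneg _
  have hxx : m = x ^ 2 := (Real.sq_sqrt hm).symm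
  have hyy : l = y ^ 2 := (Real.sq_sqrt hl).symm
  set v := y - x with hv
  have hfac : |l - m| = |v| * (x + y) := by
    rw [hxx, hyy, show y ^ 2 - x ^ 2 = v * (x + y) by rw [hv]; ring, abs_mul,
      abs_of_nonneg (by positivity : 0 ≤ x + y)]
  have hv0 : 0 ≤ |v| := abs_nonneg v
  have hAR : 0 < A * R := by nlinarith
  have hvle : 1 ≤ |v| * (A * R) := by
    rw [hfac] at hu
    nlinarith
  have hvpos : 0 < |v| := by
    rcases hv0.eq_or_lt with h0 | h0
    · rw [← h0] at hvle; linarith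
    · exact h0
  have hΔv : Δ ≤ |v| / 2 := by
    have : Δ * (2 * A * R) ≤ |v| / 2 * (2 * A * R) := by nlinarith
    exact le_of_mul_le_mul_right this (by linarith)
  have hΔ0 : 0 < Δ := lt_of_le_of_lt (abs_nonneg _) h
  have hav1 : |v| ≤ 2 * |α| := by
    have := abs_sub_abs_le_abs_sub v α
    linarith
  have hav2 : |α| ≤ 2 * |v| := by
    have := abs_sub_abs_le_abs_sub α v
    rw [abs_sub_comm α v] at this
    linarith
  have ha0 : 0 < |α| := by linarith
  have hα : α ≠ 0 := abs_pos.mp ha0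
  have hvne : v ≠ 0 := abs_pos.mp hvpos
  refine ⟨hα, ?_, ?_⟩
  · rw [hfac]
    calc |v| * (x + y) ≤ (2 * |α|) * (A * R) := by gcongr
      _ = _ := by ring
  · have hid : m - ((l - m) ^ 2 / (4 * α ^ 2) - (l - m) / 2 + α ^ 2 / 4) =
        (v - α) * (v + α) / 4 * (1 - (x + y) ^ 2 / α ^ 2) := by
      rw [hxx, hyy, hv]
      field_simp
      ring
    rw [hid, abs_mul, abs_div, abs_mul]
    have h1 : |v + α| ≤ 3 * |α| := by
      have := abs_add_le v α
      linarith
    have h2 : |1 - (x + y) ^ 2 / α ^ 2| ≤ (A ^ 2 + 2) * L / |α| ^ 2 := by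
      have e2 : 0 ≤ (x + y) ^ 2 / α ^ 2 := by positivity
      have e3 : 1 ≤ 2 * L / |α| ^ 2 := by
        rw [le_div_iff₀ (by positivity), sq_abs]; linarith
      have e4 : (x + y) ^ 2 / α ^ 2 ≤ A ^ 2 * L / |α| ^ 2 := by
        rw [sq_abs]
        gcongr
        rw [← hRR, ← mul_pow]
        gcongr
      have e5 : (A ^ 2 + 2) * L / |α| ^ 2 = A ^ 2 * L / |α| ^ 2 + 2 * L / |α| ^ 2 := by ring
      rw [abs_le]
      constructor <;> linarith
    have h4 : |(4 : ℝ)| = 4 := by norm_num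
    rw [h4]
    calc |v - α| * |v + α| / 4 * |1 - (x + y) ^ 2 / α ^ 2|
        ≤ Δ * (3 * |α|) / 4 * ((A ^ 2 + 2) * L / |α| ^ 2) := by gcongr
      _ = (3 / 4 * (A ^ 2 + 2)) * (Δ * L / |α|) := by field_simp
      _ ≤ A ^ 2 * (Δ * L / |α|) := by gcongr; nlinarith
      _ = _ := by ring


lemma A1set_finite (N M K L Δ : ℝ) : (A1set N M K L Δ).Finite := by
  apply Set.Finite.subset (Finset.finite_toSet
    (range (⌊2 * N⌋₊ + 1) ×ˢ range (⌊2 * M⌋₊ + 1) ×ˢ range (⌊2 * K⌋₊ + 1) ×ˢ range (⌊2 * L⌋₊ + 1)))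
  rintro ⟨n, m, k, l⟩ h
  obtain ⟨_, h2, _, h4, _, h6, _, h8, _⟩ := h
  simp only [Finset.coe_product, Set.mem_prod, Finset.mem_coe, Finset.mem_range]
  exact ⟨Nat.lt_succ_of_le (Nat.le_floor h2), Nat.lt_succ_of_le (Nat.le_floor h4),
    Nat.lt_succ_of_le (Nat.le_floor h6), Nat.lt_succ_of_le (Nat.le_floor h8)⟩

lemma aux_card_Icc (N : ℝ) (hN : 1 ≤ N) : ((Icc 1 ⌊2 * N⌋₊).card : ℝ) ≤ 2 * N := by
  rw [Nat.card_Icc, Nat.add_sub_cancel]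
  exact Nat.floor_le (by linarith)

lemma aux_mem_Icc (N : ℝ) (n : ℕ) (hN : 1 ≤ N) (h1 : N < n) (h2 : (n : ℝ) ≤ 2 * N) :
    n ∈ Icc 1 ⌊2 * N⌋₊ := by
  rw [Finset.mem_Icc]
  refine ⟨?_, Nat.le_floor h2⟩
  have : (1 : ℝ) ≤ n := by linarith
  exact_mod_cast this

lemma aux_sqrt_le (x L : ℝ) (hx : x ≤ 2 * L) (hL : 0 ≤ L) : √x ≤ 3 / 2 * √L := by
  rw [Real.sqrt_le_left (by positivity), mul_pow, Real.sq_sqrt hL]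
  linarith

lemma aux_trivial (N M K L Δ : ℝ) (hN : 1 ≤ N) (hM : 1 ≤ M) (hK : 1 ≤ K) (hL : 1 ≤ L) (hΔ : 0 < Δ) :
    ((A1set N M K L Δ).ncard : ℝ) ≤ (12 * Δ * √L + 1) * (8 * N * M * K) := by
  have hfin := A1set_finite N M K L Δ
  rw [Set.ncard_eq_toFinset_card _ hfin]
  apply aux_card_fiber hfin.toFinset (Icc 1 ⌊2 * N⌋₊ ×ˢ Icc 1 ⌊2 * M⌋₊ ×ˢ Icc 1 ⌊2 * K⌋₊)
    (fun q => (q.1, q.2.1, q.2.2.1))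
  · rintro ⟨n, m, k, l⟩ h
    rw [Set.Finite.mem_toFinset] at h
    obtain ⟨h1, h2, h3, h4, h5, h6, _⟩ := h
    simp only [Finset.mem_product]
    exact ⟨aux_mem_Icc N n hN h1 h2, aux_mem_Icc M m hM h3 h4, aux_mem_Icc K k hK h5 h6⟩
  · positivity
  · rw [Finset.card_product, Finset.card_product]
    push_cast
    have a1 := aux_card_Icc N hN
    have a2 := aux_card_Icc M hM
    have a3 := aux_card_Icc K hK
    calc _ ≤ (2 * N) * ((2 * M) * (2 * K)) := by gcongr
      _ = _ := by ring
  · rintro ⟨n, m, k⟩ _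
    rcases Finset.eq_empty_or_nonempty
      (hfin.toFinset.filter (fun q => (q.1, q.2.1, q.2.2.1) = (n, m, k))) with h0 | ⟨q0, hq0⟩
    · have h1 : ((hfin.toFinset.filter (fun q => (q.1, q.2.1, q.2.2.1) = (n, m, k))).card : ℝ) ≤ 12 * Δ * √L + 1 := by
        rw [h0]; simp only [Finset.card_empty, Nat.cast_zero]; positivity
      convert h1
    · have key : ∀ q ∈ hfin.toFinset.filter (fun q => (q.1, q.2.1, q.2.2.1) = (n, m, k)),
          q.1 = n ∧ q.2.1 = m ∧ q.2.2.1 = k ∧ (q.2.2.2 : ℝ) ≤ 2 * L ∧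
          |√(n : ℝ) + √(m : ℝ) - √(k : ℝ) - √(q.2.2.2 : ℝ)| < Δ := by
        rintro ⟨n', m', k', l'⟩ hq
        rw [Finset.mem_filter, Set.Finite.mem_toFinset] at hq
        obtain ⟨⟨_, _, _, _, _, _, _, h8, _, h10⟩, hq2⟩ := hq
        simp only [Prod.mk.injEq] at hq2
        obtain ⟨rfl, rfl, rfl⟩ := hq2
        exact ⟨rfl, rfl, rfl, h8, h10⟩
      have h1 := aux_card_interval
        ((hfin.toFinset.filter (fun q => (q.1, q.2.1, q.2.2.1) = (n, m, k))).image (fun q => (q.2.2.2 : ℤ)))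
        (q0.2.2.2 : ℝ) (6 * Δ * √L) (by positivity) (by
          intro x hx
          obtain ⟨q, hq, rfl⟩ := Finset.mem_image.mp hx
          obtain ⟨_, _, _, a1, a2⟩ := key q hq
          obtain ⟨_, _, _, b1, b2⟩ := key q0 hq0
          have s1 := aux_sqrt_le _ L a1 (by linarith)
          have s2 := aux_sqrt_le _ L b1 (by linarith)
          have e1 := Real.sq_sqrt (Nat.cast_nonneg (α := ℝ) q.2.2.2)
          have e2 := Real.sq_sqrt (Nat.cast_nonneg (α := ℝ) q0.2.2.2)
          have p1 := Real.sqrt_nonneg (q.2.2.2 : ℝ)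
          have p2 := Real.sqrt_nonneg (q0.2.2.2 : ℝ)
          rw [Int.cast_natCast]
          set x := √(q.2.2.2 : ℝ)
          set y := √(q0.2.2.2 : ℝ)
          rw [← e1, ← e2, show x ^ 2 - y ^ 2 = (x - y) * (x + y) by ring, abs_mul,
            abs_of_nonneg (by positivity : 0 ≤ x + y)]
          have h3 : |x - y| ≤ 2 * Δ := by
            rw [abs_lt] at a2 b2
            rw [abs_le]; constructor <;> linarith
          calc |x - y| * (x + y) ≤ (2 * Δ) * (3 * √L) := by
                apply mul_le_mul h3 _ (by positivity) (by positivity)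
                linarith
            _ = _ := by ring)
      rw [Finset.card_image_of_injOn] at h1
      · refine le_trans (le_of_eq ?_) (h1.trans (le_of_eq (by ring)))
        congr!
      · intro q hq q' hq' h
        obtain ⟨a1, a2, a3, _⟩ := key q hq
        obtain ⟨b1, b2, b3, _⟩ := key q' hq'
        simp only [Nat.cast_inj] at h
        refine Prod.ext (a1.trans b1.symm) (Prod.ext (a2.trans b2.symm) (Prod.ext (a3.trans b3.symm) h))

lemma aux_main (c₁ c₂ ε : ℝ) (hc₁ : 0 < c₁) (hc : c₁ ≤ c₂) (hε : 0 < ε) :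
    ∃ C : ℝ, 0 < C ∧ ∀ N M K L Δ : ℝ,
      1 ≤ N → N ≤ M → 1 ≤ K → K ≤ L → N ≤ K → c₁ * L ≤ M → M ≤ c₂ * L → 1 / L ≤ Δ →
      ((A1set N M K L Δ).ncard : ℝ) ≤ C * (Δ * √L * N * M * K + N * K * (√L * L ^ ε)) := by
  have hc₂ : 0 < c₂ := by linarith
  set A : ℝ := √(2 * c₂) + 4 with hA
  have hA4 : 4 ≤ A := by have := Real.sqrt_nonneg (2 * c₂); linarith
  obtain ⟨Cp, hCp, hpair⟩ := aux_pair_bound A ε hA4 hε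
  refine ⟨8 * (12 + 2 * A) + 4 * Cp / c₁ + 4 * Cp, by positivity, ?_⟩
  intro N M K L Δ hN hNM hK hKL hNK hc1 hc2 hΔ
  have hL : 1 ≤ L := hK.trans hKL
  have hL0 : 0 < L := by linarith
  have hM : 1 ≤ M := hN.trans hNM
  have hΔ0 : 0 < Δ := lt_of_lt_of_le (by positivity) hΔ
  have hR0 : 0 < √L := Real.sqrt_pos.mpr hL0
  have hLe : 0 < L ^ ε := Real.rpow_pos_of_pos hL0 ε
  have hX : 0 ≤ Δ * √L * N * M * K := by positivity
  have hY : 0 ≤ N * K * (√L * L ^ ε) := by positivity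
  have hCc : 0 ≤ 4 * Cp / c₁ := by positivity
  by_cases hcase : 1 < Δ * (2 * A * √L)
  · refine (aux_trivial N M K L Δ hN hM hK hL hΔ0).trans ?_
    have h1 : (12 * Δ * √L + 1) ≤ (12 + 2 * A) * (Δ * √L) := by linarith
    calc (12 * Δ * √L + 1) * (8 * N * M * K) ≤ ((12 + 2 * A) * (Δ * √L)) * (8 * N * M * K) := by gcongr
      _ = 8 * (12 + 2 * A) * (Δ * √L * N * M * K) := by ring
      _ ≤ (8 * (12 + 2 * A) + 4 * Cp / c₁ + 4 * Cp) * (Δ * √L * N * M * K + N * K * (√L * L ^ ε)) := by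
          apply mul_le_mul _ _ hX (by positivity) <;> linarith
  push Not at hcase
  have hfin := A1set_finite N M K L Δ
  have hmain : ((A1set N M K L Δ).ncard : ℝ) ≤ (Cp * (Δ * L * √L + √L * L ^ ε)) * (4 * N * K) := by
    rw [Set.ncard_eq_toFinset_card _ hfin]
    apply aux_card_fiber hfin.toFinset (Icc 1 ⌊2 * N⌋₊ ×ˢ Icc 1 ⌊2 * K⌋₊) (fun q => (q.1, q.2.2.1))
    · rintro ⟨n, m, k, l⟩ h
      rw [Set.Finite.mem_toFinset] at h
      obtain ⟨h1, h2, h3, h4, h5, h6, _⟩ := h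
      simp only [Finset.mem_product]
      exact ⟨aux_mem_Icc N n hN h1 h2, aux_mem_Icc K k hK h5 h6⟩
    · positivity
    · rw [Finset.card_product]
      push_cast
      have a1 := aux_card_Icc N hN
      have a3 := aux_card_Icc K hK
      calc _ ≤ (2 * N) * (2 * K) := by gcongr
        _ = _ := by ring
    · rintro ⟨n, k⟩ _
      set Q := hfin.toFinset.filter (fun q => (q.1, q.2.2.1) = (n, k)) with hQ
      set α : ℝ := √(n : ℝ) - √(k : ℝ) with hα
      have key : ∀ q ∈ Q, q.1 = n ∧ q.2.2.1 = k ∧ α ≠ 0 ∧ α ^ 2 ≤ 2 * L ∧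
          ((q.2.2.2 : ℤ) - q.2.1) ≠ 0 ∧
          |(((q.2.2.2 : ℤ) - q.2.1 : ℤ) : ℝ)| ≤ 2 * A * |α| * √L ∧
          |(q.2.1 : ℝ) - phiQ α ((q.2.2.2 : ℤ) - q.2.1)| ≤ A ^ 2 * Δ * L / |α| := by
        rintro ⟨n', m, k', l⟩ hq
        rw [hQ, Finset.mem_filter, Set.Finite.mem_toFinset] at hq
        obtain ⟨⟨h1, h2, h3, h4, h5, h6, h7, h8, h9, h10⟩, hq2⟩ := hq
        simp only [Prod.mk.injEq] at hq2
        obtain ⟨rfl, rfl⟩ := hq2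
        simp only at h1 h2 h3 h4 h5 h6 h7 h8 h9 h10 ⊢
        have sn := aux_sqrt_le (n' : ℝ) L (by linarith) hL0.le
        have sk := aux_sqrt_le (k' : ℝ) L (by linarith) hL0.le
        have sl := aux_sqrt_le (l : ℝ) L h8 hL0.le
        have sm : √(m : ℝ) ≤ √(2 * c₂) * √L := by
          rw [← Real.sqrt_mul (by positivity)]
          apply Real.sqrt_le_sqrt
          linarith
        have en := Real.sq_sqrt (Nat.cast_nonneg (α := ℝ) n')
        have ek := Real.sq_sqrt (Nat.cast_nonneg (α := ℝ) k')
        have pn := Real.sqrt_nonneg (n' : ℝ)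
        have pk := Real.sqrt_nonneg (k' : ℝ)
        have hαL : α ^ 2 ≤ 2 * L := by
          have hnL : (n' : ℝ) ≤ 2 * L := by linarith
          have hkL : (k' : ℝ) ≤ 2 * L := by linarith
          rcases le_total (√(n' : ℝ)) (√(k' : ℝ)) with h | h
          · have : α ^ 2 ≤ √(k' : ℝ) ^ 2 := by
              rw [hα, ← neg_sq, neg_sub]
              exact pow_le_pow_left₀ (by linarith) (by linarith) 2
            linarith
          · have : α ^ 2 ≤ √(n' : ℝ) ^ 2 := by
              rw [hα]
              exact pow_le_pow_left₀ (by linarith) (by linarith) 2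
            linarith
        have hv : |√(l : ℝ) - √(m : ℝ) - α| < Δ := by
          rw [abs_sub_comm]
          refine lt_of_le_of_lt (le_of_eq ?_) h10
          congr 1
          rw [hα]; ring
        have hune : ((l : ℤ) - m) ≠ 0 := by
          intro h0
          have hlm : l = m := by omega
          subst hlm
          have hva : |α| < Δ := by
            rw [sub_self, zero_sub, abs_neg] at hv
            exact hv
          have hnk : n' ≠ k' := by
            rintro rfl
            rw [show √(n' : ℝ) + √(l : ℝ) - √(n' : ℝ) - √(l : ℝ) = 0 by ring, abs_zero] at h9
            exact lt_irrefl _ h9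
          have h11 : (1 : ℤ) ≤ |(n' : ℤ) - k'| := by
            apply Int.one_le_abs
            omega
          have h12 : (1 : ℝ) ≤ |(n' : ℝ) - k'| := by exact_mod_cast h11
          have h13 : |(n' : ℝ) - k'| = |α| * (√(n' : ℝ) + √(k' : ℝ)) := by
            have e0 : (n' : ℝ) - k' = α * (√(n' : ℝ) + √(k' : ℝ)) := by
              rw [hα]; linear_combination -en + ek
            rw [e0, abs_mul, abs_of_nonneg (by positivity : 0 ≤ √(n' : ℝ) + √(k' : ℝ))]
          have h14 : |α| * (√(n' : ℝ) + √(k' : ℝ)) ≤ Δ * (A * √L) := by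
            apply mul_le_mul hva.le _ (by positivity) hΔ0.le
            have : 4 * √L ≤ A * √L := by gcongr
            linarith
          linarith
        have hu1 : (1 : ℝ) ≤ |(l : ℝ) - m| := by
          have h11 : (1 : ℤ) ≤ |(l : ℤ) - m| := Int.one_le_abs hune
          exact_mod_cast h11
        have hgeo := aux_geo A α L Δ m l hA4 hL (Nat.cast_nonneg _) (Nat.cast_nonneg _)
          (by rw [hA, add_mul]; linarith) hαL hcase hv hu1
        refine ⟨trivial, trivial, hgeo.1, hαL, hune, ?_, ?_⟩
        · push_cast; exact hgeo.2.1
        · unfold phiQ; push_cast; exact hgeo.2.2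
      rcases Finset.eq_empty_or_nonempty Q with h0 | ⟨q0, hq0⟩
      · have h1 : (Q.card : ℝ) ≤ Cp * (Δ * L * √L + √L * L ^ ε) := by
          rw [h0]; simp only [Finset.card_empty, Nat.cast_zero]; positivity
        convert h1
      · obtain ⟨_, _, k1, k2, _⟩ := key q0 hq0
        have h1 := hpair α L Δ (Q.image (fun q => (q.2.1, q.2.2.2))) hL hΔ k1 k2 (by
          intro p hp
          obtain ⟨q, hq, rfl⟩ := Finset.mem_image.mp hp
          exact (key q hq).2.2.2.2)
        rw [Finset.card_image_of_injOn] at h1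
        · convert h1
        · intro q hq q' hq' h
          obtain ⟨a1, a2, _⟩ := key q hq
          obtain ⟨b1, b2, _⟩ := key q' hq'
          simp only [Prod.mk.injEq] at h
          exact Prod.ext (a1.trans b1.symm) (Prod.ext h.1 (Prod.ext (a2.trans b2.symm) h.2))
  refine hmain.trans ?_
  have h2 : L ≤ M / c₁ := by rw [le_div_iff₀ hc₁]; linarith
  have h3 : Δ * L * √L * (N * K) ≤ 1 / c₁ * (Δ * √L * N * M * K) := by
    calc Δ * L * √L * (N * K) ≤ Δ * (M / c₁) * √L * (N * K) := by gcongr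
      _ = _ := by ring
  have h4 := mul_le_mul_of_nonneg_left h3 (by positivity : 0 ≤ 4 * Cp)
  have h5 : 4 * Cp * (1 / c₁ * (Δ * √L * N * M * K)) = 4 * Cp / c₁ * (Δ * √L * N * M * K) := by ring
  rw [h5] at h4
  have h6 : (Cp * (Δ * L * √L + √L * L ^ ε)) * (4 * N * K) =
      4 * Cp * (Δ * L * √L * (N * K)) + 4 * Cp * (N * K * (√L * L ^ ε)) := by ring
  rw [h6]
  have h7 : 0 ≤ 8 * (12 + 2 * A) * (Δ * √L * N * M * K + N * K * (√L * L ^ ε)) := by positivity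
  have h8 : 0 ≤ 4 * Cp / c₁ * (N * K * (√L * L ^ ε)) := by positivity
  have h9 : 0 ≤ 4 * Cp * (Δ * √L * N * M * K) := by positivity
  linarith

theorem A1_count_bound (c₁ c₂ ε : ℝ) (hc₁ : 0 < c₁) (hc : c₁ ≤ c₂) (hε : 0 < ε) :
    ∃ C : ℝ, 0 < C ∧ ∀ N M K L Δ : ℝ,
      1 ≤ N → N ≤ M → 1 ≤ K → K ≤ L → N ≤ K → c₁ * L ≤ M → M ≤ c₂ * L →
      0 < Δ → Δ ≤ c₂ * L ^ ((1:ℝ)/2) →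
      ((A1set N M K L Δ).ncard : ℝ)
          ≤ C * (Δ * L ^ ((1:ℝ)/2) * N * M * K + N * K * L ^ ((1:ℝ)/2 + ε)) ∧
        (1 ≤ Δ * L ^ ((1:ℝ)/2) →
          ((A1set N M K L Δ).ncard : ℝ) ≤ C * (Δ * L ^ ((1:ℝ)/2) * N * M * K)) := by
  have hc₂ : 0 < c₂ := by linarith
  obtain ⟨C, hC, hmain⟩ := aux_main c₁ c₂ ε hc₁ hc hε
  refine ⟨C * (1 + c₂) + 104, by positivity, ?_⟩
  intro N M K L Δ hN hNM hK hKL hNK hc1 hc2 hΔ0 _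
  have hL : 1 ≤ L := hK.trans hKL
  have hL0 : 0 < L := by linarith
  have hM : 1 ≤ M := hN.trans hNM
  rw [Real.rpow_add hL0, ← Real.sqrt_eq_rpow]
  have hR0 : 0 < √L := Real.sqrt_pos.mpr hL0
  have hLe : 1 ≤ L ^ ε := Real.one_le_rpow hL hε.le
  have hX : 0 ≤ Δ * √L * N * M * K := by positivity
  have hY : 0 ≤ N * K * (√L * L ^ ε) := by positivity
  constructor
  · have hmono : ((A1set N M K L Δ).ncard : ℝ) ≤ ((A1set N M K L (max Δ (1 / L))).ncard : ℝ) := by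
      rw [Nat.cast_le]
      apply Set.ncard_le_ncard _ (A1set_finite _ _ _ _ _)
      rintro q ⟨h1, h2, h3, h4, h5, h6, h7, h8, h9, h10⟩
      exact ⟨h1, h2, h3, h4, h5, h6, h7, h8, h9, lt_of_lt_of_le h10 (le_max_left _ _)⟩
    have h1 := hmain N M K L (max Δ (1 / L)) hN hNM hK hKL hNK hc1 hc2 (le_max_right _ _)
    refine hmono.trans (h1.trans ?_)
    have h2 : max Δ (1 / L) ≤ Δ + 1 / L := by
      have : 0 < 1 / L := by positivity
      apply max_le <;> linarith
    have h3 : max Δ (1 / L) * √L * N * M * K ≤ Δ * √L * N * M * K + c₂ * (N * K * (√L * L ^ ε)) := by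
      calc max Δ (1 / L) * √L * N * M * K ≤ (Δ + 1 / L) * √L * N * M * K := by gcongr
        _ = Δ * √L * N * M * K + (M / L) * (N * K * (√L * 1)) := by ring
        _ ≤ Δ * √L * N * M * K + c₂ * (N * K * (√L * L ^ ε)) := by
          gcongr
          rw [div_le_iff₀ hL0]; exact hc2
    have h4 := mul_le_mul_of_nonneg_left h3 hC.le
    have h5 : 0 ≤ C * c₂ * (Δ * √L * N * M * K) := by positivity
    linarith
  · intro h1
    refine (aux_trivial N M K L Δ hN hM hK hL hΔ0).trans ?_
    calc (12 * Δ * √L + 1) * (8 * N * M * K) ≤ (13 * (Δ * √L)) * (8 * N * M * K) := by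
          gcongr; linarith
      _ = 104 * (Δ * √L * N * M * K) := by ring
      _ ≤ _ := by
          gcongr
          have : 0 < C * (1 + c₂) := by positivity
          linarith
end
end
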